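/- There exists an absolute constant c > 0 such that for every integer n ≥ 2, every family of n pairwise disjoint segments in ℝ² in general position contains a subfamily of at least c·√n segments that admits a circumscribing polygon. -/

import Mathlib

noncomputable section

/-- A point of the plane. -/
abbrev Pt : Type := ℝ × ℝ

/-- The closed segment with endpoints `a` and `b`. -/
def Seg (a b : Pt) : Set Pt := segment ℝ a b

/-- The set of endpoints of the segments of a family `S`. -/
def SegEndpoints (S : Finset (Pt × Pt)) : Set Pt :=
  ⋃ s ∈ (S : Set (Pt × Pt)), ({s.1, s.2} : Set Pt)

/-- `S` is a family of (nondegenerate) pairwise disjoint segments. -/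
def DisjointFamily (S : Finset (Pt × Pt)) : Prop :=
  (∀ s ∈ S, s.1 ≠ s.2) ∧
  (S : Set (Pt × Pt)).Pairwise (fun s t => Disjoint (Seg s.1 s.2) (Seg t.1 t.2))

/-- No three endpoints of segments of `S` are collinear. -/
def GeneralPosition (S : Finset (Pt × Pt)) : Prop :=
  ∀ p ∈ SegEndpoints S, ∀ q ∈ SegEndpoints S, ∀ r ∈ SegEndpoints S,
    p ≠ q → p ≠ r → q ≠ r → ¬ Collinear ℝ ({p, q, r} : Set Pt)

/-- A simple polygon: a cyclic sequence of `k ≥ 3` pairwise distinct vertices such that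
two edges intersect iff they are consecutive, and consecutive edges meet exactly in
their common endpoint. -/
structure SimplePolygon : Type where
  k : ℕ
  three_le : 3 ≤ k
  vtx : ZMod k → Pt
  inj : Function.Injective vtx
  edge_inter : ∀ i j : ZMod k, i ≠ j →
    ((Seg (vtx i) (vtx (i + 1)) ∩ Seg (vtx j) (vtx (j + 1))).Nonempty ↔
      (j = i + 1 ∨ i = j + 1))
  edge_consec : ∀ i : ZMod k,
    Seg (vtx i) (vtx (i + 1)) ∩ Seg (vtx (i + 1)) (vtx (i + 2)) = {vtx (i + 1)}

/-- The union of the edges of a simple polygon. -/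
def SimplePolygon.edgeUnion (P : SimplePolygon) : Set Pt :=
  ⋃ i : ZMod P.k, Seg (P.vtx i) (P.vtx (i + 1))

/-- The closed region of a simple polygon: the union of its edges together with all
bounded connected components of the complement of the union of the edges. -/
def SimplePolygon.closedRegion (P : SimplePolygon) : Set Pt :=
  P.edgeUnion ∪
    {x | x ∉ P.edgeUnion ∧ Bornology.IsBounded (connectedComponentIn (P.edgeUnion)ᶜ x)}

/-- `P` is a circumscribing polygon for `S`: its vertex set is exactly the set of
endpoints of segments of `S`, and every segment of `S` lies in the closed region of `P`. -/
def IsCircumscribing (S : Finset (Pt × Pt)) (P : SimplePolygon) : Prop :=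
  Set.range P.vtx = SegEndpoints S ∧ ∀ s ∈ S, Seg s.1 s.2 ⊆ P.closedRegion

/-!
A shear makes the abscissae of all endpoints distinct, so that segment `i` runs from its left
endpoint `L i` to its right endpoint `R i`. A recursive division of the family by vertical lines,
with the Erdős–Szekeres theorem for the segments crossing a line, selects at least `√n / 2` segments
which, possibly after a reflection in the horizontal axis, form columns: the segments of a column
cross a common vertical line at heights that increase with the abscissae of their left endpoints,
and vertical lines separate the columns.

All left endpoints are then visible from above. The endpoints visible from below or from above are
joined to a lower and an upper chain, which enclose the family. Each remaining right endpoint is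
inserted into the upper chain by a dent: a path `L b, R b, …, R a, L a` between consecutive left
endpoints `L a` and `L b`, which follows two segments of the column and edges of the Cartesian tree
of its right endpoints with respect to abscissae. Passing to at least a sixth of the segments makes
this tree so shallow that dents suffice. A vertical ray from a suitable point of a segment crosses
the resulting polygon an odd number of times, so all segments lie inside it.
-/

open Set

/-! ### Lines, segments and general position -/

section Lines

/-- The slope of the line through `p` and `q`, for `p.1 ≠ q.1` (and `0` otherwise). -/
def lineSlope (p q : Pt) : ℝ := (q.2 - p.2) / (q.1 - p.1)

/-- The line through `p` and `q` as the graph of an affine function of the first coordinate, for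
`p.1 ≠ q.1` (and the horizontal line through `p` otherwise). -/
def lineThrough (p q : Pt) : ℝ →ᵃ[ℝ] ℝ :=
  lineSlope p q • (AffineMap.id ℝ ℝ - AffineMap.const ℝ ℝ p.1) + AffineMap.const ℝ ℝ p.2

/-- On the common range of abscissae, the segment from `p` to `q` is nowhere above the segment from
`r` to `s`. Both segments are directed from left to right. -/
def WeaklyBelow (p q r s : Pt) : Prop :=
  ∀ x, p.1 ≤ x → x ≤ q.1 → r.1 ≤ x → x ≤ s.1 → lineThrough p q x ≤ lineThrough r s x

/-- No two points of `E` on a vertical line and no three on any other line. -/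
structure InGeneralPosition (E : Set Pt) : Prop where
  fst_injOn : InjOn Prod.fst E
  snd_ne_lineThrough : ∀ p ∈ E, ∀ q ∈ E, ∀ r ∈ E, p ≠ q → p ≠ r → q ≠ r →
    r.2 ≠ lineThrough p q r.1

lemma affineMap_le_of_le_endpoints {f g : ℝ →ᵃ[ℝ] ℝ} {a b x : ℝ} (hax : a ≤ x) (hxb : x ≤ b)
    (ha : f a ≤ g a) (hb : f b ≤ g b) : f x ≤ g x := by
  have hconv : Convex ℝ ((g - f) ⁻¹' Ici 0) := (convex_Ici 0).affine_preimage (g - f)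
  have hx : x ∈ (g - f) ⁻¹' Ici 0 :=
    hconv.ordConnected.out (sub_nonneg.2 ha) (sub_nonneg.2 hb) ⟨hax, hxb⟩
  exact sub_nonneg.1 hx

lemma affineMap_lt_of_lt_endpoints {f g : ℝ →ᵃ[ℝ] ℝ} {a b x : ℝ} (hax : a ≤ x) (hxb : x ≤ b)
    (ha : f a < g a) (hb : f b < g b) : f x < g x := by
  have hconv : Convex ℝ ((g - f) ⁻¹' Ioi 0) := (convex_Ioi 0).affine_preimage (g - f)
  have hx : x ∈ (g - f) ⁻¹' Ioi 0 :=
    hconv.ordConnected.out (sub_pos.2 ha) (sub_pos.2 hb) ⟨hax, hxb⟩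
  exact sub_pos.1 hx

lemma lineThrough_apply (p q : Pt) (x : ℝ) :
    lineThrough p q x = p.2 + lineSlope p q * (x - p.1) := by
  simp [lineThrough, add_comm]

@[simp]
lemma lineThrough_left (p q : Pt) : lineThrough p q p.1 = p.2 := by
  simp [lineThrough_apply]

lemma lineThrough_right {p q : Pt} (h : p.1 ≠ q.1) : lineThrough p q q.1 = q.2 := by
  have : q.1 - p.1 ≠ 0 := sub_ne_zero.2 h.symm
  rw [lineThrough_apply, lineSlope]
  field_simp
  ring

lemma lineSlope_comm (p q : Pt) : lineSlope p q = lineSlope q p := by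
  rw [lineSlope, lineSlope, ← neg_sub p.2, ← neg_sub p.1, neg_div_neg_eq]

lemma lineThrough_apply_right {p q : Pt} (h : p.1 ≠ q.1) (x : ℝ) :
    lineThrough p q x = q.2 + lineSlope p q * (x - q.1) := by
  have hq := lineThrough_right h
  rw [lineThrough_apply] at hq ⊢
  linear_combination hq

lemma lineThrough_comm {p q : Pt} (h : p.1 ≠ q.1) (x : ℝ) :
    lineThrough p q x = lineThrough q p x := by
  rw [lineThrough_apply_right h, lineThrough_apply, lineSlope_comm]

lemma continuous_lineThrough (p q : Pt) : Continuous (lineThrough p q) :=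
  (lineThrough p q).continuous_of_finiteDimensional

lemma Seg_comm (p q : Pt) : Seg p q = Seg q p := segment_symm ℝ p q

lemma left_mem_Seg (p q : Pt) : p ∈ Seg p q := left_mem_segment ℝ p q

lemma right_mem_Seg (p q : Pt) : q ∈ Seg p q := right_mem_segment ℝ p q

lemma mem_Seg_iff_of_fst_lt {p q z : Pt} (h : p.1 < q.1) :
    z ∈ Seg p q ↔ p.1 ≤ z.1 ∧ z.1 ≤ q.1 ∧ z.2 = lineThrough p q z.1 := by
  have hpq : q.1 - p.1 ≠ 0 := (sub_pos.2 h).ne'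
  simp only [Seg, segment_eq_image', lineThrough_apply, lineSlope]
  constructor
  · rintro ⟨t, ⟨ht0, ht1⟩, rfl⟩
    simp only [Prod.fst_add, Prod.smul_fst, Prod.fst_sub, smul_eq_mul, Prod.snd_add,
      Prod.smul_snd, Prod.snd_sub]
    refine ⟨by nlinarith, by nlinarith, ?_⟩
    field_simp
    ring
  · rintro ⟨hpz, hzq, hz⟩
    refine ⟨(z.1 - p.1) / (q.1 - p.1), ⟨by apply div_nonneg <;> linarith, ?_⟩, ?_⟩
    · rw [div_le_one (by linarith)]
      linarith
    · ext
      · simp only [Prod.fst_add, Prod.smul_fst, Prod.fst_sub, smul_eq_mul]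
        field_simp
        ring
      · simp only [Prod.snd_add, Prod.smul_snd, Prod.snd_sub, smul_eq_mul, hz]
        field_simp

lemma snd_eq_lineThrough_of_mem_Seg {p q z : Pt} (h : p.1 ≠ q.1) (hz : z ∈ Seg p q) :
    z.2 = lineThrough p q z.1 := by
  rcases lt_or_gt_of_ne h with h | h
  · exact ((mem_Seg_iff_of_fst_lt h).1 hz).2.2
  · rw [Seg_comm] at hz
    rw [lineThrough_comm h.ne']
    exact ((mem_Seg_iff_of_fst_lt h).1 hz).2.2

lemma weaklyBelow_of_endpoints {p q r s : Pt} (hpq : p.1 < q.1) (hrs : r.1 < s.1)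
    (hp : r.1 ≤ p.1 → p.1 ≤ s.1 → p.2 ≤ lineThrough r s p.1)
    (hq : r.1 ≤ q.1 → q.1 ≤ s.1 → q.2 ≤ lineThrough r s q.1)
    (hr : p.1 ≤ r.1 → r.1 ≤ q.1 → lineThrough p q r.1 ≤ r.2)
    (hs : p.1 ≤ s.1 → s.1 ≤ q.1 → lineThrough p q s.1 ≤ s.2) : WeaklyBelow p q r s := by
  intro x hpx hxq hrx hxs
  apply affineMap_le_of_le_endpoints (max_le hpx hrx) (le_min hxq hxs)
  · rcases le_total p.1 r.1 with h | h
    · rw [max_eq_right h, lineThrough_left]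
      exact hr h (by linarith)
    · rw [max_eq_left h, lineThrough_left]
      exact hp h (by linarith)
  · rcases le_total q.1 s.1 with h | h
    · rw [min_eq_left h, lineThrough_right hpq.ne]
      exact hq (by linarith) h
    · rw [min_eq_right h, lineThrough_right hrs.ne]
      exact hs (by linarith) h

end Lines

namespace InGeneralPosition

variable {E F : Set Pt} {p q r s : Pt}

lemma mono (hF : InGeneralPosition F) (h : E ⊆ F) : InGeneralPosition E where
  fst_injOn := hF.fst_injOn.mono h
  snd_ne_lineThrough p hp q hq r hr := hF.snd_ne_lineThrough p (h hp) q (h hq) r (h hr)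

lemma fst_ne (hE : InGeneralPosition E) (hp : p ∈ E) (hq : q ∈ E) (hpq : p ≠ q) : p.1 ≠ q.1 :=
  fun h => hpq (hE.fst_injOn hp hq h)

lemma lineThrough_ne_at_max (hE : InGeneralPosition E) (hp : p ∈ E) (hq : q ∈ E) (hr : r ∈ E)
    (hs : s ∈ E) (hpq : p ≠ q) (hrs : r ≠ s) (hpr : p ≠ r) (hps : p ≠ s) (hqr : q ≠ r) :
    lineThrough p q (max p.1 r.1) ≠ lineThrough r s (max p.1 r.1) := by
  rcases le_total p.1 r.1 with h | h
  · rw [max_eq_right h, lineThrough_left]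
    exact (hE.snd_ne_lineThrough p hp q hq r hr hpq hpr hqr).symm
  · rw [max_eq_left h, lineThrough_left]
    exact hE.snd_ne_lineThrough r hr s hs p hp hrs hpr.symm hps.symm

lemma lineThrough_ne_at_min (hE : InGeneralPosition E) (hp : p ∈ E) (hq : q ∈ E) (hr : r ∈ E)
    (hs : s ∈ E) (hpq : p ≠ q) (hrs : r ≠ s) (hps : p ≠ s) (hqr : q ≠ r) (hqs : q ≠ s) :
    lineThrough p q (min q.1 s.1) ≠ lineThrough r s (min q.1 s.1) := by
  rcases le_total q.1 s.1 with h | h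
  · rw [min_eq_left h, lineThrough_right (hE.fst_ne hp hq hpq)]
    exact hE.snd_ne_lineThrough r hr s hs q hq hrs hqr.symm hqs.symm
  · rw [min_eq_right h, lineThrough_right (hE.fst_ne hr hs hrs)]
    exact (hE.snd_ne_lineThrough p hp q hq s hs hpq hps hqs).symm

lemma disjoint_of_weaklyBelow (hE : InGeneralPosition E) (hp : p ∈ E) (hq : q ∈ E)
    (hr : r ∈ E) (hs : s ∈ E) (hpq : p.1 < q.1) (hrs : r.1 < s.1)
    (hpr : p ≠ r) (hps : p ≠ s) (hqr : q ≠ r) (hqs : q ≠ s) (hB : WeaklyBelow p q r s) :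
    Disjoint (Seg p q) (Seg r s) := by
  have hne_pq : p ≠ q := fun h => hpq.ne (congrArg Prod.fst h)
  have hne_rs : r ≠ s := fun h => hrs.ne (congrArg Prod.fst h)
  rw [Set.disjoint_left]
  intro z hz hz'
  obtain ⟨hpz, hzq, hz⟩ := (mem_Seg_iff_of_fst_lt hpq).1 hz
  obtain ⟨hrz, hzs, hz'⟩ := (mem_Seg_iff_of_fst_lt hrs).1 hz'
  have hlt : lineThrough p q z.1 < lineThrough r s z.1 := by
    apply affineMap_lt_of_lt_endpoints (max_le hpz hrz) (le_min hzq hzs)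
    · refine (hB _ ?_ ?_ ?_ ?_).lt_of_ne
        (hE.lineThrough_ne_at_max hp hq hr hs hne_pq hne_rs hpr hps hqr) <;> grind
    · refine (hB _ ?_ ?_ ?_ ?_).lt_of_ne
        (hE.lineThrough_ne_at_min hp hq hr hs hne_pq hne_rs hps hqr hqs) <;> grind
  linarith

lemma Seg_inter_Seg_left (hE : InGeneralPosition E) (hp : p ∈ E) (hq : q ∈ E) (hr : r ∈ E)
    (hpq : p ≠ q) (hpr : p ≠ r) (hqr : q ≠ r) : Seg p q ∩ Seg p r = {p} := by
  have hpr1 := hE.fst_ne hp hr hpr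
  refine Set.eq_singleton_iff_unique_mem.2 ⟨⟨left_mem_Seg p q, left_mem_Seg p r⟩, ?_⟩
  rintro z ⟨hz, hz'⟩
  have hzq := snd_eq_lineThrough_of_mem_Seg (hE.fst_ne hp hq hpq) hz
  have hzr := snd_eq_lineThrough_of_mem_Seg hpr1 hz'
  have hmul : (lineSlope p q - lineSlope p r) * (z.1 - p.1) = 0 := by
    rw [lineThrough_apply] at hzq hzr
    linarith
  rcases mul_eq_zero.1 hmul with hslope | hx
  · have hr' := lineThrough_right hpr1
    rw [lineThrough_apply, ← sub_eq_zero.1 hslope, ← lineThrough_apply] at hr'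
    exact absurd hr'.symm (hE.snd_ne_lineThrough p hp q hq r hr hpq hpr hqr)
  · have hx : z.1 = p.1 := sub_eq_zero.1 hx
    exact Prod.ext hx (by rw [hzq, hx, lineThrough_left])

end InGeneralPosition

/-! ### Closed walks and crossing parity -/

section ClosedWalks

variable {α M : Type*} [AddCommMonoid M]

/-- The sum of `F` over the pairs of consecutive entries of a list. -/
def pathSum (F : α → α → M) (l : List α) : M := (List.zipWith F l l.tail).sum

/-- The entries of a list, indexed cyclically. -/
def cyclicGet (W : List α) [NeZero W.length] (i : ZMod W.length) : α := W[i.val]'i.val_lt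

@[simp]
lemma pathSum_cons_cons (F : α → α → M) (a b : α) (l : List α) :
    pathSum F (a :: b :: l) = F a b + pathSum F (b :: l) := by
  simp [pathSum]

@[simp]
lemma pathSum_singleton (F : α → α → M) (a : α) : pathSum F [a] = 0 := rfl

lemma pathSum_append_cons (F : α → α → M) (l : List α) (m : α) (r : List α) :
    pathSum F (l ++ m :: r) = pathSum F (l ++ [m]) + pathSum F (m :: r) := by
  induction l with
  | nil => simp
  | cons a l ih => cases l <;> simp_all [add_assoc]

lemma pathSum_eq_zero {F : α → α → M} {l : List α} (h : l.IsChain fun a b => F a b = 0) :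
    pathSum F l = 0 := by
  induction l with
  | nil => rfl
  | cons a l ih => cases l <;> simp_all

lemma pathSum_eq_add_getLast {R : Type*} [Ring R] [CharP R 2] {F : α → α → R} {φ : α → R}
    (a : α) (l : List α) (z : α) (h : (a :: l).IsChain fun a b => F a b = φ a + φ b)
    (hz : (a :: l).getLast? = some z) : pathSum F (a :: l) = φ a + φ z := by
  induction l generalizing a with
  | nil =>
    obtain rfl : a = z := by simpa using hz
    rw [pathSum_singleton, CharTwo.add_self_eq_zero]
  | cons b l ih =>
    rw [List.isChain_cons_cons] at h
    rw [pathSum_cons_cons, ih b h.2 (by simpa using hz), h.1, add_assoc,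
      CharTwo.add_cancel_left]

lemma finEquiv_eq_natCast {n : ℕ} [NeZero n] (k : Fin n) : ZMod.finEquiv n k = (k : ℕ) := by
  cases n with
  | zero => exact k.elim0
  | succ n => exact (Fin.cast_val_eq_self k).symm

variable {W : List α} [NeZero W.length] {z : α}

lemma cyclicGet_natCast {k : ℕ} (hk : k < W.length) : cyclicGet W k = W[k] := by
  simp only [cyclicGet, ZMod.val_cast_of_lt hk]

lemma cyclicGet_natCast_sub_one (hz : W.getLast? = some z) {k : ℕ} (hk : k < W.length) :
    cyclicGet W (k - 1) = (z :: W)[k]'(by simp; omega) := by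
  cases k with
  | zero =>
    have hlast : ((0 : ℕ) : ZMod W.length) - 1 = (W.length - 1 : ℕ) := by
      rw [Nat.cast_sub (by omega), ZMod.natCast_self]
      simp
    rw [hlast, cyclicGet_natCast (by omega)]
    simpa [List.getLast?_eq_getElem?, List.getElem?_eq_some_iff, hk] using hz
  | succ k =>
    rw [Nat.cast_succ, add_sub_cancel_right, cyclicGet_natCast (by omega), List.getElem_cons_succ]

lemma cyclicGet_injective (hW : W.Nodup) : Function.Injective (cyclicGet W) :=
  fun _ _ h => ZMod.val_injective _ (hW.getElem_inj_iff.1 h)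

lemma range_cyclicGet : range (cyclicGet W) = {p | p ∈ W} := by
  ext p
  constructor
  · rintro ⟨i, rfl⟩
    exact List.getElem_mem _
  · intro hp
    obtain ⟨k, hk, rfl⟩ := List.getElem_of_mem hp
    exact ⟨k, cyclicGet_natCast hk⟩

lemma isChain_cons_iff_cyclicGet (hz : W.getLast? = some z) {Q : α → α → Prop} :
    (z :: W).IsChain Q ↔ ∀ i, Q (cyclicGet W i) (cyclicGet W (i + 1)) := by
  rw [List.isChain_iff_getElem]
  constructor
  · intro h i
    have hi := (i + 1).val_lt
    have hQ := h (i + 1).val (by simpa using hi)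
    rw [← cyclicGet_natCast_sub_one hz hi, List.getElem_cons_succ, ← cyclicGet_natCast hi] at hQ
    simpa using hQ
  · intro h k hk
    have hk' : k < W.length := by simpa using hk
    rw [← cyclicGet_natCast_sub_one hz hk', List.getElem_cons_succ, ← cyclicGet_natCast hk']
    simpa using h (k - 1)

lemma sum_cyclicGet (hz : W.getLast? = some z) (F : α → α → M) :
    ∑ i, F (cyclicGet W i) (cyclicGet W (i + 1)) = pathSum F (z :: W) := by
  have hzip : List.zipWith F (z :: W) W =
      List.ofFn fun k : Fin W.length => F (cyclicGet W (k - 1)) (cyclicGet W k) := by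
    refine List.ext_getElem (by simp) fun k hk _ => ?_
    have hk' : k < W.length := by simp at hk; omega
    simp [cyclicGet_natCast_sub_one hz hk', cyclicGet_natCast hk']
  rw [pathSum, List.tail_cons, hzip, List.sum_ofFn,
    ← Equiv.sum_comp (Equiv.subRight (1 : ZMod W.length)),
    ← Equiv.sum_comp (ZMod.finEquiv W.length).toEquiv]
  exact Finset.sum_congr rfl fun k _ => by simp [finEquiv_eq_natCast]

lemma sum_mul_add_shift {n : ℕ} [NeZero n] {R : Type*} [CommSemiring R] (a b : ZMod n → R) :
    ∑ i, (a i + a (i + 1)) * b i = ∑ i, a (i + 1) * (b (i + 1) + b i) := by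
  have hshift : ∑ i, a (i + 1) * b (i + 1) = ∑ i, a i * b i :=
    Equiv.sum_comp (Equiv.addRight (1 : ZMod n)) fun i => a i * b i
  simp only [add_mul, mul_add, Finset.sum_add_distrib, hshift]

end ClosedWalks

section RayCrossing

/-- `1` if `w` lies on or to the right of the vertical line through `p`, and `0` otherwise. -/
def rightOf (p w : Pt) : ZMod 2 := if p.1 ≤ w.1 then 1 else 0

/-- `1` if `w` lies strictly below the line through `p` and `q`, and `0` otherwise. -/
def belowLine (p q w : Pt) : ZMod 2 := if w.2 < lineThrough p q w.1 then 1 else 0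

/-- `1` if the upward vertical ray from `w` crosses the edge from `p` to `q`, and `0` otherwise. The
edge is taken without its right endpoint, so that a ray through a vertex is counted correctly. -/
def rayCrossing (w p q : Pt) : ZMod 2 := (rightOf p w + rightOf q w) * belowLine p q w

variable {p q r w₀ w : Pt} {B : ℝ}

lemma between_of_rightOf_add_ne_zero (h : rightOf p w + rightOf q w ≠ 0) :
    p.1 ≤ w.1 ∧ w.1 < q.1 ∨ q.1 ≤ w.1 ∧ w.1 < p.1 := by
  unfold rightOf at h
  split_ifs at h with hp hq hq
  · exact absurd (CharTwo.add_self_eq_zero _) h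
  · exact .inl ⟨hp, not_le.1 hq⟩
  · exact .inr ⟨hq, not_le.1 hp⟩
  · simp at h

lemma mem_Seg_of_rightOf_add_ne_zero (hpq : p.1 ≠ q.1) (h : rightOf p w + rightOf q w ≠ 0)
    (hw : w.2 = lineThrough p q w.1) : w ∈ Seg p q := by
  rcases between_of_rightOf_add_ne_zero h with ⟨hp, hq⟩ | ⟨hq, hp⟩
  · exact (mem_Seg_iff_of_fst_lt (hp.trans_lt hq)).2 ⟨hp, hq.le, hw⟩
  · rw [Seg_comm]
    exact (mem_Seg_iff_of_fst_lt (hq.trans_lt hp)).2 ⟨hq, hp.le, hw.trans (lineThrough_comm hpq _)⟩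

lemma eventually_rightOf_eq (h : p.1 ≠ w₀.1) : ∀ᶠ w in nhds w₀, rightOf p w = rightOf p w₀ := by
  rcases lt_or_gt_of_ne h with h | h
  · filter_upwards [continuousAt_fst.eventually (lt_mem_nhds h)] with w hw
    simp [rightOf, hw.le, h.le]
  · filter_upwards [continuousAt_fst.eventually (gt_mem_nhds h)] with w hw
    simp [rightOf, hw.not_ge, h.not_ge]

lemma eventually_belowLine_eq (h : w₀.2 ≠ lineThrough p q w₀.1) :
    ∀ᶠ w in nhds w₀, belowLine p q w = belowLine p q w₀ := by
  have hc : Continuous fun w : Pt => lineThrough p q w.1 :=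
    (continuous_lineThrough p q).comp continuous_fst
  rcases lt_or_gt_of_ne h with h | h
  · filter_upwards [continuousAt_snd.eventually_lt hc.continuousAt h] with w hw
    simp [belowLine, hw, h]
  · filter_upwards [hc.continuousAt.eventually_lt continuousAt_snd h] with w hw
    simp [belowLine, hw.not_gt, h.not_gt]

/-- The contributions of the two edges at `q` that depend on the side of `q` on which `w` lies. -/
lemma eventually_rightOf_mul_eq (hpq : p.1 ≠ q.1) (hw₀ : w₀ ≠ q) :
    ∀ᶠ w in nhds w₀, rightOf q w * (belowLine q r w + belowLine p q w) =
      rightOf q w₀ * (belowLine q r w + belowLine p q w) := by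
  by_cases h : q.1 = w₀.1
  · have hsnd : w₀.2 ≠ q.2 := fun hsnd => hw₀ (Prod.ext h.symm hsnd)
    have hqr : lineThrough q r w₀.1 = q.2 := by rw [← h, lineThrough_left]
    have hpq : lineThrough p q w₀.1 = q.2 := by rw [← h, lineThrough_right hpq]
    filter_upwards [eventually_belowLine_eq (hqr ▸ hsnd), eventually_belowLine_eq (hpq ▸ hsnd)]
      with w hqr' hpq'
    have hzero : belowLine q r w + belowLine p q w = 0 := by
      rw [hqr', hpq', belowLine, belowLine, hqr, hpq, CharTwo.add_self_eq_zero]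
    rw [hzero, mul_zero, mul_zero]
  · filter_upwards [eventually_rightOf_eq h] with w hw
    rw [hw]

lemma eventually_mul_belowLine_eq_rayCrossing (hpq : p.1 ≠ q.1) (hw₀ : w₀ ∉ Seg p q) :
    ∀ᶠ w in nhds w₀,
      (rightOf p w₀ + rightOf q w₀) * belowLine p q w = rayCrossing w₀ p q := by
  unfold rayCrossing
  by_cases h : rightOf p w₀ + rightOf q w₀ = 0
  · simp [h]
  · filter_upwards [eventually_belowLine_eq
      fun hw => hw₀ (mem_Seg_of_rightOf_add_ne_zero hpq h hw)] with w hw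
    rw [hw]

lemma rightOf_add_eq_zero_of_lt_abs_fst (hp : |p.1| ≤ B) (hq : |q.1| ≤ B) (hw : B < |w.1|) :
    rightOf p w + rightOf q w = 0 := by
  by_contra h
  rw [abs_le] at hp hq
  refine hw.not_ge (abs_le.2 ?_)
  rcases between_of_rightOf_add_ne_zero h with h | h <;> constructor <;> linarith

lemma lineThrough_mem_Icc_of_rightOf_add_ne_zero (hpq : p.1 ≠ q.1) (hp : |p.2| ≤ B)
    (hq : |q.2| ≤ B) (h : rightOf p w + rightOf q w ≠ 0) :
    lineThrough p q w.1 ∈ Icc (-B) B := by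
  wlog hlt : p.1 < q.1 generalizing p q
  · rw [lineThrough_comm hpq]
    exact this hpq.symm hq hp (by rwa [add_comm]) (hpq.symm.lt_of_le (not_lt.1 hlt))
  have hw : p.1 ≤ w.1 ∧ w.1 ≤ q.1 := by
    rcases between_of_rightOf_add_ne_zero h with h | h
    · exact ⟨h.1, h.2.le⟩
    · linarith
  rw [abs_le] at hp hq
  have hleft := lineThrough_left p q
  have hright := lineThrough_right hpq
  constructor
  · refine affineMap_le_of_le_endpoints (f := AffineMap.const ℝ ℝ (-B)) hw.1 hw.2 ?_ ?_ <;>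
      simp only [AffineMap.const_apply] <;> linarith
  · refine affineMap_le_of_le_endpoints (g := AffineMap.const ℝ ℝ B) hw.1 hw.2 ?_ ?_ <;>
      simp only [AffineMap.const_apply] <;> linarith

lemma rayCrossing_eq_zero_of_above (hpq : p.1 ≠ q.1) (hp : |p.2| ≤ B) (hq : |q.2| ≤ B)
    (hw : B < w.2) : rayCrossing w p q = 0 := by
  by_contra h
  have hB := (lineThrough_mem_Icc_of_rightOf_add_ne_zero hpq hp hq (left_ne_zero_of_mul h)).2
  exact right_ne_zero_of_mul h (if_neg (by linarith))

lemma rayCrossing_eq_of_below (hpq : p.1 ≠ q.1) (hp : |p.2| ≤ B) (hq : |q.2| ≤ B)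
    (hw : w.2 < -B) : rayCrossing w p q = rightOf p w + rightOf q w := by
  by_cases h : rightOf p w + rightOf q w = 0
  · rw [rayCrossing, h, zero_mul]
  · have hB := (lineThrough_mem_Icc_of_rightOf_add_ne_zero hpq hp hq h).1
    rw [rayCrossing, belowLine, if_pos (hw.trans_le hB), mul_one]

variable {n : ℕ} [NeZero n] {v : ZMod n → Pt}

lemma eventually_sum_rayCrossing_eq (hv : ∀ i, (v i).1 ≠ (v (i + 1)).1)
    (hw₀ : w₀ ∉ ⋃ i, Seg (v i) (v (i + 1))) :
    ∀ᶠ w in nhds w₀,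
      ∑ i, rayCrossing w (v i) (v (i + 1)) = ∑ i, rayCrossing w₀ (v i) (v (i + 1)) := by
  have hSeg : ∀ i, w₀ ∉ Seg (v i) (v (i + 1)) := fun i hi => hw₀ (mem_iUnion.2 ⟨i, hi⟩)
  have hvtx : ∀ i, w₀ ≠ v (i + 1) := fun i h => hSeg i (h ▸ right_mem_Seg _ _)
  filter_upwards [Filter.eventually_all.2 fun i =>
      eventually_rightOf_mul_eq (r := v (i + 1 + 1)) (hv i) (hvtx i),
    Filter.eventually_all.2 fun i => eventually_mul_belowLine_eq_rayCrossing (hv i) (hSeg i)]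
    with w hvertex hedge
  -- Summation by parts collects the two edges at each vertex, so that `rightOf` only matters there.
  calc ∑ i, rayCrossing w (v i) (v (i + 1))
      = ∑ i, rightOf (v (i + 1)) w *
          (belowLine (v (i + 1)) (v (i + 1 + 1)) w + belowLine (v i) (v (i + 1)) w) :=
        sum_mul_add_shift (fun i => rightOf (v i) w) fun i => belowLine (v i) (v (i + 1)) w
    _ = ∑ i, rightOf (v (i + 1)) w₀ *
          (belowLine (v (i + 1)) (v (i + 1 + 1)) w + belowLine (v i) (v (i + 1)) w) :=
        Finset.sum_congr rfl fun i _ => hvertex i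
    _ = ∑ i, (rightOf (v i) w₀ + rightOf (v (i + 1)) w₀) * belowLine (v i) (v (i + 1)) w :=
        (sum_mul_add_shift (fun i => rightOf (v i) w₀) fun i =>
          belowLine (v i) (v (i + 1)) w).symm
    _ = ∑ i, rayCrossing w₀ (v i) (v (i + 1)) := Finset.sum_congr rfl fun i _ => hedge i

lemma sum_rayCrossing_eq_zero_of_lt_norm (hv : ∀ i, (v i).1 ≠ (v (i + 1)).1)
    (hB : ∀ i, ‖v i‖ ≤ B) (hw : B < ‖w‖) : ∑ i, rayCrossing w (v i) (v (i + 1)) = 0 := by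
  have hfst : ∀ i, |(v i).1| ≤ B := fun i => (norm_fst_le (v i)).trans (hB i)
  have hsnd : ∀ i, |(v i).2| ≤ B := fun i => (norm_snd_le (v i)).trans (hB i)
  rw [Prod.norm_def, lt_max_iff, Real.norm_eq_abs, Real.norm_eq_abs, lt_abs (b := w.2)] at hw
  rcases hw with hw | hw | hw
  · refine Finset.sum_eq_zero fun i _ => ?_
    rw [rayCrossing, rightOf_add_eq_zero_of_lt_abs_fst (hfst i) (hfst _) hw, zero_mul]
  · exact Finset.sum_eq_zero fun i _ => rayCrossing_eq_zero_of_above (hv i) (hsnd i) (hsnd _) hw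
  · rw [Finset.sum_congr rfl fun i _ =>
        rayCrossing_eq_of_below (hv i) (hsnd i) (hsnd _) (lt_neg_of_lt_neg hw),
      Finset.sum_add_distrib]
    have hshift := Equiv.sum_comp (Equiv.addRight (1 : ZMod n)) fun i => rightOf (v i) w
    exact (congrArg _ hshift).trans (CharTwo.add_self_eq_zero _)

lemma isBounded_connectedComponentIn_of_sum_rayCrossing (hv : ∀ i, (v i).1 ≠ (v (i + 1)).1)
    (hw₀ : w₀ ∉ ⋃ i, Seg (v i) (v (i + 1))) (hodd : ∑ i, rayCrossing w₀ (v i) (v (i + 1)) = 1) :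
    Bornology.IsBounded (connectedComponentIn (⋃ i, Seg (v i) (v (i + 1)))ᶜ w₀) := by
  let : TopologicalSpace (ZMod 2) := ⊥
  have : DiscreteTopology (ZMod 2) := ⟨rfl⟩
  obtain ⟨B, hB⟩ := (finite_range fun i => ‖v i‖).bddAbove
  refine (Metric.isBounded_closedBall (x := 0) (r := B)).subset fun w hw => ?_
  have hcont : ContinuousOn (fun w => ∑ i, rayCrossing w (v i) (v (i + 1)))
      (connectedComponentIn (⋃ i, Seg (v i) (v (i + 1)))ᶜ w₀) := fun u hu =>
    (continuousAt_const.congr ((eventually_sum_rayCrossing_eq hv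
      (connectedComponentIn_subset _ _ hu)).mono fun _ h => h.symm)).continuousWithinAt
  have heq := isPreconnected_connectedComponentIn.constant hcont hw (mem_connectedComponentIn hw₀)
  by_contra hfar
  rw [mem_closedBall_zero_iff, not_le] at hfar
  rw [hodd, sum_rayCrossing_eq_zero_of_lt_norm hv (fun i => hB (mem_range_self i)) hfar] at heq
  exact zero_ne_one heq

end RayCrossing

section PolygonOfList

variable {E : Set Pt}

/-- The simple polygon with vertices `v`, for points in general position such that edges without a
common endpoint are disjoint. -/
def SimplePolygon.ofVertices (hE : InGeneralPosition E) {k : ℕ} (hk : 3 ≤ k) (v : ZMod k → Pt)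
    (hinj : Function.Injective v) (hvE : ∀ i, v i ∈ E)
    (hdisj : ∀ i j, i ≠ j → j ≠ i + 1 → i ≠ j + 1 →
      Disjoint (Seg (v i) (v (i + 1))) (Seg (v j) (v (j + 1)))) : SimplePolygon where
  k := k
  three_le := hk
  vtx := v
  inj := hinj
  edge_inter i j hij := by
    constructor
    · intro hne
      by_contra! hcon
      exact not_disjoint_iff_nonempty_inter.2 hne (hdisj i j hij hcon.1 hcon.2)
    · rintro (rfl | rfl)
      · exact ⟨v (i + 1), right_mem_Seg _ _, left_mem_Seg _ _⟩
      · exact ⟨v (j + 1), left_mem_Seg _ _, right_mem_Seg _ _⟩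
  edge_consec i := by
    have : Fact (1 < k) := ⟨by omega⟩
    have hone : (1 : ZMod k) ≠ 0 := one_ne_zero
    have htwo : (2 : ZMod k) ≠ 0 := fun h => by
      have hdvd := (ZMod.natCast_eq_zero_iff 2 k).1 (by exact_mod_cast h)
      have := Nat.le_of_dvd two_pos hdvd
      omega
    rw [Seg_comm (v i)]
    refine hE.Seg_inter_Seg_left (hvE _) (hvE _) (hvE _) (hinj.ne fun h => hone ?_)
      (hinj.ne fun h => hone ?_) (hinj.ne fun h => htwo ?_)
    · linear_combination h
    · linear_combination -h
    · linear_combination -h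

variable {W : List Pt} {z : Pt} {edge : Pt → Pt → Prop}

lemma exists_simplePolygon_of_list (hE : InGeneralPosition E)
    (hdisj : ∀ p q r s, edge p q → edge r s → p ≠ r → p ≠ s → q ≠ r → q ≠ s →
      Disjoint (Seg p q) (Seg r s))
    (hnodup : W.Nodup) (hlen : 3 ≤ W.length) (hWE : ∀ p ∈ W, p ∈ E) (hz : W.getLast? = some z)
    (hchain : (z :: W).IsChain edge) :
    ∃ P : SimplePolygon, range P.vtx = {p | p ∈ W} ∧
      (∀ Q : Pt → Pt → Prop, (∀ i, Q (P.vtx i) (P.vtx (i + 1))) ↔ (z :: W).IsChain Q) ∧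
      ∀ w ∉ P.edgeUnion, pathSum (rayCrossing w) (z :: W) = 1 → w ∈ P.closedRegion := by
  have : NeZero W.length := ⟨by omega⟩
  have : Fact (1 < W.length) := ⟨by omega⟩
  have hinj := cyclicGet_injective hnodup
  have hvE : ∀ i, cyclicGet W i ∈ E := fun i => hWE _ (List.getElem_mem _)
  have hedge := (isChain_cons_iff_cyclicGet hz).1 hchain
  let P := SimplePolygon.ofVertices hE hlen (cyclicGet W) hinj hvE fun i j hij hij' hji =>
    hdisj _ _ _ _ (hedge i) (hedge j) (hinj.ne hij) (hinj.ne hji) (hinj.ne hij'.symm)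
      (hinj.ne fun h => hij (add_right_cancel h))
  have hfst : ∀ i, (cyclicGet W i).1 ≠ (cyclicGet W (i + 1)).1 := fun i =>
    hE.fst_ne (hvE _) (hvE _) (hinj.ne fun h => one_ne_zero (left_eq_add.1 h))
  exact ⟨P, range_cyclicGet, fun Q => (isChain_cons_iff_cyclicGet hz).symm, fun w hw hsum =>
    .inr ⟨hw, isBounded_connectedComponentIn_of_sum_rayCrossing (v := cyclicGet W) hfst hw
      ((sum_cyclicGet hz _).trans hsum)⟩⟩

end PolygonOfList

/-! ### Consecutive elements and next greater elements -/

section Relations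

variable {α β : Type*} {r : α → α → Prop} {a b k p q : α}

/-- `p` and `q` are consecutive elements of `S` for the order relation `r`. -/
structure ConsecutiveIn (r : α → α → Prop) (S : Set α) (p q : α) : Prop where
  left_mem : p ∈ S
  right_mem : q ∈ S
  rel : r p q
  not_between : ∀ v ∈ S, r p v → ¬ r v q

lemma exists_list_pairwise (htrans : ∀ a b c, r a b → r b c → r a c) (S : Finset α)
    (htotal : ∀ a ∈ S, ∀ b ∈ S, a ≠ b → r a b ∨ r b a) :
    ∃ l : List α, (∀ v, v ∈ l ↔ v ∈ S) ∧ l.Pairwise r := by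
  classical
  induction S using Finset.induction_on with
  | empty => exact ⟨[], by simp, List.Pairwise.nil⟩
  | insert a S ha ih =>
    obtain ⟨l, hmem, hl⟩ :=
      ih fun b hb c hc => htotal b (Finset.mem_insert_of_mem hb) c (Finset.mem_insert_of_mem hc)
    refine ⟨l.filter (r · a) ++ a :: l.filter (r a ·), fun v => ?_, ?_⟩
    · have hv : v ∈ S → r v a ∨ r a v := fun h =>
        htotal v (Finset.mem_insert_of_mem h) a (Finset.mem_insert_self a S) (h.ne_of_notMem ha)
      simp only [List.mem_append, List.mem_cons, List.mem_filter, hmem, decide_eq_true_eq,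
        Finset.mem_insert]
      tauto
    · simp only [List.pairwise_append, List.pairwise_cons, List.mem_cons, List.mem_filter,
        decide_eq_true_eq]
      refine ⟨hl.filter _, ⟨fun b hb => hb.2, hl.filter _⟩, ?_⟩
      rintro b ⟨-, hb⟩ c (rfl | ⟨-, hc⟩)
      exacts [hb, htrans b a c hb hc]

lemma isChain_consecutiveIn (hasymm : ∀ a b, r a b → ¬ r b a) {l : List α}
    (hl : l.Pairwise r) : l.IsChain (ConsecutiveIn r {v | v ∈ l}) := by
  rw [List.isChain_iff_getElem]
  rw [List.pairwise_iff_getElem] at hl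
  intro i hi
  refine ⟨List.getElem_mem _, List.getElem_mem _, hl _ _ _ hi i.lt_succ_self, ?_⟩
  intro v hv hiv hvi
  obtain ⟨j, hj, rfl⟩ := List.getElem_of_mem hv
  rcases lt_trichotomy j i with hji | rfl | hij
  · exact hasymm _ _ hiv (hl _ _ hj _ hji)
  · exact hasymm _ _ hiv hiv
  · rcases (Nat.succ_le_of_lt hij).eq_or_lt with rfl | hij
    · exact hasymm _ _ hvi hvi
    · exact hasymm _ _ hvi (hl _ _ hi hj hij)

lemma exists_eq_cons_append_singleton {l : List α} (hl : l.Pairwise r) (ha : a ∈ l) (hb : b ∈ l)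
    (hab : a ≠ b) (hmin : ∀ v ∈ l, ¬ r v a) (hmax : ∀ v ∈ l, ¬ r b v) :
    ∃ m, l = a :: (m ++ [b]) := by
  obtain ⟨s, t, rfl⟩ := List.append_of_mem ha
  obtain rfl : s = [] := List.eq_nil_iff_forall_not_mem.2 fun v hv =>
    hmin v (by simp [hv]) ((List.pairwise_append.1 hl).2.2 v hv a (by simp))
  obtain ⟨m, u, rfl⟩ := List.append_of_mem ((List.mem_cons.1 hb).resolve_left hab.symm)
  obtain rfl : u = [] := List.eq_nil_iff_forall_not_mem.2 fun v hv =>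
    hmax v (by simp [hv]) ((List.pairwise_append (l₁ := a :: m)).1 hl |>.2.1 |>
      List.pairwise_cons.1 |>.1 v hv)
  exact ⟨m, rfl⟩

/-- `r` is a disjoint union of strict linear orders in which every element has finitely many
predecessors and successors: the left-to-right order within the columns of a family of segments. -/
structure IsChainUnion (r : α → α → Prop) : Prop where
  trans : ∀ a b c, r a b → r b c → r a c
  irrefl : ∀ a, ¬ r a a
  right_connected : ∀ a b c, r a b → r a c → b = c ∨ r b c ∨ r c b
  left_connected : ∀ a b c, r b a → r c a → b = c ∨ r b c ∨ r c b
  finite_right : ∀ a, {b | r a b}.Finite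
  finite_left : ∀ a, {b | r b a}.Finite

namespace IsChainUnion

lemma swap (hr : IsChainUnion r) : IsChainUnion (Function.swap r) where
  trans a b c hab hbc := hr.trans c b a hbc hab
  irrefl := hr.irrefl
  right_connected a b c hb hc := (hr.left_connected a b c hb hc).imp id Or.symm
  left_connected a b c hb hc := (hr.right_connected a b c hb hc).imp id Or.symm
  finite_right := hr.finite_left
  finite_left := hr.finite_right

lemma asymm (hr : IsChainUnion r) (a b : α) (hab : r a b) : ¬ r b a :=
  fun hba => hr.irrefl a (hr.trans a b a hab hba)

end IsChainUnion

variable [LinearOrder β] {rho : α → β} {i e f : α}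

/-- No element before `i` has a larger value of `rho`. With `Function.swap r` in place of `r`,
this says that `i` is a suffix maximum. -/
def PrefixMax (r : α → α → Prop) (rho : α → β) (i : α) : Prop :=
  ∀ j, r j i → rho j ≤ rho i

/-- `k` is the first element after `i` with a larger value of `rho`. With `Function.swap r` in
place of `r`, it is the last such element before `i`. -/
structure NextGreater (r : α → α → Prop) (rho : α → β) (i k : α) : Prop where
  rel : r i k
  lt : rho i < rho k
  lt_of_between : ∀ t, r i t → r t k → rho t < rho i

/-- `q` is the parent of `p` in the Cartesian tree of `rho`: the smaller one of the nearest
elements `e` before `p` and `f` after `p` which have larger values of `rho`. -/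
structure CartesianParent (r : α → α → Prop) (rho : α → β) (p q e f : α) : Prop where
  prev : NextGreater (Function.swap r) rho p e
  next : NextGreater r rho p f
  eq_or_eq : q = e ∨ q = f
  le_prev : rho q ≤ rho e
  le_next : rho q ≤ rho f

/-- One of `p` and `q` is the parent of the other in the Cartesian tree of `rho`. -/
def CartesianAdj (r : α → α → Prop) (rho : α → β) (p q : α) : Prop :=
  (∃ e f, CartesianParent r rho p q e f) ∨ ∃ e f, CartesianParent r rho q p e f

lemma CartesianParent.swap (h : CartesianParent r rho p q e f) :
    CartesianParent (Function.swap r) rho p q f e :=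
  ⟨h.next, h.prev, h.eq_or_eq.symm, h.le_next, h.le_prev⟩

lemma CartesianAdj.swap (h : CartesianAdj r rho p q) : CartesianAdj (Function.swap r) rho p q :=
  h.imp (fun ⟨e, f, h⟩ => ⟨f, e, h.swap⟩) fun ⟨e, f, h⟩ => ⟨f, e, h.swap⟩

lemma exists_prefixMax_ge (hr : IsChainUnion r) (rho : α → β) (a : α) :
    ∃ u, (u = a ∨ r u a) ∧ rho a ≤ rho u ∧ PrefixMax r rho u := by
  obtain ⟨u, hu, hmax⟩ := ((hr.finite_left a).insert a).exists_maximalFor rho _ ⟨a, .inl rfl⟩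
  have hle : ∀ t, t = a ∨ r t a → rho t ≤ rho u := fun t ht =>
    (le_total (rho t) (rho u)).elim id fun h => hmax ht h
  refine ⟨u, hu, hle a (.inl rfl), fun j hj => hle j (.inr ?_)⟩
  rcases hu with rfl | hu
  exacts [hj, hr.trans j u a hj hu]

namespace NextGreater

lemma right_unique (hr : IsChainUnion r) {k' : α} (h : NextGreater r rho i k)
    (h' : NextGreater r rho i k') : k = k' := by
  rcases hr.right_connected i k k' h.rel h'.rel with rfl | hk | hk
  · rfl
  · exact absurd (h'.lt_of_between k h.rel hk) h.lt.not_gt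
  · exact absurd (h.lt_of_between k' h'.rel hk) h'.lt.not_gt

lemma exists_swap_of_not_prefixMax (hr : IsChainUnion r) (hrho : ∀ a b, r a b → rho a ≠ rho b)
    (h : ¬ PrefixMax r rho k) : ∃ e, NextGreater (Function.swap r) rho k e := by
  classical
  simp only [PrefixMax, not_forall, not_le] at h
  obtain ⟨j, hjk, hj⟩ := h
  obtain ⟨l, hmem, hl⟩ := exists_list_pairwise (r := Function.swap r) hr.swap.trans
    ((hr.finite_left k).toFinset.filter fun u => rho k < rho u) fun a ha b hb hab => by
      simp only [Finset.mem_filter, Finite.mem_toFinset, mem_ofPred_eq] at ha hb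
      exact ((hr.left_connected k a b ha.1 hb.1).resolve_left hab).symm
  simp only [Finset.mem_filter, Finite.mem_toFinset, mem_ofPred_eq] at hmem
  obtain ⟨e, l, rfl⟩ := List.exists_cons_of_ne_nil (List.ne_nil_of_mem ((hmem j).2 ⟨hjk, hj⟩))
  obtain ⟨hek, he⟩ := (hmem e).1 (by simp)
  refine ⟨e, hek, he, fun t htk het => (lt_or_gt_of_ne (hrho t k htk)).resolve_right fun ht => ?_⟩
  rcases List.mem_cons.1 ((hmem t).2 ⟨htk, ht⟩) with rfl | htl
  · exact hr.irrefl t het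
  · exact hr.asymm e t het ((List.pairwise_cons.1 hl).1 t htl)

lemma rel_of_swap (hr : IsChainUnion r) (he : NextGreater (Function.swap r) rho k e)
    (hi : NextGreater r rho i k) : r e i := by
  rcases hr.left_connected k e i he.rel hi.rel with rfl | h | h
  · exact absurd hi.lt he.lt.not_gt
  · exact h
  · exact absurd (hi.lt_of_between e h he.rel) (hi.lt.trans he.lt).not_gt

lemma not_prefixMax (hr : IsChainUnion r) (hrho : ∀ a b, r a b → rho a ≠ rho b)
    (hk : ¬ PrefixMax r rho k) (hi : NextGreater r rho i k) : ¬ PrefixMax r rho i := by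
  obtain ⟨e, he⟩ := exists_swap_of_not_prefixMax hr hrho hk
  exact fun h => (h e (he.rel_of_swap hr hi)).not_gt (hi.lt.trans he.lt)

end NextGreater

lemma exists_max_between (hr : IsChainUnion r) (hrho : ∀ a b, r a b → rho a ≠ rho b) {t₀ : α}
    (ha : r a t₀) (hb : r t₀ b) :
    ∃ t, r a t ∧ r t b ∧ rho t₀ ≤ rho t ∧ ∀ t', r a t' → r t' b → t' ≠ t → rho t' < rho t := by
  obtain ⟨t, ⟨hat, htb⟩, hmax⟩ := ((hr.finite_right a).inter_of_left {t | r t b}).exists_maximalFor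
    rho _ ⟨t₀, ha, hb⟩
  have hle : ∀ t', r a t' → r t' b → rho t' ≤ rho t := fun t' h h' =>
    (le_total (rho t') (rho t)).elim id fun h'' => hmax ⟨h, h'⟩ h''
  refine ⟨t, hat, htb, hle t₀ ha hb, fun t' h h' hne => (hle t' h h').lt_of_ne ?_⟩
  rcases (hr.right_connected a t' t h hat).resolve_left hne with htt | htt
  exacts [hrho t' t htt, (hrho t t' htt).symm]

/-- If no child of `k` lies between `e` and the child `b`, then `b` is bounded by `e`. -/
lemma NextGreater.swap_of_no_child_between (hr : IsChainUnion r)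
    (hrho : ∀ a b, r a b → rho a ≠ rho b) (hb : NextGreater r rho b k) (heb : r e b)
    (hlt : rho b < rho e) (hltk : ∀ t, r e t → r t b → rho t < rho k)
    (hgap : ∀ t, NextGreater r rho t k → r e t → ¬ r t b) :
    NextGreater (Function.swap r) rho b e := by
  refine ⟨heb, hlt, fun t₀ (htb₀ : r t₀ b) (het₀ : r e t₀) => ?_⟩
  by_contra hcon
  obtain ⟨t, het, htb, hle, hmax⟩ := exists_max_between hr hrho het₀ htb₀
  have hbt : rho b < rho t :=
    ((not_lt.1 hcon).lt_of_ne (hrho t₀ b htb₀).symm).trans_le hle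
  refine hgap t ⟨hr.trans t b k htb hb.rel, hltk t het htb, fun t' htt htk => ?_⟩ het htb
  rcases hr.left_connected k t' b htk hb.rel with rfl | h | h
  · exact hbt
  · exact hmax t' (hr.trans e t t' het htt) h fun heq => hr.irrefl t (heq ▸ htt)
  · exact (hb.lt_of_between t' h htk).trans hbt

lemma exists_children_list (hr : IsChainUnion r) (rho : α → β) (k : α) :
    ∃ c : List α, c.Pairwise r ∧ ∀ i, i ∈ c ↔ NextGreater r rho i k := by
  classical
  obtain ⟨c, hmem, hc⟩ := exists_list_pairwise hr.trans
    ((hr.finite_left k).toFinset.filter fun i => NextGreater r rho i k) fun a ha b hb hab => by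
      simp only [Finset.mem_filter] at ha hb
      exact (hr.left_connected k a b ha.2.rel hb.2.rel).resolve_left hab
  refine ⟨c, hc, fun i => ?_⟩
  simp only [hmem, Finset.mem_filter, Finite.mem_toFinset, mem_ofPred_eq, and_iff_right_iff_imp]
  exact NextGreater.rel

/-- The first child is bounded on the left by the same element as `k`, and each further child is
bounded on the left by the preceding one. -/
lemma isChain_cartesianAdj_children (hr : IsChainUnion r) (hrho : ∀ a b, r a b → rho a ≠ rho b)
    (hk : ¬ PrefixMax r rho k) {c : List α} (hc : c.Pairwise r)
    (hmem : ∀ i, i ∈ c ↔ NextGreater r rho i k) :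
    (k :: c).IsChain (CartesianAdj r rho) := by
  obtain ⟨e, he⟩ := NextGreater.exists_swap_of_not_prefixMax hr hrho hk
  have hbounded : ∀ a b, ConsecutiveIn r {v | v ∈ c} a b → CartesianAdj r rho a b := by
    rintro a b ⟨ha, hb, hab, hn⟩
    have ha := (hmem a).1 ha
    have hb := (hmem b).1 hb
    refine .inr ⟨a, k, ?_, hb, .inl rfl, le_rfl, ha.lt.le⟩
    refine hb.swap_of_no_child_between hr hrho hab (ha.lt_of_between b hab hb.rel)
      (fun t hat htb => ?_) fun t ht => hn t ((hmem t).2 ht)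
    exact (ha.lt_of_between t hat (hr.trans t b k htb hb.rel)).trans ha.lt
  rw [List.isChain_cons]
  refine ⟨fun a ha => ?_, (isChain_consecutiveIn hr.asymm hc).imp hbounded⟩
  obtain ⟨c', rfl⟩ := List.head?_eq_some_iff.1 (Option.mem_def.1 ha)
  have hak := (hmem a).1 (by simp)
  refine .inr ⟨e, k, ?_, hak, .inr rfl, he.lt.le, le_rfl⟩
  refine hak.swap_of_no_child_between hr hrho (he.rel_of_swap hr hak) (hak.lt.trans he.lt)
    (fun t het hta => he.lt_of_between t (hr.trans t a k hta hak.rel) het) fun t ht _ hta => ?_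
  rcases List.mem_cons.1 ((hmem t).2 ht) with rfl | htc
  exacts [hr.irrefl t hta, hr.asymm t a hta ((List.pairwise_cons.1 hc).1 t htc)]

lemma not_between_last_child (hr : IsChainUnion r) (hrho : ∀ a b, r a b → rho a ≠ rho b)
    {c : List α} (hc : (c ++ [a]).Pairwise r) (hmem : ∀ i, i ∈ c ++ [a] ↔ NextGreater r rho i k)
    (t : α) (hat : r a t) : ¬ r t k := by
  intro htk
  have ha := (hmem a).1 (by simp)
  obtain ⟨t, hat, htk, -, hmax⟩ := exists_max_between hr hrho hat htk
  have ht : NextGreater r rho t k := by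
    refine ⟨htk, (ha.lt_of_between t hat htk).trans ha.lt, fun t' htt htk' => ?_⟩
    exact hmax t' (hr.trans a t t' hat htt) htk' fun heq => hr.irrefl t (heq ▸ htt)
  rcases List.mem_append.1 ((hmem t).2 ht) with htc | hta
  · exact hr.asymm a t hat ((List.pairwise_append.1 hc).2.2 t htc a (by simp))
  · rw [List.mem_singleton.1 hta] at hat
    exact hr.irrefl a hat

/-- Colour an element by the parity of its depth in the forest of next greater elements. -/
lemma exists_coloring_nextGreater (hr : IsChainUnion r) (rho : α → β) :
    ∃ col : α → Bool, ∀ i k, NextGreater r rho i k → col i ≠ col k := by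
  classical
  let ancestors i := {k | Relation.TransGen (NextGreater r rho) i k}
  have hsub : ∀ i, ancestors i ⊆ {k | r i k} := fun i k hk => by
    induction hk with
    | single h => exact h.rel
    | tail _ h ih => exact hr.trans _ _ _ ih h.rel
  refine ⟨fun i => decide (Even (ancestors i).ncard), fun i k hik => ?_⟩
  have hinsert : ancestors i = insert k (ancestors k) := by
    ext j
    simp only [ancestors, mem_ofPred_eq, mem_insert_iff, Relation.TransGen.head'_iff (a := i)]
    constructor
    · rintro ⟨k', hk', hj⟩
      rw [hk'.right_unique hr hik] at hj
      exact Relation.reflTransGen_iff_eq_or_transGen.1 hj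
    · exact fun hj => ⟨k, hik, Relation.reflTransGen_iff_eq_or_transGen.2 hj⟩
  have hcard : (ancestors i).ncard = (ancestors k).ncard + 1 := by
    rw [hinsert, ncard_insert_of_notMem (fun h => hr.irrefl k (hsub k h))
      ((hr.finite_right k).subset (hsub k))]
  simp only [hcard, Nat.even_add_one, ne_eq, decide_eq_decide]
  tauto

end Relations

/-! ### Visible endpoints and the two chains -/

section Lines

/-- The signed vertical distance of `v` above the line through `p` and `q`. -/
def lineOffset (p q v : Pt) : ℝ := v.2 - lineThrough p q v.1

/-- `p` lies to the left of `q`. -/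
abbrev FstLT (p q : Pt) : Prop := p.1 < q.1

variable {A : Set Pt} {a b p q r s v : Pt}

lemma lineOffset_left (p q : Pt) : lineOffset p q p = 0 := by
  simp [lineOffset]

lemma lineOffset_right (h : p.1 ≠ q.1) : lineOffset p q q = 0 := by
  simp [lineOffset, lineThrough_right h]

lemma lineOffset_sub_lineOffset (p q a b : Pt) :
    lineOffset p q b - lineOffset p q a = b.2 - a.2 - lineSlope p q * (b.1 - a.1) := by
  simp only [lineOffset, lineThrough_apply]
  ring

lemma lineSlope_le_lineSlope_iff (h : a.1 < b.1) :
    lineSlope a b ≤ lineSlope p q ↔ lineOffset p q b ≤ lineOffset p q a := by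
  rw [← sub_nonpos (a := lineOffset p q b), lineOffset_sub_lineOffset, sub_nonpos,
    ← div_le_iff₀ (sub_pos.2 h), lineSlope]

lemma le_lineSlope_iff (h : a.1 < b.1) :
    lineSlope p q ≤ lineSlope a b ↔ lineOffset p q a ≤ lineOffset p q b := by
  rw [← sub_nonneg (b := lineOffset p q a), lineOffset_sub_lineOffset, sub_nonneg,
    ← le_div_iff₀ (sub_pos.2 h)]
  rfl

lemma InGeneralPosition.lineSlope_ne {E : Set Pt} (hE : InGeneralPosition E) (ha : a ∈ E)
    (hv : v ∈ E) (hb : b ∈ E) (hav : a.1 < v.1) (hvb : v.1 < b.1) :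
    lineSlope a v ≠ lineSlope v b := by
  have hne : ∀ {p q : Pt}, p.1 < q.1 → p ≠ q := fun h heq => h.ne (congrArg Prod.fst heq)
  intro heq
  refine hE.snd_ne_lineThrough a ha v hv b hb (hne hav) (hne (hav.trans hvb)) (hne hvb) ?_
  rw [lineThrough_apply_right hav.ne, heq, ← lineThrough_apply, lineThrough_right hvb.ne]

lemma exists_consecutiveIn_left (hA : A.Finite) (hp : p ∈ A) (hv : v ∈ A) (h : p.1 < v.1) :
    ∃ a, ConsecutiveIn FstLT A a v ∧ p.1 ≤ a.1 := by
  obtain ⟨a, ⟨ha, hav⟩, hmax⟩ :=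
    (hA.inter_of_left {a | a.1 < v.1}).exists_maximalFor Prod.fst _ ⟨p, hp, h⟩
  refine ⟨a, ⟨ha, hv, hav, fun u hu hau huv => ?_⟩, ?_⟩
  · exact (hmax ⟨hu, huv⟩ hau.le).not_gt hau
  · exact (le_total p.1 a.1).elim id fun hap => hmax ⟨hp, h⟩ hap

lemma exists_consecutiveIn_right (hA : A.Finite) (hq : q ∈ A) (hv : v ∈ A) (h : v.1 < q.1) :
    ∃ b, ConsecutiveIn FstLT A v b ∧ b.1 ≤ q.1 := by
  obtain ⟨b, ⟨hb, hvb⟩, hmin⟩ :=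
    (hA.inter_of_left {b | v.1 < b.1}).exists_minimalFor Prod.fst _ ⟨q, hq, h⟩
  refine ⟨b, ⟨hv, hb, hvb, fun u hu hvu hub => ?_⟩, ?_⟩
  · exact (hmin ⟨hu, hvu⟩ hub.le).not_gt hub
  · exact (le_total b.1 q.1).elim id fun hqb => hmin ⟨hq, h⟩ hqb

lemma weaklyBelow_of_consecutiveIn (hA : InjOn Prod.fst A) (h : ConsecutiveIn FstLT A p q)
    (h' : ConsecutiveIn FstLT A r s) (hps : p ≠ s) (hqr : q ≠ r) (hpr : p ≠ r) :
    WeaklyBelow p q r s := by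
  intro x hpx hxq hrx hxs
  have hne : ∀ {u v}, u ∈ A → v ∈ A → u ≠ v → u.1 ≠ v.1 := fun hu hv huv he => huv (hA hu hv he)
  rcases lt_or_gt_of_ne (hne h.left_mem h'.left_mem hpr) with hlt | hlt
  · exact absurd ((hrx.trans hxq).lt_of_ne (hne h.right_mem h'.left_mem hqr).symm)
      (h.not_between r h'.left_mem hlt)
  · exact absurd ((hpx.trans hxs).lt_of_ne (hne h.left_mem h'.right_mem hps))
      (h'.not_between p h.left_mem hlt)

end Lines

section Visibility

variable {α : Type*}

/-- The endpoints of the segments from `L i` to `R i` for `i ∈ K`. -/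
def endpoints (K : Finset α) (L R : α → Pt) : Set Pt := {p | ∃ i ∈ K, p = L i ∨ p = R i}

/-- The endpoints which are visible from vertically below (for `σ = 1`) or from vertically above
(for `σ = -1`): no segment crosses the vertical ray from the endpoint in that direction. -/
def visible (K : Finset α) (L R : α → Pt) (σ : ℝ) : Set Pt :=
  {v | v ∈ endpoints K L R ∧
    ∀ j ∈ K, (L j).1 ≤ v.1 → v.1 ≤ (R j).1 → σ * v.2 ≤ σ * lineThrough (L j) (R j) v.1}

/-- The endpoints visible from both sides at which the path through all endpoints visible from
below turns left. These are assigned to the lower chain of the polygon. -/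
def lowerTurns (K : Finset α) (L R : α → Pt) : Set Pt :=
  {v | v ∈ visible K L R (-1) ∧ v ∈ visible K L R 1 ∧
    ∃ a b, ConsecutiveIn FstLT (visible K L R 1) a v ∧
      ConsecutiveIn FstLT (visible K L R 1) v b ∧ lineSlope a v < lineSlope v b}

/-- The vertices of the upper chain: the endpoints visible from above which are not assigned to
the lower chain. -/
def upperVertices (K : Finset α) (L R : α → Pt) : Set Pt := visible K L R (-1) \ lowerTurns K L R

/-- The vertices of the lower chain: the endpoints visible from below which are not assigned to
the upper chain, and the leftmost and the rightmost endpoint. -/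
def lowerVertices (K : Finset α) (L R : α → Pt) : Set Pt :=
  {v | v ∈ visible K L R 1 ∧ (v ∉ visible K L R (-1) ∨ v ∈ lowerTurns K L R ∨
    (∀ e ∈ endpoints K L R, v.1 ≤ e.1) ∨ ∀ e ∈ endpoints K L R, e.1 ≤ v.1)}

/-- The segments from `L i` to `R i` for `i ∈ K` are directed from left to right, and their
endpoints are in general position. -/
structure OrientedFamily (K : Finset α) (L R : α → Pt) : Prop where
  fst_lt : ∀ i ∈ K, (L i).1 < (R i).1
  inGeneralPosition : InGeneralPosition (endpoints K L R)

variable {K T : Finset α} {L R : α → Pt} {i j : α} {σ : ℝ} {e p q r s : Pt}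

lemma left_mem_endpoints (h : i ∈ K) : L i ∈ endpoints K L R := ⟨i, h, .inl rfl⟩

lemma right_mem_endpoints (h : i ∈ K) : R i ∈ endpoints K L R := ⟨i, h, .inr rfl⟩

lemma finite_endpoints : (endpoints K L R).Finite := by
  apply ((K.finite_toSet.image L).union (K.finite_toSet.image R)).subset
  rintro p ⟨i, hi, rfl | rfl⟩
  exacts [.inl ⟨i, hi, rfl⟩, .inr ⟨i, hi, rfl⟩]

lemma endpoints_mono (h : K ⊆ T) : endpoints K L R ⊆ endpoints T L R :=
  fun _ ⟨i, hi, hp⟩ => ⟨i, h hi, hp⟩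

lemma visible_subset_endpoints : visible K L R σ ⊆ endpoints K L R := fun _ hv => hv.1

lemma upperVertices_subset_endpoints : upperVertices K L R ⊆ endpoints K L R :=
  fun _ hv => hv.1.1

lemma lowerVertices_subset_endpoints : lowerVertices K L R ⊆ endpoints K L R :=
  fun _ hv => hv.1.1

lemma finite_visible : (visible K L R σ).Finite :=
  finite_endpoints.subset visible_subset_endpoints

namespace OrientedFamily

lemma mono (h : OrientedFamily T L R) (hK : K ⊆ T) : OrientedFamily K L R :=
  ⟨fun i hi => h.fst_lt i (hK hi), h.inGeneralPosition.mono (endpoints_mono hK)⟩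

lemma mem_visible_of_le_lineOffset (h : OrientedFamily K L R) (hp : p ∈ visible K L R σ)
    (hq : q ∈ visible K L R σ) (hpq : p.1 < q.1) {v : Pt} (hv : v ∈ endpoints K L R)
    (hpv : p.1 ≤ v.1) (hvq : v.1 ≤ q.1) (hneg : σ * lineOffset p q v < 0)
    (hmin : ∀ u ∈ endpoints K L R, p.1 ≤ u.1 → u.1 ≤ q.1 →
      σ * lineOffset p q v ≤ σ * lineOffset p q u) : v ∈ visible K L R σ := by
  refine ⟨hv, fun j hj hLv hvR => ?_⟩
  have hle : AffineMap.const ℝ ℝ (σ * lineOffset p q v) v.1 ≤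
      (σ • (lineThrough (L j) (R j) - lineThrough p q)) v.1 := by
    apply affineMap_le_of_le_endpoints (max_le hpv hLv) (le_min hvq hvR)
    · rcases le_total (L j).1 p.1 with hle | hle
      · have := hp.2 j hj hle (hpv.trans hvR)
        simp only [max_eq_left hle, AffineMap.const_apply, AffineMap.coe_smul, AffineMap.coe_sub,
          Pi.smul_apply, Pi.sub_apply, lineThrough_left, smul_eq_mul]
        linarith
      · simpa [max_eq_right hle, lineOffset] using
          hmin _ (left_mem_endpoints hj) hle (hLv.trans hvq)
    · rcases le_total q.1 (R j).1 with hle | hle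
      · have := hq.2 j hj (hLv.trans hvq) hle
        simp only [min_eq_left hle, AffineMap.const_apply, AffineMap.coe_smul, AffineMap.coe_sub,
          Pi.smul_apply, Pi.sub_apply, lineThrough_right hpq.ne, smul_eq_mul]
        linarith
      · simpa [min_eq_right hle, lineOffset, lineThrough_right (h.fst_lt j hj).ne] using
          hmin _ (right_mem_endpoints hj) (hpv.trans hvR) hle
  simp only [AffineMap.const_apply, lineOffset, AffineMap.coe_smul, AffineMap.coe_sub,
    Pi.smul_apply, Pi.sub_apply, smul_eq_mul] at hle
  linarith

/-- Among the endpoints between `p` and `q`, one farthest from the line through `p` and `q` on the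
side facing the viewer is visible. -/
lemma exists_visible_between (h : OrientedFamily K L R) (hp : p ∈ visible K L R σ)
    (hq : q ∈ visible K L R σ) (hpq : p.1 < q.1) (he : e ∈ endpoints K L R) (hpe : p.1 ≤ e.1)
    (heq : e.1 ≤ q.1) (hneg : σ * lineOffset p q e < 0) :
    ∃ v ∈ visible K L R σ, p.1 < v.1 ∧ v.1 < q.1 ∧ σ * lineOffset p q v < 0 ∧
      ∀ u ∈ endpoints K L R, p.1 ≤ u.1 → u.1 ≤ q.1 →
        σ * lineOffset p q v ≤ σ * lineOffset p q u := by
  have hfin : {u | u ∈ endpoints K L R ∧ p.1 ≤ u.1 ∧ u.1 ≤ q.1}.Finite :=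
    finite_endpoints.subset fun u hu => hu.1
  obtain ⟨v, ⟨hv, hpv, hvq⟩, hmin⟩ :=
    hfin.exists_minimalFor (fun u => σ * lineOffset p q u) _ ⟨e, he, hpe, heq⟩
  replace hmin : ∀ u ∈ endpoints K L R, p.1 ≤ u.1 → u.1 ≤ q.1 →
      σ * lineOffset p q v ≤ σ * lineOffset p q u := fun u hu hpu huq =>
    (le_total _ _).elim id fun hle => hmin ⟨hu, hpu, huq⟩ hle
  have hv0 := (hmin e he hpe heq).trans_lt hneg
  have hne : ∀ u ∈ endpoints K L R, lineOffset p q u = 0 → u.1 ≠ v.1 := fun u hu hu0 huv => by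
    rw [← h.inGeneralPosition.fst_injOn hu hv huv, hu0, mul_zero] at hv0
    exact hv0.false
  exact ⟨v, h.mem_visible_of_le_lineOffset hp hq hpq hv hpv hvq hv0 hmin,
    hpv.lt_of_ne (hne p hp.1 (lineOffset_left p q)),
    hvq.lt_of_ne (hne q hq.1 (lineOffset_right hpq.ne)).symm, hv0, hmin⟩

lemma lineOffset_nonneg_of_consecutive_visible (h : OrientedFamily K L R)
    (hpq : ConsecutiveIn FstLT (visible K L R 1) p q) (he : e ∈ endpoints K L R)
    (hpe : p.1 ≤ e.1) (heq : e.1 ≤ q.1) : 0 ≤ lineOffset p q e := by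
  by_contra! hneg
  obtain ⟨v, hv, hpv, hvq, -⟩ := h.exists_visible_between hpq.left_mem hpq.right_mem hpq.rel he
    hpe heq (by rwa [one_mul])
  exact hpq.not_between v hv hpv hvq

/-- The lowest endpoint below the edge `p q` would be a vertex of the lower chain. -/
lemma lineOffset_nonneg_of_consecutive_lowerVertices (h : OrientedFamily K L R)
    (hpq : ConsecutiveIn FstLT (lowerVertices K L R) p q) (he : e ∈ endpoints K L R)
    (hpe : p.1 ≤ e.1) (heq : e.1 ≤ q.1) : 0 ≤ lineOffset p q e := by
  by_contra! hneg
  obtain ⟨v, hv, hpv, hvq, -, hmin⟩ := h.exists_visible_between hpq.left_mem.1 hpq.right_mem.1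
    hpq.rel he hpe heq (by rwa [one_mul])
  simp only [one_mul] at hmin
  refine hpq.not_between v ⟨hv, or_iff_not_imp_left.2 fun hup => .inl ?_⟩ hpv hvq
  obtain ⟨a, hav, hpa⟩ := exists_consecutiveIn_left finite_visible hpq.left_mem.1 hv hpv
  obtain ⟨b, hvb, hbq⟩ := exists_consecutiveIn_right finite_visible hpq.right_mem.1 hv hvq
  refine ⟨not_not.1 hup, hv, a, b, hav, hvb, lt_of_le_of_ne ?_ ?_⟩
  · calc lineSlope a v
        ≤ lineSlope p q := (lineSlope_le_lineSlope_iff hav.rel).2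
          (hmin a hav.left_mem.1 hpa (hav.rel.trans hvq).le)
      _ ≤ lineSlope v b := (le_lineSlope_iff hvb.rel).2
          (hmin b hvb.right_mem.1 (hpv.trans hvb.rel).le hbq)
  · exact h.inGeneralPosition.lineSlope_ne hav.left_mem.1 hv.1 hvb.right_mem.1 hav.rel hvb.rel

/-- The highest endpoint above the edge `p q` is not a left turn of the path through the endpoints
visible from below, so that it would be a vertex of the upper chain. -/
lemma lineOffset_nonpos_of_consecutive_upperVertices (h : OrientedFamily K L R)
    (hpq : ConsecutiveIn FstLT (upperVertices K L R) p q) (he : e ∈ endpoints K L R)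
    (hpe : p.1 ≤ e.1) (heq : e.1 ≤ q.1) : lineOffset p q e ≤ 0 := by
  by_contra! hpos
  obtain ⟨v, hv, hpv, hvq, hneg, hmin⟩ := h.exists_visible_between hpq.left_mem.1 hpq.right_mem.1
    hpq.rel he hpe heq (by rwa [neg_one_mul, neg_lt_zero])
  simp only [neg_one_mul, neg_le_neg_iff, neg_lt_zero] at hmin hneg
  refine hpq.not_between v ⟨hv, ?_⟩ hpv hvq
  rintro ⟨-, -, a, b, hav, hvb, hlt⟩
  have hleft : lineSlope p q ≤ lineSlope a v := by
    rcases le_total p.1 a.1 with hpa | hap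
    · exact (le_lineSlope_iff hav.rel).2 (hmin a hav.left_mem.1 hpa (hav.rel.trans hvq).le)
    calc lineSlope p q
        ≤ lineSlope p v := (le_lineSlope_iff hpv).2 (by rw [lineOffset_left]; exact hneg.le)
      _ ≤ lineSlope a v := (lineSlope_le_lineSlope_iff hpv).2 (by
          rw [lineOffset_right hav.rel.ne]
          exact h.lineOffset_nonneg_of_consecutive_visible hav hpq.left_mem.1.1 hap hpv.le)
  have hright : lineSlope v b ≤ lineSlope p q := by
    rcases le_total b.1 q.1 with hbq | hqb
    · exact (lineSlope_le_lineSlope_iff hvb.rel).2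
        (hmin b hvb.right_mem.1 (hpv.trans hvb.rel).le hbq)
    calc lineSlope v b
        ≤ lineSlope v q := (le_lineSlope_iff hvq).2 (by
          rw [lineOffset_left]
          exact h.lineOffset_nonneg_of_consecutive_visible hvb hpq.right_mem.1.1 hvq.le hqb)
      _ ≤ lineSlope p q := (lineSlope_le_lineSlope_iff hvq).2 (by
          rw [lineOffset_right hpq.rel.ne]; exact hneg.le)
  exact (hleft.trans' hright).not_gt hlt

lemma weaklyBelow_lower_upper (h : OrientedFamily K L R)
    (hpq : ConsecutiveIn FstLT (lowerVertices K L R) p q)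
    (hrs : ConsecutiveIn FstLT (upperVertices K L R) r s) : WeaklyBelow p q r s :=
  weaklyBelow_of_endpoints hpq.rel hrs.rel
    (fun h₁ h₂ => sub_nonpos.1 <|
      h.lineOffset_nonpos_of_consecutive_upperVertices hrs hpq.left_mem.1.1 h₁ h₂)
    (fun h₁ h₂ => sub_nonpos.1 <|
      h.lineOffset_nonpos_of_consecutive_upperVertices hrs hpq.right_mem.1.1 h₁ h₂)
    (fun h₁ h₂ => sub_nonneg.1 <|
      h.lineOffset_nonneg_of_consecutive_lowerVertices hpq hrs.left_mem.1.1 h₁ h₂)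
    (fun h₁ h₂ => sub_nonneg.1 <|
      h.lineOffset_nonneg_of_consecutive_lowerVertices hpq hrs.right_mem.1.1 h₁ h₂)

lemma weaklyBelow_lower_segment (h : OrientedFamily K L R)
    (hpq : ConsecutiveIn FstLT (lowerVertices K L R) p q) (hj : j ∈ K) :
    WeaklyBelow p q (L j) (R j) :=
  weaklyBelow_of_endpoints hpq.rel (h.fst_lt j hj)
    (fun h₁ h₂ => by simpa using hpq.left_mem.1.2 j hj h₁ h₂)
    (fun h₁ h₂ => by simpa using hpq.right_mem.1.2 j hj h₁ h₂)
    (fun h₁ h₂ => sub_nonneg.1 <|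
      h.lineOffset_nonneg_of_consecutive_lowerVertices hpq (left_mem_endpoints hj) h₁ h₂)
    (fun h₁ h₂ => sub_nonneg.1 <|
      h.lineOffset_nonneg_of_consecutive_lowerVertices hpq (right_mem_endpoints hj) h₁ h₂)

lemma weaklyBelow_segment_upper (h : OrientedFamily K L R)
    (hpq : ConsecutiveIn FstLT (upperVertices K L R) p q) (hj : j ∈ K) :
    WeaklyBelow (L j) (R j) p q :=
  weaklyBelow_of_endpoints (h.fst_lt j hj) hpq.rel
    (fun h₁ h₂ => sub_nonpos.1 <|
      h.lineOffset_nonpos_of_consecutive_upperVertices hpq (left_mem_endpoints hj) h₁ h₂)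
    (fun h₁ h₂ => sub_nonpos.1 <|
      h.lineOffset_nonpos_of_consecutive_upperVertices hpq (right_mem_endpoints hj) h₁ h₂)
    (fun h₁ h₂ => by simpa using hpq.left_mem.1.2 j hj h₁ h₂)
    (fun h₁ h₂ => by simpa using hpq.right_mem.1.2 j hj h₁ h₂)

end OrientedFamily

end Visibility

/-! ### Columns -/

section Columns

variable {α : Type*}

/-- An oriented family of pairwise disjoint segments. -/
structure DisjointOrientedFamily (K : Finset α) (L R : α → Pt) : Prop
    extends OrientedFamily K L R where
  disjoint : ∀ i ∈ K, ∀ j ∈ K, i ≠ j → Disjoint (Seg (L i) (R i)) (Seg (L j) (R j))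

/-- The segment `i` crosses the vertical line at `κ i`; the segments crossing the same line form a
column. Different columns are separated by vertical lines, and within a column the order of the
left endpoints from left to right is the vertical order of the segments. -/
structure ColumnSystem (T : Finset α) (L R : α → Pt) (κ : α → ℝ) : Prop
    extends DisjointOrientedFamily T L R where
  left_lt : ∀ i ∈ T, (L i).1 < κ i
  lt_right : ∀ i ∈ T, κ i < (R i).1
  right_lt_left : ∀ i ∈ T, ∀ j ∈ T, κ i < κ j → (R i).1 < (L j).1
  height_lt : ∀ i ∈ T, ∀ j ∈ T, κ i = κ j → (L i).1 < (L j).1 →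
    lineThrough (L i) (R i) (κ i) < lineThrough (L j) (R j) (κ i)

/-- `i` and `j` belong to the same column, and `L i` lies to the left of `L j`. -/
structure ColumnLT (T : Finset α) (L : α → Pt) (κ : α → ℝ) (i j : α) : Prop where
  left_mem : i ∈ T
  right_mem : j ∈ T
  column_eq : κ i = κ j
  fst_lt : (L i).1 < (L j).1

/-- No segment of the same column lying below `i` extends further to the right. -/
abbrev ColumnPrefixMax (T : Finset α) (L R : α → Pt) (κ : α → ℝ) : α → Prop :=
  PrefixMax (ColumnLT T L κ) fun i => (R i).1

/-- No segment of the same column lying above `i` extends further to the right. -/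
abbrev ColumnSuffixMax (T : Finset α) (L R : α → Pt) (κ : α → ℝ) : α → Prop :=
  PrefixMax (Function.swap (ColumnLT T L κ)) fun i => (R i).1

/-- `R q` is the parent of `R p` in the Cartesian tree of the column with respect to abscissae. -/
abbrev ColumnParent (T : Finset α) (L R : α → Pt) (κ : α → ℝ) : α → α → α → α → Prop :=
  CartesianParent (ColumnLT T L κ) fun i => (R i).1

/-- One of `R p` and `R q` is the parent of the other in the Cartesian tree of the column. -/
abbrev ColumnAdj (T : Finset α) (L R : α → Pt) (κ : α → ℝ) : α → α → Prop :=
  CartesianAdj (ColumnLT T L κ) fun i => (R i).1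

/-- A subfamily of a column system containing all prefix maxima and suffix maxima. -/
structure CoveringSubsystem (K T : Finset α) (L R : α → Pt) (κ : α → ℝ) : Prop
    extends ColumnSystem T L R κ where
  subset : K ⊆ T
  mem_of_prefixMax : ∀ i ∈ T, ColumnPrefixMax T L R κ i → i ∈ K
  mem_of_suffixMax : ∀ i ∈ T, ColumnSuffixMax T L R κ i → i ∈ K

variable {K T : Finset α} {L R : α → Pt} {κ : α → ℝ} {i j : α}

namespace DisjointOrientedFamily

lemma mono (h : DisjointOrientedFamily T L R) (hK : K ⊆ T) : DisjointOrientedFamily K L R where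
  toOrientedFamily := h.toOrientedFamily.mono hK
  disjoint i hi j hj := h.disjoint i (hK hi) j (hK hj)

lemma left_fst_injOn (h : DisjointOrientedFamily T L R) : InjOn (fun i => (L i).1) T := by
  intro i hi j hj hij
  have hL := h.inGeneralPosition.fst_injOn (left_mem_endpoints hi) (left_mem_endpoints hj) hij
  by_contra hne
  exact disjoint_left.1 (h.disjoint i hi j hj hne) (left_mem_Seg _ _) (hL ▸ left_mem_Seg _ _)

lemma right_fst_injOn (h : DisjointOrientedFamily T L R) : InjOn (fun i => (R i).1) T := by
  intro i hi j hj hij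
  have hR := h.inGeneralPosition.fst_injOn (right_mem_endpoints hi) (right_mem_endpoints hj) hij
  by_contra hne
  exact disjoint_left.1 (h.disjoint i hi j hj hne) (right_mem_Seg _ _) (hR ▸ right_mem_Seg _ _)

lemma left_ne_right (h : DisjointOrientedFamily T L R) (hi : i ∈ T) (hj : j ∈ T) :
    L i ≠ R j := by
  intro hij
  rcases eq_or_ne i j with rfl | hne
  · exact (h.fst_lt i hi).ne (congrArg Prod.fst hij)
  · exact disjoint_left.1 (h.disjoint i hi j hj hne) (left_mem_Seg _ _) (hij ▸ right_mem_Seg _ _)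

lemma isChainUnion_columnLT (h : DisjointOrientedFamily T L R) (κ : α → ℝ) :
    IsChainUnion (ColumnLT T L κ) := by
  have hconn : ∀ {a b}, a ∈ T → b ∈ T → κ a = κ b →
      a = b ∨ ColumnLT T L κ a b ∨ ColumnLT T L κ b a := fun {a b} ha hb hab => by
    rcases lt_trichotomy (L a).1 (L b).1 with hlt | heq | hlt
    exacts [.inr (.inl ⟨ha, hb, hab, hlt⟩), .inl (h.left_fst_injOn ha hb heq),
      .inr (.inr ⟨hb, ha, hab.symm, hlt⟩)]
  exact {
    trans := fun a b c hab hbc => ⟨hab.left_mem, hbc.right_mem,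
      hab.column_eq.trans hbc.column_eq, hab.fst_lt.trans hbc.fst_lt⟩
    irrefl := fun a ha => ha.fst_lt.false
    right_connected := fun a b c hb hc =>
      hconn hb.right_mem hc.right_mem (hb.column_eq.symm.trans hc.column_eq)
    left_connected := fun a b c hb hc =>
      hconn hb.left_mem hc.left_mem (hb.column_eq.trans hc.column_eq.symm)
    finite_right := fun a => T.finite_toSet.subset fun b hb => hb.right_mem
    finite_left := fun a => T.finite_toSet.subset fun b hb => hb.left_mem }

lemma right_fst_ne (h : DisjointOrientedFamily T L R) (a b : α) (hab : ColumnLT T L κ a b) :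
    (R a).1 ≠ (R b).1 := fun heq => by
  have hlt := hab.fst_lt
  rw [h.right_fst_injOn hab.left_mem hab.right_mem heq] at hlt
  exact hlt.false

lemma lineThrough_ne {x : ℝ} (h : DisjointOrientedFamily T L R) (hi : i ∈ T) (hj : j ∈ T)
    (hij : i ≠ j) (hLi : (L i).1 ≤ x) (hRi : x ≤ (R i).1) (hLj : (L j).1 ≤ x)
    (hRj : x ≤ (R j).1) : lineThrough (L i) (R i) x ≠ lineThrough (L j) (R j) x := fun heq => by
  have hmem : (x, lineThrough (L i) (R i) x) ∈ Seg (L i) (R i) :=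
    (mem_Seg_iff_of_fst_lt (h.fst_lt i hi)).2 ⟨hLi, hRi, rfl⟩
  exact disjoint_left.1 (h.disjoint i hi j hj hij) hmem <|
    (mem_Seg_iff_of_fst_lt (h.fst_lt j hj)).2 ⟨hLj, hRj, heq⟩

end DisjointOrientedFamily

namespace ColumnSystem

variable {x : ℝ}

lemma left_lt_right (C : ColumnSystem T L R κ) (hi : i ∈ T) (hj : j ∈ T) (hκ : κ i = κ j) :
    (L i).1 < (R j).1 :=
  (C.left_lt i hi).trans (hκ ▸ C.lt_right j hj)

lemma column_eq (C : ColumnSystem T L R κ) (hi : i ∈ T) (hj : j ∈ T) (hLi : (L i).1 ≤ x)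
    (hRi : x ≤ (R i).1) (hLj : (L j).1 ≤ x) (hRj : x ≤ (R j).1) : κ i = κ j := by
  rcases lt_trichotomy (κ i) (κ j) with h | h | h
  · exact absurd (C.right_lt_left i hi j hj h) (hLj.trans hRi).not_gt
  · exact h
  · exact absurd (C.right_lt_left j hj i hi h) (hLi.trans hRj).not_gt

/-- Otherwise the two segments would cross between the vertical line of the column and `x`. -/
lemma lineThrough_lt (C : ColumnSystem T L R κ) (hi : i ∈ T) (hj : j ∈ T)
    (hL : (L i).1 < (L j).1) (hRi : x ≤ (R i).1) (hLj : (L j).1 ≤ x) (hRj : x ≤ (R j).1) :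
    lineThrough (L i) (R i) x < lineThrough (L j) (R j) x := by
  by_contra! hle
  have hκ := C.column_eq hi hj (hL.le.trans hLj) hRi hLj hRj
  have h₀ := C.height_lt i hi j hj hκ hL
  have hcont : Continuous fun y => lineThrough (L j) (R j) y - lineThrough (L i) (R i) y :=
    (continuous_lineThrough _ _).sub (continuous_lineThrough _ _)
  obtain ⟨y, hy, hy0⟩ := intermediate_value_uIcc (a := κ i) (b := x) hcont.continuousOn
    (mem_uIcc.2 (.inr ⟨sub_nonpos.2 hle, sub_nonneg.2 h₀.le⟩))
  have hLy : (L j).1 ≤ y := (le_min (hκ ▸ (C.left_lt j hj).le) hLj).trans hy.1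
  have hyRi : y ≤ (R i).1 := hy.2.trans (max_le (C.lt_right i hi).le hRi)
  have hyRj : y ≤ (R j).1 := hy.2.trans (max_le (hκ ▸ (C.lt_right j hj).le) hRj)
  have hne : i ≠ j := by rintro rfl; exact hL.false
  exact C.lineThrough_ne hi hj hne (hL.le.trans hLy) hyRi hLy hyRj (sub_eq_zero.1 hy0).symm

lemma lineThrough_le (C : ColumnSystem T L R κ) (hi : i ∈ T) (hj : j ∈ T)
    (hL : (L i).1 ≤ (L j).1) (hRi : x ≤ (R i).1) (hLj : (L j).1 ≤ x) (hRj : x ≤ (R j).1) :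
    lineThrough (L i) (R i) x ≤ lineThrough (L j) (R j) x := by
  rcases hL.eq_or_lt with h | h
  · rw [C.left_fst_injOn hi hj h]
  · exact (C.lineThrough_lt hi hj h hRi hLj hRj).le

lemma lineThrough_right_le (C : ColumnSystem T L R κ) (hi : i ∈ T) (hj : j ∈ T)
    (hL : (L i).1 ≤ (L j).1) (hR : (R j).1 ≤ (R i).1) :
    lineThrough (L i) (R i) (R j).1 ≤ (R j).2 := by
  rw [← lineThrough_right (C.fst_lt j hj).ne]
  exact C.lineThrough_le hi hj hL hR (C.left_lt_right hj hj rfl).le le_rfl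

lemma le_lineThrough_right (C : ColumnSystem T L R κ) (hi : i ∈ T) (hj : j ∈ T)
    (hL : (L j).1 ≤ (L i).1) (hR : (R j).1 ≤ (R i).1) (hκ : κ i = κ j) :
    (R j).2 ≤ lineThrough (L i) (R i) (R j).1 := by
  rw [← lineThrough_right (C.fst_lt j hj).ne]
  exact C.lineThrough_le hj hi hL le_rfl (C.left_lt_right hi hj hκ).le hR

end ColumnSystem

namespace ColumnParent

variable {p q e f : α}

lemma parent_mem (D : ColumnParent T L R κ p q e f) : q ∈ T := by
  rcases D.eq_or_eq with rfl | rfl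
  exacts [D.prev.rel.left_mem, D.next.rel.right_mem]

lemma column_parent (D : ColumnParent T L R κ p q e f) : κ q = κ p := by
  rcases D.eq_or_eq with rfl | rfl
  exacts [D.prev.rel.column_eq, D.next.rel.column_eq.symm]

lemma fst_lt_parent (D : ColumnParent T L R κ p q e f) : (R p).1 < (R q).1 := by
  rcases D.eq_or_eq with rfl | rfl
  exacts [D.prev.lt, D.next.lt]

variable {x : ℝ} {t p' q' e' f' : α} {a b : Pt}

lemma left_prev_lt (C : ColumnSystem T L R κ) (D : ColumnParent T L R κ p q e f) :
    (L e).1 < (R p).1 :=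
  C.left_lt_right D.prev.rel.left_mem D.prev.rel.right_mem D.prev.rel.column_eq

lemma left_parent_lt (C : ColumnSystem T L R κ) (D : ColumnParent T L R κ p q e f) :
    (L q).1 < (R p).1 :=
  C.left_lt_right D.parent_mem D.next.rel.left_mem D.column_parent

lemma left_le_or_left_ge (C : ColumnSystem T L R κ) (D : ColumnParent T L R κ p q e f)
    (ht : t ∈ T) (hκ : κ t = κ p) (hR : (R p).1 < (R t).1) :
    (L t).1 ≤ (L e).1 ∨ (L f).1 ≤ (L t).1 := by
  have hp := D.next.rel.left_mem
  rcases lt_trichotomy (L t).1 (L p).1 with h | h | h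
  · refine .inl (not_lt.1 fun he => hR.not_gt (D.prev.lt_of_between t ⟨ht, hp, hκ, h⟩ ?_))
    exact ⟨D.prev.rel.left_mem, ht, D.prev.rel.column_eq.trans hκ.symm, he⟩
  · exact absurd (C.left_fst_injOn ht hp h ▸ hR) (lt_irrefl _)
  · refine .inr (not_lt.1 fun hf => hR.not_gt (D.next.lt_of_between t ⟨hp, ht, hκ.symm, h⟩ ?_))
    exact ⟨ht, D.next.rel.right_mem, hκ.trans D.next.rel.column_eq, hf⟩

lemma lineThrough_prev_le (C : ColumnSystem T L R κ) (D : ColumnParent T L R κ p q e f)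
    (hpx : (R p).1 ≤ x) (hxq : x ≤ (R q).1) :
    lineThrough (L e) (R e) x ≤ lineThrough (R p) (R q) x := by
  have he := D.prev.rel.left_mem
  refine affineMap_le_of_le_endpoints hpx hxq ?_ ?_
  · rw [lineThrough_left]
    exact C.lineThrough_right_le he D.prev.rel.right_mem D.prev.rel.fst_lt.le D.prev.lt.le
  · rw [lineThrough_right D.fst_lt_parent.ne]
    refine C.lineThrough_right_le he D.parent_mem ?_ D.le_prev
    rcases D.eq_or_eq with rfl | rfl
    exacts [le_rfl, (D.prev.rel.fst_lt.trans D.next.rel.fst_lt).le]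

lemma le_lineThrough_next (C : ColumnSystem T L R κ) (D : ColumnParent T L R κ p q e f)
    (hpx : (R p).1 ≤ x) (hxq : x ≤ (R q).1) :
    lineThrough (R p) (R q) x ≤ lineThrough (L f) (R f) x := by
  have hf := D.next.rel.right_mem
  refine affineMap_le_of_le_endpoints hpx hxq ?_ ?_
  · rw [lineThrough_left]
    exact C.le_lineThrough_right hf D.next.rel.left_mem D.next.rel.fst_lt.le D.next.lt.le
      D.next.rel.column_eq.symm
  · rw [lineThrough_right D.fst_lt_parent.ne]
    refine C.le_lineThrough_right hf D.parent_mem ?_ D.le_next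
      (D.next.rel.column_eq.symm.trans D.column_parent.symm)
    rcases D.eq_or_eq with rfl | rfl
    exacts [(D.prev.rel.fst_lt.trans D.next.rel.fst_lt).le, le_rfl]

lemma weaklyBelow_segment_or (C : ColumnSystem T L R κ) (D : ColumnParent T L R κ p q e f)
    (ht : t ∈ T) (hne : R t ≠ R p) :
    WeaklyBelow (L t) (R t) (R p) (R q) ∨ WeaklyBelow (R p) (R q) (L t) (R t) := by
  by_cases hx : ∃ x, (L t).1 ≤ x ∧ x ≤ (R t).1 ∧ (R p).1 ≤ x ∧ x ≤ (R q).1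
  swap
  · exact .inl fun x h₁ h₂ h₃ h₄ => absurd ⟨x, h₁, h₂, h₃, h₄⟩ hx
  obtain ⟨x, hLt, hRt, hpx, hxq⟩ := hx
  have hκ : κ t = κ p := (C.column_eq ht D.parent_mem hLt hRt
    ((D.left_parent_lt C).le.trans hpx) hxq).trans D.column_parent
  have hRp : (R p).1 ≠ (R t).1 := fun h => hne <|
    congrArg R (C.right_fst_injOn ht D.next.rel.left_mem h.symm)
  rcases D.left_le_or_left_ge C ht hκ ((hpx.trans hRt).lt_of_ne hRp) with h | h
  · refine .inl fun y _ hyt hpy hyq => le_trans ?_ (D.lineThrough_prev_le C hpy hyq)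
    exact C.lineThrough_le ht D.prev.rel.left_mem h hyt ((D.left_prev_lt C).le.trans hpy)
      (hyq.trans D.le_prev)
  · refine .inr fun y hpy hyq hty hyt => (D.le_lineThrough_next C hpy hyq).trans ?_
    exact C.lineThrough_le D.next.rel.right_mem ht h (hyq.trans D.le_next) hty hyt

lemma weaklyBelow_of_lower (C : CoveringSubsystem K T L R κ) (D : ColumnParent T L R κ p q e f)
    (hab : ConsecutiveIn FstLT (lowerVertices K L R) a b) : WeaklyBelow a b (R p) (R q) := by
  intro x hax hxb hpx hxq
  obtain ⟨u, hu, hRu, hmax⟩ :=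
    exists_prefixMax_ge (C.isChainUnion_columnLT κ) (fun i => (R i).1) e
  have hLe := (D.left_prev_lt C.toColumnSystem).le.trans hpx
  have hxu := (hxq.trans D.le_prev).trans hRu
  have huT : u ∈ T := hu.elim (· ▸ D.prev.rel.left_mem) (·.left_mem)
  have hLu : (L u).1 ≤ (L e).1 := hu.elim (fun h => h ▸ le_rfl) (·.fst_lt.le)
  calc lineThrough a b x ≤ lineThrough (L u) (R u) x :=
        (C.toOrientedFamily.mono C.subset).weaklyBelow_lower_segment hab
          (C.mem_of_prefixMax u huT hmax) x hax hxb (hLu.trans hLe) hxu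
    _ ≤ lineThrough (L e) (R e) x :=
        C.lineThrough_le huT D.prev.rel.left_mem hLu hxu hLe (hxq.trans D.le_prev)
    _ ≤ lineThrough (R p) (R q) x := D.lineThrough_prev_le C.toColumnSystem hpx hxq

lemma weaklyBelow_of_upper (C : CoveringSubsystem K T L R κ) (D : ColumnParent T L R κ p q e f)
    (hab : ConsecutiveIn FstLT (upperVertices K L R) a b) : WeaklyBelow (R p) (R q) a b := by
  intro x hpx hxq hax hxb
  obtain ⟨u, hu, hRu, hmax⟩ :=
    exists_prefixMax_ge (C.isChainUnion_columnLT κ).swap (fun i => (R i).1) f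
  have hxf := hxq.trans D.le_next
  have huT : u ∈ T := hu.elim (· ▸ D.next.rel.right_mem) (·.right_mem)
  have hκu : κ u = κ f := hu.elim (congrArg κ) fun h => h.column_eq.symm
  have hLf : (L f).1 ≤ (L u).1 := hu.elim (fun h => h ▸ le_rfl) (·.fst_lt.le)
  have hLu : (L u).1 ≤ x := ((C.left_lt_right huT D.next.rel.left_mem
    (hκu.trans D.next.rel.column_eq.symm)).trans_le hpx).le
  calc lineThrough (R p) (R q) x ≤ lineThrough (L f) (R f) x :=
        D.le_lineThrough_next C.toColumnSystem hpx hxq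
    _ ≤ lineThrough (L u) (R u) x :=
        C.lineThrough_le D.next.rel.right_mem huT hLf hxf hLu (hxf.trans hRu)
    _ ≤ lineThrough a b x :=
        (C.toOrientedFamily.mono C.subset).weaklyBelow_segment_upper hab
          (C.mem_of_suffixMax u huT hmax) x hLu (hxf.trans hRu) hax hxb

/-- The next greater elements `e'` and `f'` of `p'` cannot lie on opposite sides of the gap between
`e` and `f`, since they would enclose `p` and, by minimality, `e` or `f`. -/
lemma weaklyBelow_or_of_overlap (C : ColumnSystem T L R κ) (D : ColumnParent T L R κ p q e f)
    (D' : ColumnParent T L R κ p' q' e' f') (hκ : κ p' = κ p) (hp : (R p).1 < (R p').1)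
    (hq : (R p').1 < (R q).1) :
    WeaklyBelow (R p) (R q) (R p') (R q') ∨ WeaklyBelow (R p') (R q') (R p) (R q) := by
  have he' := D.left_le_or_left_ge C D'.prev.rel.left_mem
    (D'.prev.rel.column_eq.trans hκ) (hp.trans D'.prev.lt)
  have hf' := D.left_le_or_left_ge C D'.next.rel.right_mem
    (D'.next.rel.column_eq.symm.trans hκ) (hp.trans D'.next.lt)
  rcases he' with he' | he'
  swap
  · refine .inl fun y hpy hyq hpy' hyq' => (D.le_lineThrough_next C hpy hyq).trans <|
      le_trans ?_ (D'.lineThrough_prev_le C hpy' hyq')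
    exact C.lineThrough_le D.next.rel.right_mem D'.prev.rel.left_mem he' (hyq.trans D.le_next)
      ((D'.left_prev_lt C).le.trans hpy') (hyq'.trans D'.le_prev)
  rcases hf' with hf' | hf'
  · refine .inr fun y hpy' hyq' hpy hyq => (D'.le_lineThrough_next C hpy' hyq').trans <|
      le_trans ?_ (D.lineThrough_prev_le C hpy hyq)
    exact C.lineThrough_le D'.next.rel.right_mem D.prev.rel.left_mem hf' (hyq'.trans D'.le_next)
      ((D.left_prev_lt C).le.trans hpy) (hyq.trans D.le_prev)
  have he := D'.left_le_or_left_ge C D.prev.rel.left_mem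
    (D.prev.rel.column_eq.trans hκ.symm) (hq.trans_le D.le_prev)
  have hf := D'.left_le_or_left_ge C D.next.rel.right_mem
    (D.next.rel.column_eq.symm.trans hκ.symm) (hq.trans_le D.le_next)
  have hp' := D.left_le_or_left_ge C D'.next.rel.left_mem hκ hp
  have := D.prev.rel.fst_lt
  have := D.next.rel.fst_lt
  have := D'.prev.rel.fst_lt
  have := D'.next.rel.fst_lt
  exfalso
  rcases he with he | he <;> rcases hf with hf | hf <;> rcases hp' with hp' | hp' <;> linarith

lemma weaklyBelow_or_of_fst_lt (C : ColumnSystem T L R κ) (D : ColumnParent T L R κ p q e f)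
    (D' : ColumnParent T L R κ p' q' e' f') (hp : (R p).1 < (R p').1) :
    WeaklyBelow (R p) (R q) (R p') (R q') ∨ WeaklyBelow (R p') (R q') (R p) (R q) := by
  rcases le_or_gt (R q).1 (R p').1 with hq | hq
  · refine .inl fun x _ hxq hpx' _ => ?_
    obtain rfl : x = (R q).1 := hxq.antisymm (hq.trans hpx')
    have hqp : (R q).1 = (R p').1 := hq.antisymm hpx'
    rw [lineThrough_right D.fst_lt_parent.ne, hqp, lineThrough_left,
      C.right_fst_injOn D.parent_mem D'.next.rel.left_mem hqp]
  · refine D.weaklyBelow_or_of_overlap C D' ?_ hp hq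
    rw [← D.column_parent]
    exact C.column_eq D'.next.rel.left_mem D.parent_mem
      (C.fst_lt p' D'.next.rel.left_mem).le le_rfl ((D.left_parent_lt C).trans hp).le hq.le

lemma weaklyBelow_or (C : ColumnSystem T L R κ) (D : ColumnParent T L R κ p q e f)
    (D' : ColumnParent T L R κ p' q' e' f') (hne : R p ≠ R p') :
    WeaklyBelow (R p) (R q) (R p') (R q') ∨ WeaklyBelow (R p') (R q') (R p) (R q) := by
  rcases lt_trichotomy (R p).1 (R p').1 with h | h | h
  · exact D.weaklyBelow_or_of_fst_lt C D' h
  · exact absurd (congrArg R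
      (C.right_fst_injOn D.next.rel.left_mem D'.next.rel.left_mem h)) hne
  · exact (D'.weaklyBelow_or_of_fst_lt C D h).symm

end ColumnParent

/-- The edges, directed from left to right, from which the polygon is assembled: the edges of the
two chains, the segments, and the edges of the Cartesian trees of the columns. -/
inductive CandidateEdge (K T : Finset α) (L R : α → Pt) (κ : α → ℝ) : Pt → Pt → Prop
  | lower {p q : Pt} : ConsecutiveIn FstLT (lowerVertices K L R) p q →
      CandidateEdge K T L R κ p q
  | upper {p q : Pt} : ConsecutiveIn FstLT (upperVertices K L R) p q →
      CandidateEdge K T L R κ p q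
  | segment {j : α} : j ∈ K → CandidateEdge K T L R κ (L j) (R j)
  | parent {p q e f : α} : p ∈ K → q ∈ K → ColumnParent T L R κ p q e f →
      CandidateEdge K T L R κ (R p) (R q)

namespace CandidateEdge

variable {p q r s : Pt}

lemma left_mem (h : CandidateEdge K T L R κ p q) : p ∈ endpoints K L R := by
  rcases h with h | h | h | ⟨h, -, -⟩
  exacts [h.left_mem.1.1, h.left_mem.1.1, left_mem_endpoints h, right_mem_endpoints h]

lemma right_mem (h : CandidateEdge K T L R κ p q) : q ∈ endpoints K L R := by
  rcases h with h | h | h | ⟨-, h, -⟩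
  exacts [h.right_mem.1.1, h.right_mem.1.1, right_mem_endpoints h, right_mem_endpoints h]

lemma fst_lt (C : CoveringSubsystem K T L R κ) (h : CandidateEdge K T L R κ p q) :
    p.1 < q.1 := by
  rcases h with h | h | h | ⟨-, -, D⟩
  exacts [h.rel, h.rel, C.fst_lt _ (C.subset h), D.fst_lt_parent]

lemma disjoint (C : CoveringSubsystem K T L R κ) (h : CandidateEdge K T L R κ p q)
    (h' : CandidateEdge K T L R κ r s) (hpr : p ≠ r) (hps : p ≠ s) (hqr : q ≠ r) (hqs : q ≠ s) :
    Disjoint (Seg p q) (Seg r s) := by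
  have hK := C.toOrientedFamily.mono C.subset
  have hE := hK.inGeneralPosition
  have of_below (hB : WeaklyBelow p q r s) : Disjoint (Seg p q) (Seg r s) :=
    hE.disjoint_of_weaklyBelow h.left_mem h.right_mem h'.left_mem h'.right_mem (h.fst_lt C)
      (h'.fst_lt C) hpr hps hqr hqs hB
  have of_above (hB : WeaklyBelow r s p q) : Disjoint (Seg p q) (Seg r s) :=
    (hE.disjoint_of_weaklyBelow h'.left_mem h'.right_mem h.left_mem h.right_mem (h'.fst_lt C)
      (h.fst_lt C) hpr.symm hqr.symm hps.symm hqs.symm hB).symm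
  have hlower := hE.fst_injOn.mono (lowerVertices_subset_endpoints (K := K) (L := L) (R := R))
  have hupper := hE.fst_injOn.mono (upperVertices_subset_endpoints (K := K) (L := L) (R := R))
  cases h with
  | lower h => cases h' with
    | lower h' => exact of_below (weaklyBelow_of_consecutiveIn hlower h h' hps hqr hpr)
    | upper h' => exact of_below (hK.weaklyBelow_lower_upper h h')
    | segment hj => exact of_below (hK.weaklyBelow_lower_segment h hj)
    | parent _ _ D => exact of_below (D.weaklyBelow_of_lower C h)
  | upper h => cases h' with
    | lower h' => exact of_above (hK.weaklyBelow_lower_upper h' h)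
    | upper h' => exact of_below (weaklyBelow_of_consecutiveIn hupper h h' hps hqr hpr)
    | segment hj => exact of_above (hK.weaklyBelow_segment_upper h hj)
    | parent _ _ D => exact of_above (D.weaklyBelow_of_upper C h)
  | segment hj => cases h' with
    | lower h' => exact of_above (hK.weaklyBelow_lower_segment h' hj)
    | upper h' => exact of_below (hK.weaklyBelow_segment_upper h' hj)
    | segment hj' => exact C.disjoint _ (C.subset hj) _ (C.subset hj') fun h => hpr (h ▸ rfl)
    | parent _ _ D =>
      exact (D.weaklyBelow_segment_or C.toColumnSystem (C.subset hj) hqr).elim of_below of_above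
  | parent _ _ D => cases h' with
    | lower h' => exact of_above (D.weaklyBelow_of_lower C h')
    | upper h' => exact of_below (D.weaklyBelow_of_upper C h')
    | segment hj =>
      exact (D.weaklyBelow_segment_or C.toColumnSystem (C.subset hj) hps.symm).elim of_above
        of_below
    | parent _ _ D' => exact (D.weaklyBelow_or C.toColumnSystem D' hpr).elim of_below of_above

lemma disjoint_of_symmGen (C : CoveringSubsystem K T L R κ)
    (h : Relation.SymmGen (CandidateEdge K T L R κ) p q)
    (h' : Relation.SymmGen (CandidateEdge K T L R κ) r s) (hpr : p ≠ r) (hps : p ≠ s)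
    (hqr : q ≠ r) (hqs : q ≠ s) : Disjoint (Seg p q) (Seg r s) := by
  rcases h with h | h <;> rcases h' with h' | h'
  · exact h.disjoint C h' hpr hps hqr hqs
  · exact Seg_comm r s ▸ h.disjoint C h' hps hpr hqs hqr
  · exact Seg_comm p q ▸ h.disjoint C h' hqr hqs hpr hps
  · exact Seg_comm p q ▸ Seg_comm r s ▸ h.disjoint C h' hqs hqr hps hpr

end CandidateEdge

end Columns

/-! ### Dents -/

section Dents

variable {α : Type*} {K T : Finset α} {L R : α → Pt} {κ : α → ℝ} {a b c i : α} {p q v : Pt}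

namespace CoveringSubsystem

lemma restrict (C : CoveringSubsystem K T L R κ) : DisjointOrientedFamily K L R :=
  C.toDisjointOrientedFamily.mono C.subset

lemma left_mem_visible (C : CoveringSubsystem K T L R κ) (hi : i ∈ K) :
    L i ∈ visible K L R (-1) := by
  refine ⟨left_mem_endpoints hi, fun j hj hLj hRj => ?_⟩
  have hle := C.lineThrough_le (C.subset hj) (C.subset hi) hLj hRj le_rfl
    (C.fst_lt i (C.subset hi)).le
  rw [lineThrough_left] at hle
  linarith

lemma right_mem_visible_of_prefixMax (C : CoveringSubsystem K T L R κ) (hi : i ∈ K)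
    (hmax : ColumnPrefixMax T L R κ i) : R i ∈ visible K L R 1 := by
  refine ⟨right_mem_endpoints hi, fun j hj hLj hRj => ?_⟩
  have hiT := C.subset hi
  have hjT := C.subset hj
  have hκ := C.column_eq hjT hiT hLj hRj (C.fst_lt i hiT).le le_rfl
  rw [one_mul, one_mul]
  refine C.le_lineThrough_right hjT hiT (not_lt.1 fun hL => ?_) hRj hκ
  have hji := C.right_fst_injOn hjT hiT ((hmax j ⟨hjT, hiT, hκ, hL⟩).antisymm hRj)
  exact hL.ne (hji ▸ rfl)

lemma right_mem_visible_of_suffixMax (C : CoveringSubsystem K T L R κ) (hi : i ∈ K)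
    (hmax : ColumnSuffixMax T L R κ i) : R i ∈ visible K L R (-1) := by
  refine ⟨right_mem_endpoints hi, fun j hj hLj hRj => ?_⟩
  have hiT := C.subset hi
  have hjT := C.subset hj
  have hκ := C.column_eq hjT hiT hLj hRj (C.fst_lt i hiT).le le_rfl
  rw [neg_one_mul, neg_one_mul, neg_le_neg_iff]
  refine C.lineThrough_right_le hjT hiT (not_lt.1 fun hL => ?_) hRj
  have hji := C.right_fst_injOn hjT hiT ((hmax j ⟨hiT, hjT, hκ.symm, hL⟩).antisymm hRj)
  exact hL.ne (hji ▸ rfl)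

lemma exists_mem_columnLT_left (C : CoveringSubsystem K T L R κ)
    (hmax : ¬ ColumnPrefixMax T L R κ c) :
    ∃ u ∈ K, ColumnLT T L κ u c ∧ (R c).1 ≤ (R u).1 := by
  obtain ⟨u, rfl | huc, hR, hu⟩ :=
    exists_prefixMax_ge (C.isChainUnion_columnLT κ) (fun i => (R i).1) c
  · exact absurd hu hmax
  · exact ⟨u, C.mem_of_prefixMax u huc.left_mem hu, huc, hR⟩

lemma exists_mem_columnLT_right (C : CoveringSubsystem K T L R κ)
    (hmax : ¬ ColumnSuffixMax T L R κ c) :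
    ∃ u ∈ K, ColumnLT T L κ c u ∧ (R c).1 ≤ (R u).1 := by
  obtain ⟨u, rfl | huc, hR, hu⟩ :=
    exists_prefixMax_ge (C.isChainUnion_columnLT κ).swap (fun i => (R i).1) c
  · exact absurd hu hmax
  · exact ⟨u, C.mem_of_suffixMax u huc.right_mem hu, huc, hR⟩

lemma left_notMem_visible (C : CoveringSubsystem K T L R κ)
    (hmax : ¬ ColumnPrefixMax T L R κ c) : L c ∉ visible K L R 1 := by
  intro hv
  obtain ⟨u, hu, huc, hR⟩ := C.exists_mem_columnLT_left hmax
  have hLu := (C.fst_lt c huc.right_mem).le.trans hR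
  have hlt := C.lineThrough_lt huc.left_mem huc.right_mem huc.fst_lt hLu le_rfl
    (C.fst_lt c huc.right_mem).le
  rw [lineThrough_left] at hlt
  linarith [hv.2 u hu huc.fst_lt.le hLu]

lemma right_notMem_visible_of_not_prefixMax (C : CoveringSubsystem K T L R κ)
    (hmax : ¬ ColumnPrefixMax T L R κ c) : R c ∉ visible K L R 1 := by
  intro hv
  obtain ⟨u, hu, huc, hR⟩ := C.exists_mem_columnLT_left hmax
  have hc := C.fst_lt c huc.right_mem
  have hlt := C.lineThrough_lt huc.left_mem huc.right_mem huc.fst_lt hR hc.le le_rfl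
  rw [lineThrough_right hc.ne] at hlt
  linarith [hv.2 u hu (huc.fst_lt.trans hc).le hR]

lemma right_notMem_visible_of_not_suffixMax (C : CoveringSubsystem K T L R κ)
    (hmax : ¬ ColumnSuffixMax T L R κ c) : R c ∉ visible K L R (-1) := by
  intro hv
  obtain ⟨u, hu, hcu, hR⟩ := C.exists_mem_columnLT_right hmax
  have hc := C.fst_lt c hcu.left_mem
  have hLu := (C.left_lt_right hcu.right_mem hcu.left_mem hcu.column_eq.symm).le
  have hlt := C.lineThrough_lt hcu.left_mem hcu.right_mem hcu.fst_lt le_rfl hLu hR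
  rw [lineThrough_right hc.ne] at hlt
  linarith [hv.2 u hu hLu hR]

end CoveringSubsystem

/-- The segments of `K` whose right endpoints are hidden from both sides; these endpoints are the
vertices of the dents. -/
structure IsInner (K T : Finset α) (L R : α → Pt) (κ : α → ℝ) (c : α) : Prop where
  mem : c ∈ K
  not_prefixMax : ¬ ColumnPrefixMax T L R κ c
  not_suffixMax : ¬ ColumnSuffixMax T L R κ c

namespace IsInner

lemma left_mem_upperVertices (C : CoveringSubsystem K T L R κ) (hc : IsInner K T L R κ c) :
    L c ∈ upperVertices K L R :=
  ⟨C.left_mem_visible hc.mem, fun h => C.left_notMem_visible hc.not_prefixMax h.2.1⟩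

lemma right_notMem_upperVertices (C : CoveringSubsystem K T L R κ) (hc : IsInner K T L R κ c) :
    R c ∉ upperVertices K L R :=
  fun h => C.right_notMem_visible_of_not_suffixMax hc.not_suffixMax h.1

lemma right_notMem_lowerVertices (C : CoveringSubsystem K T L R κ) (hc : IsInner K T L R κ c) :
    R c ∉ lowerVertices K L R :=
  fun h => C.right_notMem_visible_of_not_prefixMax hc.not_prefixMax h.1

/-- No right endpoint lies between the left endpoints of two segments of the same column. -/
lemma eq_left_of_consecutiveIn (C : CoveringSubsystem K T L R κ) (ha : IsInner K T L R κ a)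
    (hab : ConsecutiveIn (ColumnLT T L κ) K a b)
    (hq : ConsecutiveIn FstLT (upperVertices K L R) q (L b)) : q = L a := by
  have hLb : (L b).1 < κ a := hab.rel.column_eq ▸ C.left_lt b hab.rel.right_mem
  have hRa := C.lt_right a hab.rel.left_mem
  have haU := ha.left_mem_upperVertices C
  have haq : (L a).1 ≤ q.1 := not_lt.1 fun h => hq.not_between _ haU h hab.rel.fst_lt
  by_contra hne
  have haq : (L a).1 < q.1 := haq.lt_of_ne fun h => hne <|
    C.restrict.inGeneralPosition.fst_injOn hq.left_mem.1.1 haU.1.1 h.symm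
  obtain ⟨t, ht, rfl | rfl⟩ := hq.left_mem.1.1
  · have hκ := C.column_eq hab.rel.left_mem (C.subset ht) haq.le (hq.rel.trans (hLb.trans hRa)).le
      le_rfl (C.fst_lt t (C.subset ht)).le
    exact hab.not_between t ht ⟨hab.rel.left_mem, C.subset ht, hκ, haq⟩
      ⟨C.subset ht, hab.rel.right_mem, hκ.symm.trans hab.rel.column_eq, hq.rel⟩
  · have hκ := C.column_eq hab.rel.left_mem (C.subset ht) haq.le (hq.rel.trans (hLb.trans hRa)).le
      (C.fst_lt t (C.subset ht)).le le_rfl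
    exact (hq.rel.trans (hκ ▸ hLb)).not_gt (C.lt_right t (C.subset ht))

end IsInner

/-- To each segment `b` of `K` a list `D b` is assigned, which is empty or starts with `b` and ends
with the preceding segment `a` of the column. A nonempty list describes a dent: between `L b` and
`L a` the polygon visits the points `R c` for `c ∈ D b`, moving along edges of the Cartesian tree
of the column. The dents are disjoint and cover all inner segments. -/
structure DentSystem (K T : Finset α) (L R : α → Pt) (κ : α → ℝ) (D : α → List α) : Prop
    extends CoveringSubsystem K T L R κ where
  isChain : ∀ b ∈ K, (D b).IsChain (ColumnAdj T L R κ)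
  nodup : ∀ b ∈ K, (D b).Nodup
  isInner : ∀ b ∈ K, ∀ c ∈ D b, IsInner K T L R κ c
  column_eq_of_mem : ∀ b ∈ K, ∀ c ∈ D b, κ c = κ b
  eq_of_mem : ∀ b ∈ K, ∀ b' ∈ K, ∀ c, c ∈ D b → c ∈ D b' → b = b'
  exists_ends : ∀ b ∈ K, D b ≠ [] → ∃ a, ConsecutiveIn (ColumnLT T L κ) K a b ∧
    (D b).head? = some b ∧ (D b).getLast? = some a
  exists_mem : ∀ c, IsInner K T L R κ c → ∃ b ∈ K, c ∈ D b

open Classical in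
/-- The points inserted into the upper chain after its vertex `v`. -/
def dentAt (K : Finset α) (L R : α → Pt) (D : α → List α) (v : Pt) : List Pt :=
  if h : ∃ b ∈ K, v = L b then (D h.choose).map R else []

/-- The list `l` of vertices of the upper chain with all dents inserted. -/
def dentedChain (K : Finset α) (L R : α → Pt) (D : α → List α) (l : List Pt) : List Pt :=
  l.flatMap fun v => v :: dentAt K L R D v

/-- The edges of the dented upper chain, directed from right to left. -/
inductive UpperBoundaryEdge (K T : Finset α) (L R : α → Pt) (κ : α → ℝ) (D : α → List α) :
    Pt → Pt → Prop
  | upper {p q : Pt} : ConsecutiveIn FstLT (upperVertices K L R) q p →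
      UpperBoundaryEdge K T L R κ D p q
  | enter {b : α} : b ∈ K → b ∈ D b → UpperBoundaryEdge K T L R κ D (L b) (R b)
  | inside {b c d : α} : b ∈ K → c ∈ D b → d ∈ D b → ColumnAdj T L R κ c d →
      UpperBoundaryEdge K T L R κ D (R c) (R d)
  | leave {a b : α} : b ∈ K → b ∈ D b → a ∈ D b → ConsecutiveIn (ColumnLT T L κ) K a b →
      UpperBoundaryEdge K T L R κ D (R a) (L a)

variable {D : α → List α} {l : List Pt}

lemma isChain_flatMap_cons {β : Type*} {Q B : β → β → Prop} {f : β → List β}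
    (hBQ : ∀ p q, B p q → ∀ z, (p :: f p).getLast? = some z → Q z q)
    (hf : ∀ p, (p :: f p).IsChain Q) {l : List β} (hl : l.IsChain B) :
    (l.flatMap fun v => v :: f v).IsChain Q := by
  induction hl with
  | nil => exact .nil
  | singleton p => simpa using hf p
  | @cons_cons p q l hpq hl ih =>
    rw [List.flatMap_cons, List.isChain_append]
    refine ⟨hf p, ih, fun z hz y hy => ?_⟩
    obtain rfl : q = y := by simpa using hy
    exact hBQ p q hpq z hz

lemma mem_dentAt (hv : v ∈ dentAt K L R D p) : ∃ b ∈ K, p = L b ∧ ∃ c ∈ D b, v = R c := by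
  unfold dentAt at hv
  split at hv
  case isTrue h =>
    obtain ⟨c, hc, rfl⟩ := List.mem_map.1 hv
    exact ⟨_, h.choose_spec.1, h.choose_spec.2, c, hc, rfl⟩
  case isFalse => exact absurd hv List.not_mem_nil

namespace DentSystem

lemma dentAt_left (N : DentSystem K T L R κ D) (hb : b ∈ K) :
    dentAt K L R D (L b) = (D b).map R := by
  have h : ∃ b' ∈ K, L b = L b' := ⟨b, hb, rfl⟩
  have heq := N.restrict.left_fst_injOn hb h.choose_spec.1 (congrArg Prod.fst h.choose_spec.2)
  rw [dentAt, dif_pos h, ← heq]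

lemma dentAt_eq_nil_or (N : DentSystem K T L R κ D) (v : Pt) :
    dentAt K L R D v = [] ∨ ∃ b ∈ K, v = L b ∧ D b ≠ [] ∧ dentAt K L R D v = (D b).map R := by
  by_cases h : ∃ b ∈ K, v = L b
  · obtain ⟨b, hb, rfl⟩ := h
    rw [N.dentAt_left hb, List.map_eq_nil_iff]
    exact or_iff_not_imp_left.2 fun hne => ⟨b, hb, rfl, hne, rfl⟩
  · exact .inl (dif_neg h)

lemma mem_dentAt_left (N : DentSystem K T L R κ D) (hb : b ∈ K) (hc : c ∈ D b) :
    R c ∈ dentAt K L R D (L b) :=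
  N.dentAt_left hb ▸ List.mem_map_of_mem hc

lemma left_mem_upperVertices (N : DentSystem K T L R κ D) (hb : b ∈ K) (hne : D b ≠ []) :
    L b ∈ upperVertices K L R := by
  obtain ⟨a, -, hhead, -⟩ := N.exists_ends b hb hne
  exact (N.isInner b hb b (List.mem_of_head? hhead)).left_mem_upperVertices
    N.toCoveringSubsystem

lemma isChain_dent (N : DentSystem K T L R κ D) (p : Pt) :
    (p :: dentAt K L R D p).IsChain (UpperBoundaryEdge K T L R κ D) := by
  obtain h | ⟨b, hb, rfl, hne, h⟩ := N.dentAt_eq_nil_or p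
  · rw [h]
    exact .singleton p
  · obtain ⟨a, -, hhead, -⟩ := N.exists_ends b hb hne
    rw [h, List.isChain_cons, List.isChain_map]
    refine ⟨fun y hy => ?_, ?_⟩
    · obtain rfl : R b = y := by simpa [hhead] using hy
      exact .enter hb (List.mem_of_head? hhead)
    · exact (N.isChain b hb).imp_of_mem_imp fun c d hc hd hcd => .inside hb hc hd hcd

lemma isChain_dentedChain (N : DentSystem K T L R κ D)
    (hl : l.IsChain fun p q => ConsecutiveIn FstLT (upperVertices K L R) q p) :
    (dentedChain K L R D l).IsChain (UpperBoundaryEdge K T L R κ D) := by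
  refine isChain_flatMap_cons (fun p q hqp z hz => ?_) N.isChain_dent hl
  obtain h | ⟨b, hb, rfl, hne, h⟩ := N.dentAt_eq_nil_or p
  · obtain rfl : p = z := by simpa [h] using hz
    exact .upper hqp
  · obtain ⟨a, hab, hhead, hlast⟩ := N.exists_ends b hb hne
    have ha := List.mem_of_getLast? hlast
    obtain rfl : R a = z := by simpa [h, List.getLast?_cons, hlast] using hz
    rw [(N.isInner b hb a ha).eq_left_of_consecutiveIn N.toCoveringSubsystem hab hqp]
    exact .leave hb (List.mem_of_head? hhead) ha hab

lemma mem_dentedChain_iff (N : DentSystem K T L R κ D) :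
    v ∈ dentedChain K L R D l ↔ v ∈ l ∨ ∃ b ∈ K, L b ∈ l ∧ ∃ c ∈ D b, v = R c := by
  simp only [dentedChain, List.mem_flatMap, List.mem_cons]
  constructor
  · rintro ⟨u, hu, rfl | hv⟩
    · exact .inl hu
    · obtain ⟨b, hb, rfl, h⟩ := mem_dentAt hv
      exact .inr ⟨b, hb, hu, h⟩
  · rintro (hv | ⟨b, hb, hbl, c, hc, rfl⟩)
    · exact ⟨v, hv, .inl rfl⟩
    · exact ⟨L b, hbl, .inr (N.mem_dentAt_left hb hc)⟩

lemma nodup_dentedChain (N : DentSystem K T L R κ D) (hl : l.Nodup)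
    (hU : ∀ v ∈ l, v ∈ upperVertices K L R) : (dentedChain K L R D l).Nodup := by
  have hinj : ∀ {c d}, c ∈ K → d ∈ K → R c = R d → c = d := fun hc hd h =>
    N.restrict.right_fst_injOn hc hd (congrArg Prod.fst h)
  have hnotMem : ∀ {v w}, v ∈ l → v ∉ dentAt K L R D w := fun hv h => by
    obtain ⟨b, hb, -, c, hc, rfl⟩ := mem_dentAt h
    exact (N.isInner b hb c hc).right_notMem_upperVertices N.toCoveringSubsystem (hU _ hv)
  refine List.nodup_flatMap.2 ⟨fun v hv => List.nodup_cons.2 ⟨hnotMem hv, ?_⟩,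
    hl.imp_of_mem fun {v w} hv hw hne => List.disjoint_left.2 fun x hxv hxw => ?_⟩
  · obtain h | ⟨b, hb, -, -, h⟩ := N.dentAt_eq_nil_or v
    · exact h ▸ List.nodup_nil
    · exact h ▸ (N.nodup b hb).map_on fun c hc d hd =>
        hinj (N.isInner b hb c hc).mem (N.isInner b hb d hd).mem
  · rcases List.mem_cons.1 hxv with rfl | hxv
    · exact (List.mem_cons.1 hxw).elim hne (hnotMem hv)
    · rcases List.mem_cons.1 hxw with rfl | hxw
      · exact hnotMem hw hxv
      obtain ⟨b, hb, rfl, c, hc, rfl⟩ := mem_dentAt hxv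
      obtain ⟨b', hb', rfl, c', hc', hcc'⟩ := mem_dentAt hxw
      obtain rfl := hinj (N.isInner b hb c hc).mem (N.isInner b' hb' c' hc').mem hcc'
      exact hne (congrArg L (N.eq_of_mem b hb b' hb' c hc hc'))

lemma exists_dent_of_notMem (N : DentSystem K T L R κ D) (hv : v ∈ endpoints K L R)
    (hlower : v ∉ lowerVertices K L R) (hupper : v ∉ upperVertices K L R) :
    ∃ b ∈ K, L b ∈ upperVertices K L R ∧ ∃ c ∈ D b, v = R c := by
  have hneg : v ∉ visible K L R (-1) := fun h => by
    by_cases hturn : v ∈ lowerTurns K L R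
    exacts [hlower ⟨hturn.2.1, .inr (.inl hturn)⟩, hupper ⟨h, hturn⟩]
  have hpos : v ∉ visible K L R 1 := fun h => hlower ⟨h, .inl hneg⟩
  obtain ⟨c, hc, rfl | rfl⟩ := hv
  · exact absurd (N.left_mem_visible hc) hneg
  · obtain ⟨b, hb, hcb⟩ := N.exists_mem c ⟨hc,
      fun h => hpos (N.right_mem_visible_of_prefixMax hc h),
      fun h => hneg (N.right_mem_visible_of_suffixMax hc h)⟩
    exact ⟨b, hb, N.left_mem_upperVertices hb (List.ne_nil_of_mem hcb), c, hcb, rfl⟩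

end DentSystem

lemma UpperBoundaryEdge.symmGen_candidateEdge (N : DentSystem K T L R κ D)
    (h : UpperBoundaryEdge K T L R κ D p q) :
    Relation.SymmGen (CandidateEdge K T L R κ) p q := by
  rcases h with h | ⟨hb, -⟩ | ⟨hb, hc, hd, h⟩ | ⟨hb, -, ha, h⟩
  · exact .inr (.upper h)
  · exact .inl (.segment hb)
  · have hcK := (N.isInner _ hb _ hc).mem
    have hdK := (N.isInner _ hb _ hd).mem
    obtain ⟨e, f, hP⟩ | ⟨e, f, hP⟩ := h
    exacts [.inl (.parent hcK hdK hP), .inr (.parent hdK hcK hP)]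
  · exact .inr (.segment h.left_mem)

end Dents

/-! ### The boundary walk -/

section BoundaryWalk

variable {α : Type*} {K T : Finset α} {L R : α → Pt} {κ : α → ℝ} {D : α → List α}
  {m M v : Pt} {lower upper : List Pt}

namespace OrientedFamily

variable {σ : ℝ}

lemma mem_visible_of_extreme (h : OrientedFamily K L R) (hv : v ∈ endpoints K L R)
    (hext : (∀ e ∈ endpoints K L R, v.1 ≤ e.1) ∨ ∀ e ∈ endpoints K L R, e.1 ≤ v.1) :
    v ∈ visible K L R σ := by
  refine ⟨hv, fun j hj hL hR => ?_⟩
  have hinj := h.inGeneralPosition.fst_injOn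
  rcases hext with hext | hext
  · rw [hinj hv (left_mem_endpoints hj) ((hext _ (left_mem_endpoints hj)).antisymm hL),
      lineThrough_left]
  · rw [hinj hv (right_mem_endpoints hj) (hR.antisymm (hext _ (right_mem_endpoints hj))),
      lineThrough_right (h.fst_lt j hj).ne]

lemma mem_lowerVertices_of_extreme (h : OrientedFamily K L R) (hv : v ∈ endpoints K L R)
    (hext : (∀ e ∈ endpoints K L R, v.1 ≤ e.1) ∨ ∀ e ∈ endpoints K L R, e.1 ≤ v.1) :
    v ∈ lowerVertices K L R :=
  ⟨h.mem_visible_of_extreme hv hext, .inr (.inr hext)⟩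

lemma mem_upperVertices_of_extreme (h : OrientedFamily K L R) (hv : v ∈ endpoints K L R)
    (hext : (∀ e ∈ endpoints K L R, v.1 ≤ e.1) ∨ ∀ e ∈ endpoints K L R, e.1 ≤ v.1) :
    v ∈ upperVertices K L R := by
  refine ⟨h.mem_visible_of_extreme hv hext, fun ⟨_, _, a, b, ha, hb, _⟩ => ?_⟩
  exact hext.elim (fun hext => ha.rel.not_ge (hext a ha.left_mem.1))
    fun hext => hb.rel.not_ge (hext b hb.right_mem.1)

end OrientedFamily

lemma extreme_of_mem_lowerVertices_of_mem_upperVertices (hl : v ∈ lowerVertices K L R)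
    (hu : v ∈ upperVertices K L R) :
    (∀ e ∈ endpoints K L R, v.1 ≤ e.1) ∨ ∀ e ∈ endpoints K L R, e.1 ≤ v.1 := by
  rcases hl.2 with h | h | h
  exacts [absurd hu.1 h, absurd h hu.2, h]

/-- The leftmost endpoint `m`, the rightmost endpoint `M`, and the other vertices of the two chains
in the order from left to right. -/
structure ChainLists (K : Finset α) (L R : α → Pt) (m M : Pt) (lower upper : List Pt) :
    Prop where
  left_mem : m ∈ endpoints K L R
  right_mem : M ∈ endpoints K L R
  left_le : ∀ e ∈ endpoints K L R, m.1 ≤ e.1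
  le_right : ∀ e ∈ endpoints K L R, e.1 ≤ M.1
  pairwise_lower : (m :: (lower ++ [M])).Pairwise FstLT
  mem_lower_iff : ∀ v, v ∈ m :: (lower ++ [M]) ↔ v ∈ lowerVertices K L R
  pairwise_upper : (m :: (upper ++ [M])).Pairwise FstLT
  mem_upper_iff : ∀ v, v ∈ m :: (upper ++ [M]) ↔ v ∈ upperVertices K L R

lemma exists_pairwise_fstLT {A : Set Pt} (hfin : A.Finite) (hinj : InjOn Prod.fst A) (hm : m ∈ A)
    (hM : M ∈ A) (hmM : m ≠ M) (hleft : ∀ v ∈ A, m.1 ≤ v.1) (hright : ∀ v ∈ A, v.1 ≤ M.1) :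
    ∃ l, (m :: (l ++ [M])).Pairwise FstLT ∧ ∀ v, v ∈ m :: (l ++ [M]) ↔ v ∈ A := by
  obtain ⟨l, hmem, hl⟩ := exists_list_pairwise (r := FstLT) (fun _ _ _ => lt_trans) hfin.toFinset
    fun a ha b hb hab => lt_or_gt_of_ne fun h =>
      hab (hinj (hfin.mem_toFinset.1 ha) (hfin.mem_toFinset.1 hb) h)
  simp only [hfin.mem_toFinset] at hmem
  obtain ⟨l, rfl⟩ := exists_eq_cons_append_singleton hl ((hmem m).2 hm) ((hmem M).2 hM) hmM
    (fun v hv => (hleft v ((hmem v).1 hv)).not_gt) fun v hv => (hright v ((hmem v).1 hv)).not_gt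
  exact ⟨l, hl, hmem⟩

lemma OrientedFamily.exists_chainLists (h : OrientedFamily K L R) (hK : K.Nonempty) :
    ∃ m M lower upper, ChainLists K L R m M lower upper := by
  obtain ⟨i, hi⟩ := hK
  obtain ⟨m, hm, hleft⟩ := exists_min_image (endpoints K L R) Prod.fst finite_endpoints
    ⟨L i, left_mem_endpoints hi⟩
  obtain ⟨M, hM, hright⟩ := exists_max_image (endpoints K L R) Prod.fst finite_endpoints
    ⟨L i, left_mem_endpoints hi⟩
  have hmM : m ≠ M := fun heq => (h.fst_lt i hi).not_ge <|
    (hright _ (right_mem_endpoints hi)).trans (heq ▸ hleft _ (left_mem_endpoints hi))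
  have hexists : ∀ A ⊆ endpoints K L R, m ∈ A → M ∈ A →
      ∃ l, (m :: (l ++ [M])).Pairwise FstLT ∧ ∀ v, v ∈ m :: (l ++ [M]) ↔ v ∈ A :=
    fun A hA hmA hMA => exists_pairwise_fstLT (finite_endpoints.subset hA)
      (h.inGeneralPosition.fst_injOn.mono hA) hmA hMA hmM (fun v hv => hleft v (hA hv))
      fun v hv => hright v (hA hv)
  obtain ⟨lower, hlower, hlmem⟩ := hexists _ lowerVertices_subset_endpoints
    (h.mem_lowerVertices_of_extreme hm (.inl hleft))
    (h.mem_lowerVertices_of_extreme hM (.inr hright))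
  obtain ⟨upper, hupper, humem⟩ := hexists _ upperVertices_subset_endpoints
    (h.mem_upperVertices_of_extreme hm (.inl hleft))
    (h.mem_upperVertices_of_extreme hM (.inr hright))
  exact ⟨m, M, lower, upper, hm, hM, hleft, hright, hlower, hlmem, hupper, humem⟩

lemma isChain_consecutiveIn_fstLT {A : Set Pt} {l : List Pt} (hl : l.Pairwise FstLT)
    (hmem : ∀ v, v ∈ l ↔ v ∈ A) : l.IsChain (ConsecutiveIn FstLT A) := by
  obtain rfl : {v | v ∈ l} = A := Set.ext hmem
  exact isChain_consecutiveIn (fun _ _ => lt_asymm (α := ℝ)) hl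

lemma nodup_of_pairwise_fstLT {l : List Pt} (hl : l.Pairwise FstLT) : l.Nodup :=
  hl.imp fun h heq => h.ne (congrArg Prod.fst heq)

/-- The dented upper chain from the rightmost to the leftmost endpoint. -/
def upperBoundary (K : Finset α) (L R : α → Pt) (D : α → List α) (m M : Pt) (upper : List Pt) :
    List Pt :=
  dentedChain K L R D (m :: (upper ++ [M])).reverse

/-- The vertices of the polygon in cyclic order, starting after the leftmost endpoint `m`, and
ending with it. -/
def boundaryWalk (K : Finset α) (L R : α → Pt) (D : α → List α) (m M : Pt)
    (lower upper : List Pt) : List Pt :=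
  lower ++ upperBoundary K L R D m M upper

lemma exists_upperBoundary_eq_cons (K : Finset α) (L R : α → Pt) (D : α → List α) (m M : Pt)
    (upper : List Pt) : ∃ l, upperBoundary K L R D m M upper = M :: l := by
  simp [upperBoundary, dentedChain]

namespace ChainLists

lemma isChain_lower (h : ChainLists K L R m M lower upper) :
    (m :: (lower ++ [M])).IsChain (ConsecutiveIn FstLT (lowerVertices K L R)) :=
  isChain_consecutiveIn_fstLT h.pairwise_lower h.mem_lower_iff

lemma isChain_upperBoundary (h : ChainLists K L R m M lower upper)
    (N : DentSystem K T L R κ D) :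
    (upperBoundary K L R D m M upper).IsChain (UpperBoundaryEdge K T L R κ D) :=
  N.isChain_dentedChain <| List.isChain_reverse.2 <|
    isChain_consecutiveIn_fstLT h.pairwise_upper h.mem_upper_iff

lemma mem_upperBoundary_iff (h : ChainLists K L R m M lower upper)
    (N : DentSystem K T L R κ D) : v ∈ upperBoundary K L R D m M upper ↔
      v ∈ upperVertices K L R ∨ ∃ b ∈ K, L b ∈ upperVertices K L R ∧ ∃ c ∈ D b, v = R c := by
  simp only [upperBoundary, N.mem_dentedChain_iff, List.mem_reverse, h.mem_upper_iff]

lemma getLast?_upperBoundary (h : ChainLists K L R m M lower upper)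
    (N : DentSystem K T L R κ D) : (upperBoundary K L R D m M upper).getLast? = some m := by
  obtain hnil | ⟨b, hb, rfl, hne, -⟩ := N.dentAt_eq_nil_or m
  · rw [upperBoundary, dentedChain, List.reverse_cons, List.flatMap_append]
    simp [hnil, List.getLast?_cons]
  · obtain ⟨a, hab, -⟩ := N.exists_ends b hb hne
    exact absurd hab.rel.fst_lt (h.left_le _ (left_mem_endpoints hab.left_mem)).not_gt

lemma getLast?_boundaryWalk (h : ChainLists K L R m M lower upper)
    (N : DentSystem K T L R κ D) : (boundaryWalk K L R D m M lower upper).getLast? = some m := by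
  simp [boundaryWalk, List.getLast?_append, h.getLast?_upperBoundary N]

lemma mem_lower_iff_ne (h : ChainLists K L R m M lower upper) :
    v ∈ lower ↔ v ∈ lowerVertices K L R ∧ v ≠ m ∧ v ≠ M := by
  have hnodup := nodup_of_pairwise_fstLT h.pairwise_lower
  rw [← h.mem_lower_iff]
  simp only [List.nodup_cons, List.nodup_append, List.mem_append, List.mem_cons,
    not_or] at hnodup ⊢
  constructor
  · exact fun hv => ⟨.inr (.inl hv), fun hm => hnodup.1.1 (hm ▸ hv), hnodup.2.2.2 v hv M (.inl rfl)⟩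
  · tauto

lemma notMem_upperBoundary_of_mem_lower (h : ChainLists K L R m M lower upper)
    (N : DentSystem K T L R κ D) (hv : v ∈ lower) : v ∉ upperBoundary K L R D m M upper := by
  obtain ⟨hl, hm, hM⟩ := h.mem_lower_iff_ne.1 hv
  have hinj := N.restrict.inGeneralPosition.fst_injOn
  rw [h.mem_upperBoundary_iff N]
  rintro (hu | ⟨b, hb, -, c, hc, rfl⟩)
  · rcases extreme_of_mem_lowerVertices_of_mem_upperVertices hl hu with hext | hext
    · exact hm (hinj hl.1.1 h.left_mem ((hext _ h.left_mem).antisymm (h.left_le _ hl.1.1)))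
    · exact hM (hinj hl.1.1 h.right_mem ((h.le_right _ hl.1.1).antisymm (hext _ h.right_mem)))
  · exact (N.isInner b hb c hc).right_notMem_lowerVertices N.toCoveringSubsystem hl

lemma nodup_boundaryWalk (h : ChainLists K L R m M lower upper)
    (N : DentSystem K T L R κ D) : (boundaryWalk K L R D m M lower upper).Nodup := by
  have hlower := (List.nodup_cons.1 (nodup_of_pairwise_fstLT h.pairwise_lower)).2
  have hupper := N.nodup_dentedChain
    (List.nodup_reverse.2 (nodup_of_pairwise_fstLT h.pairwise_upper)) fun v hv =>
      (h.mem_upper_iff v).1 (List.mem_reverse.1 hv)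
  exact hlower.of_append_left.append hupper fun _ => h.notMem_upperBoundary_of_mem_lower N

lemma mem_boundaryWalk_iff (h : ChainLists K L R m M lower upper)
    (N : DentSystem K T L R κ D) :
    v ∈ boundaryWalk K L R D m M lower upper ↔ v ∈ endpoints K L R := by
  rw [boundaryWalk, List.mem_append, h.mem_upperBoundary_iff N]
  constructor
  · rintro (hv | hv | ⟨b, hb, -, c, hc, rfl⟩)
    exacts [(h.mem_lower_iff_ne.1 hv).1.1.1, hv.1.1, right_mem_endpoints (N.isInner b hb c hc).mem]
  · intro hv
    by_cases hu : v ∈ upperVertices K L R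
    · exact .inr (.inl hu)
    by_cases hl : v ∈ lowerVertices K L R
    · refine .inl (h.mem_lower_iff_ne.2 ⟨hl, ?_, ?_⟩) <;> rintro rfl <;> apply hu
      exacts [(h.mem_upper_iff v).1 (by simp), (h.mem_upper_iff v).1 (by simp)]
    · exact .inr (.inr (N.exists_dent_of_notMem hv hl hu))

lemma isChain_symmGen_boundaryWalk (h : ChainLists K L R m M lower upper)
    (N : DentSystem K T L R κ D) : (m :: boundaryWalk K L R D m M lower upper).IsChain
      (Relation.SymmGen (CandidateEdge K T L R κ)) := by
  have hupper := (h.isChain_upperBoundary N).imp fun _ _ hpq => hpq.symmGen_candidateEdge N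
  obtain ⟨l, hl⟩ := exists_upperBoundary_eq_cons K L R D m M upper
  rw [boundaryWalk, hl, ← List.cons_append, List.isChain_split, ← hl]
  exact ⟨h.isChain_lower.imp fun _ _ hpq => .inl (.lower hpq), hupper⟩

end ChainLists

end BoundaryWalk

/-! ### The inside test -/

section InsideTest

variable {α : Type*} {K T : Finset α} {L R : α → Pt} {κ : α → ℝ} {D : α → List α}
  {m M a b p q v : Pt} {lower upper : List Pt} {c s : α}

namespace InGeneralPosition

variable {E : Set Pt}

lemma disjoint_openSegment_Seg_left (hE : InGeneralPosition E) (ha : a ∈ E) (hb : b ∈ E)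
    (hq : q ∈ E) (hab : a ≠ b) (haq : a ≠ q) (hbq : b ≠ q) :
    Disjoint (openSegment ℝ a b) (Seg a q) := by
  refine disjoint_left.2 fun w hw hwq => ?_
  have hwa : w ∈ Seg a b ∩ Seg a q := ⟨openSegment_subset_segment ℝ a b hw, hwq⟩
  rw [hE.Seg_inter_Seg_left ha hb hq hab haq hbq, mem_singleton_iff] at hwa
  exact hab (left_mem_openSegment_iff.1 (hwa ▸ hw))

lemma disjoint_openSegment_Seg (hE : InGeneralPosition E) (ha : a ∈ E) (hb : b ∈ E) (hp : p ∈ E)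
    (hq : q ∈ E) (hab : a ≠ b) (hpq : p ≠ q) (hne : s(p, q) ≠ s(a, b))
    (hdisj : p ≠ a → p ≠ b → q ≠ a → q ≠ b → Disjoint (Seg p q) (Seg a b)) :
    Disjoint (openSegment ℝ a b) (Seg p q) := by
  rw [Ne, Sym2.eq_iff, not_or, not_and, not_and] at hne
  by_cases hpa : p = a
  · subst hpa
    exact hE.disjoint_openSegment_Seg_left ha hb hq hab hpq (Ne.symm (hne.1 rfl))
  by_cases hpb : p = b
  · subst hpb
    rw [openSegment_symm]
    exact hE.disjoint_openSegment_Seg_left hb ha hq hab.symm hpq (Ne.symm (hne.2 rfl))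
  by_cases hqa : q = a
  · subst hqa
    rw [Seg_comm]
    exact hE.disjoint_openSegment_Seg_left ha hb hp hab hpq.symm (Ne.symm hpb)
  by_cases hqb : q = b
  · subst hqb
    rw [openSegment_symm, Seg_comm]
    exact hE.disjoint_openSegment_Seg_left hb ha hp hab.symm hpq.symm (Ne.symm hpa)
  · exact (hdisj hpa hpb hqa hqb).symm.mono_left (openSegment_subset_segment ℝ a b)

end InGeneralPosition

namespace SimplePolygon

variable {P : SimplePolygon}

lemma range_vtx_subset_edgeUnion : range P.vtx ⊆ P.edgeUnion := by
  rintro _ ⟨i, rfl⟩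
  exact mem_iUnion.2 ⟨i, left_mem_Seg _ _⟩

lemma subset_closedRegion_of_isPreconnected {A : Set Pt} (hA : IsPreconnected A)
    (hdisj : Disjoint A P.edgeUnion) {z : Pt} (hzA : z ∈ A) (hz : z ∈ P.closedRegion) :
    A ⊆ P.closedRegion := by
  have hA' := hdisj.subset_compl_right
  have hbdd := (hz.resolve_left (hA' hzA)).2
  intro w hw
  refine .inr ⟨hA' hw, ?_⟩
  rwa [← connectedComponentIn_eq (hA.subset_connectedComponentIn hzA hA' hw)]

lemma Seg_subset_closedRegion (ha : a ∈ P.edgeUnion) (hb : b ∈ P.edgeUnion)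
    (hdisj : Disjoint (openSegment ℝ a b) P.edgeUnion) {z : Pt} (hzab : z ∈ openSegment ℝ a b)
    (hz : z ∈ P.closedRegion) : Seg a b ⊆ P.closedRegion := by
  rw [Seg, ← insert_endpoints_openSegment, insert_subset_iff, insert_subset_iff]
  exact ⟨.inl ha, .inl hb, subset_closedRegion_of_isPreconnected
    (convex_openSegment a b).isPreconnected hdisj hzab hz⟩

end SimplePolygon

lemma rayCrossing_comm {w : Pt} (h : p.1 ≠ q.1) : rayCrossing w p q = rayCrossing w q p := by
  simp only [rayCrossing, belowLine, lineThrough_comm h, add_comm (rightOf p w)]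

/-- The point at which the segment `s` crosses the vertical line of its column. -/
def columnPoint (L R : α → Pt) (κ : α → ℝ) (s : α) : Pt := (κ s, lineThrough (L s) (R s) (κ s))

open Classical in
/-- A function on the vertices of the dented upper chain whose variation along an edge is, modulo
two, the number of crossings of the edge with the upward ray from `columnPoint L R κ s`. -/
def sidePotential (K : Finset α) (L R : α → Pt) (κ : α → ℝ) (D : α → List α) (s : α) (v : Pt) :
    ZMod 2 :=
  if v ∈ upperVertices K L R then rightOf v (columnPoint L R κ s)
  else if ∃ b ∈ K, ∃ c ∈ D b, v = R c ∧ (L b).1 < (L s).1 then 1 else 0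

lemma sidePotential_of_mem_upperVertices (hv : v ∈ upperVertices K L R) :
    sidePotential K L R κ D s v = rightOf v (columnPoint L R κ s) :=
  if_pos hv

namespace ColumnSystem

lemma left_le_iff (C : ColumnSystem T L R κ) (hc : c ∈ T) (hs : s ∈ T) :
    (L c).1 ≤ κ s ↔ κ c ≤ κ s := by
  refine ⟨fun h => not_lt.1 fun hlt => ?_, fun h => (C.left_lt c hc).le.trans h⟩
  exact ((C.lt_right s hs).trans (C.right_lt_left s hs c hc hlt)).not_ge h

lemma right_le_iff (C : ColumnSystem T L R κ) (hc : c ∈ T) (hs : s ∈ T) :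
    (R c).1 ≤ κ s ↔ κ c < κ s :=
  ⟨fun h => (C.lt_right c hc).trans_le h,
    fun h => ((C.right_lt_left c hc s hs h).trans (C.left_lt s hs)).le⟩

lemma columnPoint_mem_openSegment (C : ColumnSystem T L R κ) (hs : s ∈ T) :
    columnPoint L R κ s ∈ openSegment ℝ (L s) (R s) := by
  have hL := C.left_lt s hs
  have hR := C.lt_right s hs
  exact mem_openSegment_of_ne_left_right (fun h => hL.ne (congrArg Prod.fst h))
    (fun h => hR.ne' (congrArg Prod.fst h))
    ((mem_Seg_iff_of_fst_lt (C.fst_lt s hs)).2 ⟨hL.le, hR.le, rfl⟩)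

open Classical in
lemma belowLine_columnPoint (C : ColumnSystem T L R κ) (hc : c ∈ T) (hs : s ∈ T) (hcs : c ≠ s)
    (hκ : κ c = κ s) :
    belowLine (L c) (R c) (columnPoint L R κ s) = if (L s).1 < (L c).1 then 1 else 0 := by
  refine if_congr ⟨fun h => ?_, C.height_lt s hs c hc hκ.symm⟩ rfl rfl
  by_contra! hle
  have hlt := hle.lt_of_ne fun heq => hcs (C.left_fst_injOn hc hs heq)
  have hheight := C.height_lt c hc s hs hκ hlt
  rw [hκ] at hheight
  exact h.not_gt hheight

open Classical in
lemma rayCrossing_columnPoint (C : ColumnSystem T L R κ) (hc : c ∈ T) (hs : s ∈ T)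
    (hcs : c ≠ s) : rayCrossing (columnPoint L R κ s) (L c) (R c) =
      rightOf (L c) (columnPoint L R κ s) + if (L c).1 < (L s).1 then 1 else 0 := by
  have hlt : ∀ i ∈ T, ∀ j ∈ T, κ i < κ j → (L i).1 < (L j).1 := fun i hi j hj h =>
    (C.fst_lt i hi).trans (C.right_lt_left i hi j hj h)
  simp only [rayCrossing, rightOf, columnPoint, C.left_le_iff hc hs, C.right_le_iff hc hs]
  rcases lt_trichotomy (κ c) (κ s) with h | h | h
  · simp [h, h.le, hlt c hc s hs h, CharTwo.add_self_eq_zero]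
  · rw [← columnPoint, C.belowLine_columnPoint hc hs hcs h]
    rcases lt_or_gt_of_ne fun heq => hcs (C.left_fst_injOn hc hs heq) with hL | hL
    · simp [h, hL, hL.not_gt, CharTwo.add_self_eq_zero]
    · simp [h, hL, hL.not_gt]
  · simp [h.not_ge, h.not_gt, (hlt s hs c hc h).not_gt]

end ColumnSystem

lemma OrientedFamily.rayCrossing_eq_zero_of_lower (h : OrientedFamily K L R) (hs : s ∈ K)
    (hpq : ConsecutiveIn FstLT (lowerVertices K L R) p q) {z : Pt} (hz : z ∈ Seg (L s) (R s)) :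
    rayCrossing z p q = 0 := by
  rw [rayCrossing, mul_eq_zero, or_iff_not_imp_left]
  intro hne
  obtain ⟨hpz, hzq⟩ | ⟨hqz, hzp⟩ := between_of_rightOf_add_ne_zero hne
  · obtain ⟨hLz, hzR, hheight⟩ := (mem_Seg_iff_of_fst_lt (h.fst_lt s hs)).1 hz
    exact if_neg (hheight ▸ h.weaklyBelow_lower_segment hpq hs _ hpz hzq.le hLz hzR).not_gt
  · exact absurd (hpq.rel.trans_le hqz) hzp.not_gt

lemma OrientedFamily.rayCrossing_eq_add_of_upper (h : OrientedFamily K L R) (hs : s ∈ K)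
    (hqp : ConsecutiveIn FstLT (upperVertices K L R) q p) {z : Pt} (hz : z ∈ Seg (L s) (R s))
    (hzpq : z ∉ Seg p q) : rayCrossing z p q = rightOf p z + rightOf q z := by
  rw [rayCrossing_comm hqp.rel.ne', rayCrossing, add_comm (rightOf p z)]
  by_cases hne : rightOf q z + rightOf p z = 0
  · rw [hne, zero_mul]
  have hoff : z.2 ≠ lineThrough q p z.1 := fun heq =>
    hzpq (Seg_comm p q ▸ mem_Seg_of_rightOf_add_ne_zero hqp.rel.ne hne heq)
  obtain ⟨hqz, hzp⟩ | ⟨hpz, hzq⟩ := between_of_rightOf_add_ne_zero hne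
  · obtain ⟨hLz, hzR, hheight⟩ := (mem_Seg_iff_of_fst_lt (h.fst_lt s hs)).1 hz
    have hle := hheight ▸ h.weaklyBelow_segment_upper hqp hs _ hLz hzR hqz hzp.le
    rw [belowLine, if_pos (hle.lt_of_ne hoff), mul_one]
  · exact absurd (hqp.rel.trans_le hpz) hzq.not_gt

lemma CandidateEdge.disjoint_openSegment (C : CoveringSubsystem K T L R κ) (hs : s ∈ K)
    (h : Relation.SymmGen (CandidateEdge K T L R κ) p q) (hne : s(p, q) ≠ s(L s, R s)) :
    Disjoint (openSegment ℝ (L s) (R s)) (Seg p q) := by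
  have hpq : p ∈ endpoints K L R ∧ q ∈ endpoints K L R ∧ p ≠ q := by
    rcases h with h | h
    · exact ⟨h.left_mem, h.right_mem, fun heq => (h.fst_lt C).ne (congrArg Prod.fst heq)⟩
    · exact ⟨h.right_mem, h.left_mem, fun heq => (h.fst_lt C).ne' (congrArg Prod.fst heq)⟩
  exact C.restrict.inGeneralPosition.disjoint_openSegment_Seg (left_mem_endpoints hs)
    (right_mem_endpoints hs) hpq.1 hpq.2.1 (C.restrict.left_ne_right hs hs) hpq.2.2 hne
    (disjoint_of_symmGen C h (.inl (.segment hs)))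

namespace DentSystem

open Classical in
lemma sidePotential_right (N : DentSystem K T L R κ D) {b : α} (hb : b ∈ K) (hc : c ∈ D b) :
    sidePotential K L R κ D s (R c) = if (L b).1 < (L s).1 then 1 else 0 := by
  have hinner := N.isInner b hb c hc
  rw [sidePotential, if_neg (hinner.right_notMem_upperVertices N.toCoveringSubsystem)]
  refine if_congr ⟨?_, fun h => ⟨b, hb, c, hc, rfl, h⟩⟩ rfl rfl
  rintro ⟨b', hb', c', hc', heq, h⟩
  obtain rfl := N.restrict.right_fst_injOn hinner.mem (N.isInner b' hb' c' hc').mem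
    (congrArg Prod.fst heq)
  exact N.eq_of_mem b hb b' hb' c hc hc' ▸ h

lemma left_lt_iff_of_consecutiveIn (N : DentSystem K T L R κ D) (hs : s ∈ K) {a b : α}
    (hab : ConsecutiveIn (ColumnLT T L κ) K a b) (hbs : b ≠ s) :
    (L a).1 < (L s).1 ↔ (L b).1 < (L s).1 := by
  refine ⟨fun h => ?_, hab.rel.fst_lt.trans⟩
  by_contra! hle
  have ha := hab.rel.left_mem
  have hsb := hle.lt_of_ne fun heq => hbs (N.restrict.left_fst_injOn hab.right_mem hs heq.symm)
  have hκ : κ a = κ s := N.column_eq (x := (L s).1) ha (N.subset hs) h.le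
    (hsb.trans (N.left_lt_right hab.rel.right_mem ha hab.rel.column_eq.symm)).le le_rfl
    (N.restrict.fst_lt s hs).le
  exact hab.not_between s hs ⟨ha, N.subset hs, hκ, h⟩
    ⟨N.subset hs, hab.rel.right_mem, hκ.symm.trans hab.rel.column_eq, hsb⟩

end DentSystem

lemma UpperBoundaryEdge.rayCrossing_eq_add (N : DentSystem K T L R κ D) (hs : s ∈ K)
    (hD : D s = []) (h : UpperBoundaryEdge K T L R κ D p q) (hne : s(p, q) ≠ s(L s, R s)) :
    rayCrossing (columnPoint L R κ s) p q =
      sidePotential K L R κ D s p + sidePotential K L R κ D s q := by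
  classical
  have hDs {b c : α} (hc : c ∈ D b) : b ≠ s := by rintro rfl; simp [hD] at hc
  have hz := N.columnPoint_mem_openSegment (N.subset hs)
  have hdisj := CandidateEdge.disjoint_openSegment N.toCoveringSubsystem hs
    (h.symmGen_candidateEdge N) hne
  rcases h with h | ⟨hb, hbD⟩ | @⟨b, c, d, hb, hc, hd, h⟩ | @⟨a, b, hb, hbD, ha, hab⟩
  · rw [sidePotential_of_mem_upperVertices h.right_mem,
      sidePotential_of_mem_upperVertices h.left_mem]
    exact N.restrict.rayCrossing_eq_add_of_upper hs h (openSegment_subset_segment ℝ _ _ hz)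
      (disjoint_left.1 hdisj hz)
  · rw [sidePotential_of_mem_upperVertices (N.left_mem_upperVertices hb (List.ne_nil_of_mem hbD)),
      N.sidePotential_right hb hbD]
    exact N.rayCrossing_columnPoint (N.subset hb) (N.subset hs) (hDs hbD)
  · have hcT := N.subset (N.isInner b hb c hc).mem
    have hdT := N.subset (N.isInner b hb d hd).mem
    rw [N.sidePotential_right hb hc, N.sidePotential_right hb hd, CharTwo.add_self_eq_zero,
      rayCrossing]
    simp only [rightOf, columnPoint, N.right_le_iff hcT (N.subset hs),
      N.right_le_iff hdT (N.subset hs), N.column_eq_of_mem b hb c hc, N.column_eq_of_mem b hb d hd,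
      CharTwo.add_self_eq_zero, zero_mul]
  · have haK := hab.left_mem
    have has : a ≠ s := by rintro rfl; exact hne Sym2.eq_swap
    rw [rayCrossing_comm (N.restrict.fst_lt a haK).ne',
      N.rayCrossing_columnPoint (N.subset haK) (N.subset hs) has, N.sidePotential_right hb ha,
      sidePotential_of_mem_upperVertices
        ((N.isInner b hb a ha).left_mem_upperVertices N.toCoveringSubsystem), add_comm]
    simp only [N.left_lt_iff_of_consecutiveIn hs hab (hDs hbD)]

lemma isChain_of_forall_imp {β : Type*} {A B C : β → β → Prop} {l : List β} (hA : l.IsChain A)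
    (hB : l.IsChain B) (h : ∀ p q, A p q → B p q → C p q) : l.IsChain C := by
  rw [List.isChain_iff_getElem] at hA hB ⊢
  exact fun i hi => h _ _ (hA i hi) (hB i hi)

/-- Some simple polygon has the endpoints of the segments as its vertices and contains all
segments. -/
def HasCircumscribingPolygon (K : Finset α) (L R : α → Pt) : Prop :=
  ∃ P : SimplePolygon, range P.vtx = endpoints K L R ∧ ∀ s ∈ K, Seg (L s) (R s) ⊆ P.closedRegion

namespace ChainLists

lemma three_le_length_boundaryWalk (h : ChainLists K L R m M lower upper)
    (N : DentSystem K T L R κ D) (hK : 2 ≤ K.card) :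
    3 ≤ (boundaryWalk K L R D m M lower upper).length := by
  obtain ⟨i, hi, j, hj, hij⟩ := Finset.one_lt_card.1 hK
  have hL : L i ≠ L j := fun heq => hij (N.restrict.left_fst_injOn hi hj (congrArg Prod.fst heq))
  have hnodup : [L i, R i, L j].Nodup := by
    simp [N.restrict.left_ne_right hi hi, hL, (N.restrict.left_ne_right hj hi).symm]
  refine (hnodup.subperm fun v hv => (h.mem_boundaryWalk_iff N).2 ?_).length_le
  simp only [List.mem_cons, List.not_mem_nil, or_false] at hv
  rcases hv with rfl | rfl | rfl
  exacts [left_mem_endpoints hi, right_mem_endpoints hi, left_mem_endpoints hj]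

lemma exists_simplePolygon (h : ChainLists K L R m M lower upper) (N : DentSystem K T L R κ D)
    (hK : 2 ≤ K.card) : ∃ P : SimplePolygon, range P.vtx = endpoints K L R ∧
      (∀ Q : Pt → Pt → Prop, (∀ i, Q (P.vtx i) (P.vtx (i + 1))) ↔
        (m :: boundaryWalk K L R D m M lower upper).IsChain Q) ∧
      ∀ w ∉ P.edgeUnion,
        pathSum (rayCrossing w) (m :: boundaryWalk K L R D m M lower upper) = 1 →
          w ∈ P.closedRegion := by
  obtain ⟨P, hrange, hchain, hmem⟩ := exists_simplePolygon_of_list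
    N.restrict.inGeneralPosition (fun _ _ _ _ => CandidateEdge.disjoint_of_symmGen
      N.toCoveringSubsystem) (h.nodup_boundaryWalk N) (h.three_le_length_boundaryWalk N hK)
    (fun p hp => (h.mem_boundaryWalk_iff N).1 hp) (h.getLast?_boundaryWalk N)
    (h.isChain_symmGen_boundaryWalk N)
  exact ⟨P, hrange.trans (Set.ext fun v => h.mem_boundaryWalk_iff N), hchain, hmem⟩

lemma isChain_upperBoundary_of_boundaryWalk {Q : Pt → Pt → Prop}
    (hQ : (m :: boundaryWalk K L R D m M lower upper).IsChain Q) :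
    (upperBoundary K L R D m M upper).IsChain Q := by
  rw [boundaryWalk, ← List.cons_append] at hQ
  exact hQ.right_of_append

lemma dent_eq_nil (h : ChainLists K L R m M lower upper) (N : DentSystem K T L R κ D)
    (hs : s ∈ K) (hne : (upperBoundary K L R D m M upper).IsChain fun p q =>
      s(p, q) ≠ s(L s, R s)) : D s = [] := by
  by_contra hD
  obtain ⟨a, -, hhead, -⟩ := N.exists_ends s hs hD
  have hmem : L s ∈ (m :: (upper ++ [M])).reverse :=
    List.mem_reverse.2 ((h.mem_upper_iff _).2 (N.left_mem_upperVertices hs hD))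
  obtain ⟨l₁, l₂, hl⟩ := List.append_of_mem hmem
  rw [upperBoundary, dentedChain, hl, List.flatMap_append, List.flatMap_cons,
    N.dentAt_left hs] at hne
  refine (List.isChain_cons.1 hne.right_of_append.left_of_append).1 (R s) ?_ rfl
  simp [hhead]

lemma pathSum_rayCrossing (h : ChainLists K L R m M lower upper) (N : DentSystem K T L R κ D)
    (hs : s ∈ K) (hne : (upperBoundary K L R D m M upper).IsChain fun p q =>
      s(p, q) ≠ s(L s, R s)) :
    pathSum (rayCrossing (columnPoint L R κ s)) (m :: boundaryWalk K L R D m M lower upper) =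
      1 := by
  have hz := openSegment_subset_segment ℝ _ _ (N.columnPoint_mem_openSegment (N.subset hs))
  have hlower := pathSum_eq_zero <| h.isChain_lower.imp fun p q hpq =>
    N.restrict.rayCrossing_eq_zero_of_lower hs hpq hz
  have hD := h.dent_eq_nil N hs hne
  have hupper := isChain_of_forall_imp (h.isChain_upperBoundary N) hne fun p q hpq =>
    hpq.rayCrossing_eq_add N hs hD
  have hlast := h.getLast?_upperBoundary N
  obtain ⟨l, hl⟩ := exists_upperBoundary_eq_cons K L R D m M upper
  rw [hl] at hupper hlast
  rw [boundaryWalk, hl, ← List.cons_append, pathSum_append_cons, List.cons_append, hlower,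
    zero_add, pathSum_eq_add_getLast M l m hupper hlast,
    sidePotential_of_mem_upperVertices ((h.mem_upper_iff M).1 (by simp)),
    sidePotential_of_mem_upperVertices ((h.mem_upper_iff m).1 (by simp))]
  have hm : m.1 ≤ (columnPoint L R κ s).1 :=
    (h.left_le _ (left_mem_endpoints hs)).trans (N.left_lt s (N.subset hs)).le
  have hM : (columnPoint L R κ s).1 < M.1 :=
    (N.lt_right s (N.subset hs)).trans_le (h.le_right _ (right_mem_endpoints hs))
  rw [rightOf, if_neg hM.not_ge, rightOf, if_pos hm, zero_add]

end ChainLists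

theorem DentSystem.hasCircumscribingPolygon (N : DentSystem K T L R κ D) (hK : 2 ≤ K.card) :
    HasCircumscribingPolygon K L R := by
  obtain ⟨m, M, lower, upper, h⟩ :=
    N.restrict.exists_chainLists (Finset.card_pos.1 (two_pos.trans_le hK))
  obtain ⟨P, hrange, hchain, hinside⟩ := h.exists_simplePolygon N hK
  refine ⟨P, hrange, fun s hs => ?_⟩
  by_cases hne : ∀ i, s(P.vtx i, P.vtx (i + 1)) ≠ s(L s, R s)
  · have hz := N.columnPoint_mem_openSegment (N.subset hs)
    have hdisj : Disjoint (openSegment ℝ (L s) (R s)) P.edgeUnion :=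
      disjoint_iUnion_right.2 fun i => CandidateEdge.disjoint_openSegment N.toCoveringSubsystem hs
        ((hchain _).2 (h.isChain_symmGen_boundaryWalk N) i) (hne i)
    have hverts := hrange ▸ SimplePolygon.range_vtx_subset_edgeUnion (P := P)
    exact SimplePolygon.Seg_subset_closedRegion (hverts (left_mem_endpoints hs))
      (hverts (right_mem_endpoints hs)) hdisj hz <| hinside _ (disjoint_left.1 hdisj hz) <|
        h.pathSum_rayCrossing N hs <| ChainLists.isChain_upperBoundary_of_boundaryWalk <|
          (hchain fun p q => s(p, q) ≠ s(L s, R s)).1 hne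
  · push Not at hne
    obtain ⟨i, hi⟩ := hne
    have hSeg : Seg (L s) (R s) = Seg (P.vtx i) (P.vtx (i + 1)) := by
      rcases Sym2.eq_iff.1 hi with ⟨h₁, h₂⟩ | ⟨h₁, h₂⟩
      exacts [h₁ ▸ h₂ ▸ rfl, h₁ ▸ h₂ ▸ Seg_comm _ _]
    exact hSeg ▸ (subset_iUnion (fun i => Seg (P.vtx i) (P.vtx (i + 1))) i).trans subset_union_left

end InsideTest

/-! ### Selecting segments -/

section Selection

variable {α : Type*}

section Relations

variable {β : Type*} [LinearOrder β] {r : α → α → Prop} {rho : α → β} {i i' k d : α}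

lemma exists_isChain_cartesianAdj_children (hr : IsChainUnion r)
    (hrho : ∀ a b, r a b → rho a ≠ rho b) (hk : ¬ PrefixMax r rho k)
    (hi : NextGreater r rho i k) :
    ∃ c a, (k :: (c ++ [a])).IsChain (CartesianAdj r rho) ∧ (k :: (c ++ [a])).Nodup ∧
      (∀ j, j ∈ c ++ [a] ↔ NextGreater r rho j k) ∧ ConsecutiveIn r univ a k := by
  obtain ⟨l, hl, hmem⟩ := exists_children_list hr rho k
  obtain rfl | ⟨c, a, rfl⟩ := l.eq_nil_or_concat'
  · exact absurd ((hmem i).2 hi) List.not_mem_nil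
  refine ⟨c, a, isChain_cartesianAdj_children hr hrho hk hl hmem, List.nodup_cons.2 ⟨?_, ?_⟩, hmem,
    trivial, trivial, ((hmem a).1 (by simp)).rel, fun t _ =>
      not_between_last_child hr hrho hl hmem t⟩
  · exact fun h => hr.irrefl k ((hmem k).1 h).rel
  · exact List.Pairwise.imp (S := (· ≠ ·)) (by rintro a _ h rfl; exact hr.irrefl a h) hl

/-- Since `i` lies below `i'`, the element `d` lies between `i'` and `k`. -/
lemma NextGreater.eq_or_not_prefixMax (hr : IsChainUnion r) (hi : NextGreater r rho i k)
    (hi' : NextGreater r rho i' k) (hlt : r i' i) (hd : NextGreater (Function.swap r) rho i d) :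
    d = i' ∨ ¬ PrefixMax r rho d ∧ ¬ PrefixMax (Function.swap r) rho d := by
  have hii' : rho i < rho i' := hi'.lt_of_between i hlt hi.rel
  rcases hr.left_connected i d i' hd.rel hlt with rfl | h | h
  · exact .inl rfl
  · exact absurd (hd.lt_of_between i' hlt h) hii'.not_gt
  · have hdk : r d k := hr.trans d i k hd.rel hi.rel
    have hdi' : rho d < rho i' := hi'.lt_of_between d h hdk
    exact .inr ⟨fun hp => (hp i' h).not_gt hdi', fun hp => (hp k hdk).not_gt (hdi'.trans hi'.lt)⟩

end Relations

/-- A list of inner segments of the column system `T` from which a dent can be formed. -/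
structure DentList (T : Finset α) (L R : α → Pt) (κ : α → ℝ) (l : List α) : Prop where
  isChain : l.IsChain (ColumnAdj T L R κ)
  nodup : l.Nodup
  isInner : ∀ c ∈ l, IsInner T T L R κ c
  column_eq : ∀ c ∈ l, ∀ c' ∈ l, κ c = κ c'
  exists_ends : ∃ a b, ConsecutiveIn (ColumnLT T L κ) T a b ∧
    l.head? = some b ∧ l.getLast? = some a

/-- An inner segment which is not a child of an inner segment on either side. -/
structure IsDetached (T : Finset α) (L R : α → Pt) (κ : α → ℝ) (i : α) : Prop where
  isInner : IsInner T T L R κ i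
  not_isInner_above : ∀ k, NextGreater (ColumnLT T L κ) (fun j => (R j).1) i k →
    ¬ IsInner T T L R κ k
  not_isInner_below : ∀ k, NextGreater (Function.swap (ColumnLT T L κ)) (fun j => (R j).1) i k →
    ¬ IsInner T T L R κ k

variable {K T : Finset α} {L R : α → Pt} {κ : α → ℝ} {i k : α}

namespace ColumnSystem

lemma dentSystem_of_dentLists (C : ColumnSystem T L R κ) {𝓛 : Set (List α)} {D : α → List α}
    (h𝓛 : ∀ l ∈ 𝓛, DentList T L R κ l)
    (hdisj : ∀ l ∈ 𝓛, ∀ l' ∈ 𝓛, ∀ c, c ∈ l → c ∈ l' → l = l')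
    (hD : ∀ b, D b ∈ 𝓛 ∧ (D b).head? = some b ∨ D b = [] ∧ ∀ l ∈ 𝓛, l.head? ≠ some b)
    (hK : ∀ i, i ∈ K ↔ i ∈ T ∧ (IsInner T T L R κ i → ∃ l ∈ 𝓛, i ∈ l)) :
    DentSystem K T L R κ D := by
  have hKT : K ⊆ T := fun i hi => ((hK i).1 hi).1
  have hmem : ∀ l ∈ 𝓛, ∀ c ∈ l, c ∈ K := fun l hl c hc =>
    (hK c).2 ⟨((h𝓛 l hl).isInner c hc).mem, fun _ => ⟨l, hl, hc⟩⟩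
  have hD_mem : ∀ b c, c ∈ D b → D b ∈ 𝓛 ∧ (D b).head? = some b := fun b c hc =>
    (hD b).resolve_right fun h => by simp [h.1] at hc
  refine { C with
    subset := hKT
    mem_of_prefixMax := fun i hi h => (hK i).2 ⟨hi, fun h' => absurd h h'.not_prefixMax⟩
    mem_of_suffixMax := fun i hi h => (hK i).2 ⟨hi, fun h' => absurd h h'.not_suffixMax⟩
    isChain := fun b _ => (hD b).elim (fun h => (h𝓛 _ h.1).isChain) fun h => h.1 ▸ List.isChain_nil
    nodup := fun b _ => (hD b).elim (fun h => (h𝓛 _ h.1).nodup) fun h => h.1 ▸ List.nodup_nil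
    isInner := fun b _ c hc => ?_
    column_eq_of_mem := fun b _ c hc => ?_
    eq_of_mem := fun b _ b' _ c hc hc' => ?_
    exists_ends := fun b _ hb => ?_
    exists_mem := fun c hc => ?_ }
  · have hl := (hD_mem b c hc).1
    exact { (h𝓛 _ hl).isInner c hc with mem := hmem _ hl c hc }
  · obtain ⟨hl, hb⟩ := hD_mem b c hc
    exact (h𝓛 _ hl).column_eq c hc b (List.mem_of_head? hb)
  · obtain ⟨hl, hb⟩ := hD_mem b c hc
    obtain ⟨hl', hb'⟩ := hD_mem b' c hc'
    exact Option.some.inj (hb.symm.trans (hdisj _ hl _ hl' c hc hc' ▸ hb'))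
  · obtain ⟨c, hc⟩ := List.exists_mem_of_ne_nil _ hb
    obtain ⟨hl, hhead⟩ := hD_mem b c hc
    obtain ⟨a, b', hab, hb', ha⟩ := (h𝓛 _ hl).exists_ends
    obtain rfl := Option.some.inj (hhead.symm.trans hb')
    exact ⟨a, ⟨hmem _ hl a (List.mem_of_getLast? ha), hmem _ hl b (List.mem_of_head? hhead),
      hab.rel, fun v hv => hab.not_between v (hKT hv)⟩, hhead, ha⟩
  · obtain ⟨l, hl, hcl⟩ := ((hK c).1 hc.mem).2 { hc with mem := hKT hc.mem }
    obtain ⟨a, b, -, hb, -⟩ := (h𝓛 l hl).exists_ends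
    have hbl := List.mem_of_head? hb
    obtain ⟨hl', hb'⟩ := (hD b).resolve_right fun h => h.2 l hl hb
    exact ⟨b, hmem l hl b hbl, hdisj _ hl' l hl b (List.mem_of_head? hb') hbl ▸ hcl⟩

lemma exists_hasCircumscribingPolygon_of_dentLists (C : ColumnSystem T L R κ)
    {𝓛 : Set (List α)} (h𝓛 : ∀ l ∈ 𝓛, DentList T L R κ l)
    (hdisj : ∀ l ∈ 𝓛, ∀ l' ∈ 𝓛, ∀ c, c ∈ l → c ∈ l' → l = l') :
    ∃ K ⊆ T, (∀ i ∈ T, (IsInner T T L R κ i → ∃ l ∈ 𝓛, i ∈ l) → i ∈ K) ∧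
      (2 ≤ K.card → HasCircumscribingPolygon K L R) := by
  classical
  have hdent : ∀ b, ∃ d, d ∈ 𝓛 ∧ d.head? = some b ∨ d = [] ∧ ∀ l ∈ 𝓛, l.head? ≠ some b :=
    fun b => by
      by_cases h : ∃ l ∈ 𝓛, l.head? = some b
      · exact ⟨h.choose, .inl h.choose_spec⟩
      · exact ⟨[], .inr ⟨rfl, fun l hl hb => h ⟨l, hl, hb⟩⟩⟩
  choose D hD using hdent
  refine ⟨T.filter fun i => IsInner T T L R κ i → ∃ l ∈ 𝓛, i ∈ l, Finset.filter_subset _ _,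
    fun i hi h => Finset.mem_filter.2 ⟨hi, h⟩, fun hK => ?_⟩
  exact (C.dentSystem_of_dentLists h𝓛 hdisj hD fun i => Finset.mem_filter).hasCircumscribingPolygon
    hK

lemma exists_dentList_of_nextGreater (C : ColumnSystem T L R κ) {s : α → α → Prop}
    (hs : s = ColumnLT T L κ ∨ s = Function.swap (ColumnLT T L κ))
    (hk : IsInner T T L R κ k) (hi : NextGreater s (fun j => (R j).1) i k) :
    ∃ l, DentList T L R κ l ∧ ∀ j, j ∈ l ↔ j = k ∨ NextGreater s (fun j => (R j).1) j k := by
  obtain ⟨hr, hrho, hkmax⟩ : IsChainUnion s ∧ (∀ a b, s a b → (R a).1 ≠ (R b).1) ∧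
      ¬ PrefixMax s (fun j => (R j).1) k := by
    have hr := C.isChainUnion_columnLT κ
    rcases hs with rfl | rfl
    exacts [⟨hr, C.right_fst_ne, hk.not_prefixMax⟩,
      ⟨hr.swap, fun a b hab => (C.right_fst_ne b a hab).symm, hk.not_suffixMax⟩]
  obtain ⟨c, a, hchain, hnodup, hmem, hak⟩ :=
    exists_isChain_cartesianAdj_children hr hrho hkmax hi
  have hl : ∀ j, j ∈ k :: (c ++ [a]) ↔ j = k ∨ NextGreater s (fun j => (R j).1) j k :=
    fun j => by rw [List.mem_cons, hmem]
  have hinner : ∀ j ∈ k :: (c ++ [a]), IsInner T T L R κ j ∧ κ j = κ k := fun j hj => by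
    rcases (hl j).1 hj with rfl | hj
    · exact ⟨hk, rfl⟩
    have hpre := hj.not_prefixMax hr hrho hkmax
    have hsuf : ¬ PrefixMax (Function.swap s) (fun j => (R j).1) j := fun h =>
      (h k hj.rel).not_gt hj.lt
    rcases hs with rfl | rfl
    exacts [⟨⟨hj.rel.left_mem, hpre, hsuf⟩, hj.rel.column_eq⟩,
      ⟨⟨hj.rel.right_mem, hsuf, hpre⟩, hj.rel.column_eq.symm⟩]
  have hcol : ∀ j ∈ k :: (c ++ [a]), ∀ j' ∈ k :: (c ++ [a]), κ j = κ j' := fun j hj j' hj' =>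
    (hinner j hj).2.trans (hinner j' hj').2.symm
  have hlast : (k :: (c ++ [a])).getLast? = some a := List.getLast?_concat (l := k :: c)
  rcases hs with rfl | rfl
  · exact ⟨_, ⟨hchain, hnodup, fun j hj => (hinner j hj).1, hcol, a, k,
      ⟨hak.rel.left_mem, hak.rel.right_mem, hak.rel, fun v _ => hak.not_between v trivial⟩,
      rfl, hlast⟩, hl⟩
  · refine ⟨(k :: (c ++ [a])).reverse, ⟨?_, List.nodup_reverse.2 hnodup,
      fun j hj => (hinner j (List.mem_reverse.1 hj)).1,
      fun j hj j' hj' => hcol j (List.mem_reverse.1 hj) j' (List.mem_reverse.1 hj'), k, a,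
      ⟨hak.rel.left_mem, hak.rel.right_mem, hak.rel,
        fun v _ hkv hva => hak.not_between v trivial hva hkv⟩,
      by rw [List.head?_reverse, hlast], by rw [List.getLast?_reverse]; rfl⟩,
      fun j => by rw [List.mem_reverse, hl]⟩
    exact List.isChain_reverse.2 (hchain.imp fun p q h => h.swap.symm)

/-- The stars whose centres have the same colour are disjoint. -/
lemma exists_bool_hasCircumscribingPolygon (C : ColumnSystem T L R κ) {s : α → α → Prop}
    (hs : s = ColumnLT T L κ ∨ s = Function.swap (ColumnLT T L κ)) :
    ∃ K : Bool → Finset α, (∀ b, K b ⊆ T ∧ (2 ≤ (K b).card → HasCircumscribingPolygon (K b) L R)) ∧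
      ∀ i ∈ T, ∀ k, NextGreater s (fun j => (R j).1) i k → IsInner T T L R κ k → ∃ b, i ∈ K b := by
  have hr : IsChainUnion s := by
    have hr := C.isChainUnion_columnLT κ
    rcases hs with rfl | rfl
    exacts [hr, hr.swap]
  obtain ⟨col, hcol⟩ := exists_coloring_nextGreater hr fun j => (R j).1
  let IsStar : α → List α → Prop := fun k l =>
    DentList T L R κ l ∧ ∀ j, j ∈ l ↔ j = k ∨ NextGreater s (fun j => (R j).1) j k
  choose! star hstar using fun k (h : ∃ l, IsStar k l) => h
  have hdisj : ∀ b, ∀ l ∈ star '' {k | (∃ l, IsStar k l) ∧ col k = b},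
      ∀ l' ∈ star '' {k | (∃ l, IsStar k l) ∧ col k = b}, ∀ c, c ∈ l → c ∈ l' → l = l' := by
    rintro b _ ⟨k, ⟨hk, hkb⟩, rfl⟩ _ ⟨k', ⟨hk', hkb'⟩, rfl⟩ c hc hc'
    rcases ((hstar k hk).2 c).1 hc with rfl | hc <;>
      rcases ((hstar k' hk').2 c).1 hc' with rfl | hc'
    · rfl
    · exact absurd (hkb.trans hkb'.symm) (hcol _ _ hc')
    · exact absurd (hkb'.trans hkb.symm) (hcol _ _ hc)
    · rw [hc.right_unique hr hc']
  choose K hKT hKmem hK using fun b => C.exists_hasCircumscribingPolygon_of_dentLists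
    (by rintro _ ⟨k, ⟨hk, -⟩, rfl⟩; exact (hstar k hk).1) (hdisj b)
  refine ⟨K, fun b => ⟨hKT b, hK b⟩, fun i hi k hik hk => ⟨col k, ?_⟩⟩
  have hkstar := C.exists_dentList_of_nextGreater hs hk hik
  exact hKmem _ i hi fun _ => ⟨_, mem_image_of_mem star ⟨hkstar, rfl⟩,
    ((hstar k hkstar).2 i).2 (.inr hik)⟩

open Classical in
/-- Map each such segment to its upper next greater segment. -/
lemma card_filter_le_card_filter_not_isInner (C : ColumnSystem T L R κ) :
    (T.filter (IsDetached T L R κ)).card ≤ (T.filter fun i => ¬ IsInner T T L R κ i).card := by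
  have hr := C.isChainUnion_columnLT κ
  have hrho := C.right_fst_ne (κ := κ)
  have hupper : ∀ i, IsInner T T L R κ i →
      ∃ k, NextGreater (ColumnLT T L κ) (fun j => (R j).1) i k := fun i hi =>
    NextGreater.exists_swap_of_not_prefixMax hr.swap (fun a b hab => (hrho b a hab).symm)
      hi.not_suffixMax
  choose! u hu using hupper
  refine Finset.card_le_card_of_injOn u (fun i hi => ?_) ?_
  · have hi := (Finset.mem_filter.1 hi).2
    have hui := hu i hi.isInner
    exact Finset.mem_filter.2 ⟨hui.rel.right_mem, hi.not_isInner_above _ hui⟩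
  have hinj : ∀ i i', IsDetached T L R κ i → IsDetached T L R κ i' → u i = u i' →
      ¬ ColumnLT T L κ i' i := by
    intro i i' hi hi' heq hlt
    obtain ⟨d, hd⟩ := NextGreater.exists_swap_of_not_prefixMax hr hrho hi.isInner.not_prefixMax
    refine hi.not_isInner_below d hd ?_
    rcases (hu i hi.isInner).eq_or_not_prefixMax hr (heq ▸ hu i' hi'.isInner) hlt hd with
      rfl | ⟨hpre, hsuf⟩
    exacts [hi'.isInner, ⟨hd.rel.left_mem, hpre, hsuf⟩]
  intro i hi i' hi' heq
  have hi := (Finset.mem_filter.1 hi).2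
  have hi' := (Finset.mem_filter.1 hi').2
  rcases hr.left_connected (u i) i i' (hu i hi.isInner).rel (heq ▸ (hu i' hi'.isInner).rel) with
    h | h | h
  exacts [h, absurd h (hinj i' i hi' hi heq.symm), absurd h (hinj i i' hi hi' heq)]

/-- The segments with the leftmost and the rightmost left endpoint are not inner. -/
lemma two_le_card_of_not_isInner_imp_mem (C : ColumnSystem T L R κ) (hT : 2 ≤ T.card)
    (hK : ∀ i ∈ T, ¬ IsInner T T L R κ i → i ∈ K) : 2 ≤ K.card := by
  have hne : T.Nonempty := Finset.card_pos.1 (by lia)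
  obtain ⟨i, hi, hmin⟩ := T.exists_min_image (fun i => (L i).1) hne
  obtain ⟨j, hj, hmax⟩ := T.exists_max_image (fun i => (L i).1) hne
  have hiK : i ∈ K := hK i hi fun h =>
    h.not_prefixMax fun k hki => absurd hki.fst_lt (hmin k hki.left_mem).not_gt
  have hjK : j ∈ K := hK j hj fun h =>
    h.not_suffixMax fun k hjk => absurd hjk.fst_lt (hmax k hjk.right_mem).not_gt
  have hij : i ≠ j := by
    rintro rfl
    obtain ⟨a, ha, b, hb, hab⟩ := Finset.one_lt_card.1 hT
    exact hab (C.left_fst_injOn ha hb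
      (((hmax a ha).trans (hmin b hb)).antisymm ((hmax b hb).trans (hmin a ha))))
  exact Finset.one_lt_card.2 ⟨i, hiK, j, hjK, hij⟩

theorem exists_hasCircumscribingPolygon (C : ColumnSystem T L R κ) (hT : 2 ≤ T.card) :
    ∃ K ⊆ T, 2 ≤ K.card ∧ T.card ≤ 6 * K.card ∧ HasCircumscribingPolygon K L R := by
  classical
  obtain ⟨O, hOT, hO, hpolyO⟩ := C.exists_hasCircumscribingPolygon_of_dentLists (𝓛 := ∅)
    (by simp) (by simp)
  have hO2 : 2 ≤ O.card := C.two_le_card_of_not_isInner_imp_mem hT fun i hi hinner =>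
    hO i hi fun h => absurd h hinner
  obtain ⟨U, hU, hUmem⟩ := C.exists_bool_hasCircumscribingPolygon (.inl rfl)
  obtain ⟨V, hV, hVmem⟩ := C.exists_bool_hasCircumscribingPolygon (.inr rfl)
  have hX : (T.filter (IsDetached T L R κ)).card ≤ O.card :=
    C.card_filter_le_card_filter_not_isInner.trans <| Finset.card_le_card fun i hi =>
      hO i (Finset.mem_filter.1 hi).1 fun h => absurd h (Finset.mem_filter.1 hi).2
  have hcover : T ⊆
      O ∪ T.filter (IsDetached T L R κ) ∪ (U true ∪ U false) ∪ (V true ∪ V false) := by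
    intro i hi
    simp only [Finset.mem_union, Finset.mem_filter]
    by_contra! ⟨⟨⟨hiO, hiX⟩, hiU⟩, hiV⟩
    refine hiX hi ⟨?_, fun k hik hk => ?_, fun k hik hk => ?_⟩
    · by_contra hinner
      exact hiO (hO i hi fun h => absurd h hinner)
    · obtain ⟨b | b, hb⟩ := hUmem i hi k hik hk
      exacts [hiU.2 hb, hiU.1 hb]
    · obtain ⟨b | b, hb⟩ := hVmem i hi k hik hk
      exacts [hiV.2 hb, hiV.1 hb]
  by_contra! hcon
  have hsmall : ∀ K ⊆ T, (2 ≤ K.card → HasCircumscribingPolygon K L R) → 6 * K.card < T.card :=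
    fun K hKT hK => by
      have hO6 : 6 * O.card < T.card := not_le.1 fun h => hcon O hOT hO2 h (hpolyO hO2)
      rcases lt_or_ge K.card 2 with hK2 | hK2
      · lia
      · exact not_le.1 fun h => hcon K hKT hK2 h (hK hK2)
  have := hsmall O hOT hpolyO
  have := hsmall _ (hU true).1 (hU true).2
  have := hsmall _ (hU false).1 (hU false).2
  have := hsmall _ (hV true).1 (hV true).2
  have := hsmall _ (hV false).1 (hV false).2
  have hcard := Finset.card_le_card hcover
  grind [Finset.card_union_le]

end ColumnSystem

end Selection

/-! ### Linear images of polygons and segments -/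

section LinearImages

variable {α : Type*} {K T : Finset α} {L R : α → Pt} (φ : Pt ≃L[ℝ] Pt)

lemma Seg_image (p q : Pt) : φ '' Seg p q = Seg (φ p) (φ q) :=
  image_segment ℝ (φ : Pt →ₗ[ℝ] Pt).toAffineMap p q

lemma endpoints_image (K : Finset α) (L R : α → Pt) :
    φ '' endpoints K L R = endpoints K (φ ∘ L) (φ ∘ R) := by
  ext p
  constructor
  · rintro ⟨q, ⟨i, hi, rfl | rfl⟩, rfl⟩
    exacts [left_mem_endpoints hi, right_mem_endpoints hi]
  · rintro ⟨i, hi, rfl | rfl⟩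
    exacts [mem_image_of_mem φ (left_mem_endpoints hi), mem_image_of_mem φ (right_mem_endpoints hi)]

namespace SimplePolygon

/-- The image of a polygon under a linear automorphism of the plane. -/
def map (P : SimplePolygon) : SimplePolygon where
  k := P.k
  three_le := P.three_le
  vtx := φ ∘ P.vtx
  inj := φ.injective.comp P.inj
  edge_inter i j hij := by
    simp only [Function.comp_apply, ← Seg_image, ← image_inter φ.injective, image_nonempty]
    exact P.edge_inter i j hij
  edge_consec i := by
    simp only [Function.comp_apply, ← Seg_image, ← image_inter φ.injective]
    rw [P.edge_consec i, image_singleton]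

lemma edgeUnion_map (P : SimplePolygon) : (P.map φ).edgeUnion = φ '' P.edgeUnion := by
  simp only [edgeUnion, image_iUnion, Seg_image]
  rfl

lemma image_closedRegion_subset (P : SimplePolygon) :
    φ '' P.closedRegion ⊆ (P.map φ).closedRegion := by
  rintro _ ⟨x, hx | ⟨hx, hbdd⟩, rfl⟩
  · left
    rw [edgeUnion_map]
    exact mem_image_of_mem φ hx
  · right
    have himage : φ '' connectedComponentIn P.edgeUnionᶜ x =
        connectedComponentIn (P.map φ).edgeUnionᶜ (φ x) := by
      rw [edgeUnion_map, ← image_compl_eq φ.bijective]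
      exact φ.toHomeomorph.image_connectedComponentIn hx
    rw [mem_ofPred_eq, edgeUnion_map, φ.injective.mem_set_image, ← edgeUnion_map, ← himage]
    exact ⟨hx, φ.lipschitz.isBounded_image hbdd⟩

end SimplePolygon

lemma HasCircumscribingPolygon.map (h : HasCircumscribingPolygon K L R) :
    HasCircumscribingPolygon K (φ ∘ L) (φ ∘ R) := by
  obtain ⟨P, hvtx, hregion⟩ := h
  refine ⟨P.map φ, ?_, fun s hs => ?_⟩
  · rw [← endpoints_image, ← hvtx, ← range_comp]
    rfl
  · simp only [Function.comp_apply, ← Seg_image]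
    exact (image_mono (hregion s hs)).trans (P.image_closedRegion_subset φ)

/-- The reflection of the plane in the first coordinate axis. -/
def reflection : Pt ≃L[ℝ] Pt :=
  (ContinuousLinearEquiv.refl ℝ ℝ).prodCongr (ContinuousLinearEquiv.neg ℝ)

lemma reflection_apply (p : Pt) : reflection p = (p.1, -p.2) := rfl

lemma reflection_comp_comp (f : α → Pt) : reflection ∘ reflection ∘ f = f := by
  funext i
  simp [reflection_apply]

lemma lineThrough_reflection (p q : Pt) (x : ℝ) :
    lineThrough (reflection p) (reflection q) x = -lineThrough p q x := by
  simp only [lineThrough_apply, lineSlope, reflection_apply]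
  ring

lemma InGeneralPosition.image_reflection {E : Set Pt} (hE : InGeneralPosition E) :
    InGeneralPosition (reflection '' E) where
  fst_injOn := by
    rintro _ ⟨p, hp, rfl⟩ _ ⟨q, hq, rfl⟩ hpq
    rw [hE.fst_injOn hp hq hpq]
  snd_ne_lineThrough := by
    rintro _ ⟨p, hp, rfl⟩ _ ⟨q, hq, rfl⟩ _ ⟨r, hr, rfl⟩ hpq hpr hqr h
    rw [lineThrough_reflection] at h
    exact hE.snd_ne_lineThrough p hp q hq r hr (ne_of_apply_ne _ hpq) (ne_of_apply_ne _ hpr)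
      (ne_of_apply_ne _ hqr) (neg_injective h)

lemma DisjointOrientedFamily.comp_reflection (h : DisjointOrientedFamily T L R) :
    DisjointOrientedFamily T (reflection ∘ L) (reflection ∘ R) where
  fst_lt := h.fst_lt
  inGeneralPosition := by
    rw [← endpoints_image]
    exact h.inGeneralPosition.image_reflection
  disjoint i hi j hj hij := by
    simp only [Function.comp_apply, ← Seg_image]
    exact (disjoint_image_iff reflection.injective).2 (h.disjoint i hi j hj hij)

lemma HasCircumscribingPolygon.of_comp_reflection
    (h : HasCircumscribingPolygon K (reflection ∘ L) (reflection ∘ R)) :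
    HasCircumscribingPolygon K L R := by
  have h := h.map reflection
  rwa [reflection_comp_comp, reflection_comp_comp] at h

end LinearImages

/-! ### Partition into columns -/

section Order

variable {α : Type*} (r : α → α → Prop) [IsStrictOrder α r]

lemma exists_mem_forall_not_rel {t : Finset α} (ht : t.Nonempty) : ∃ z ∈ t, ∀ y ∈ t, ¬ r y z := by
  obtain ⟨a, ha⟩ := ht
  obtain ⟨⟨z, hz⟩, -, hzmin⟩ :=
    (t.finite_toSet.wellFoundedOn (r := r)).has_min univ ⟨⟨a, ha⟩, trivial⟩
  exact ⟨z, hz, fun y hy => hzmin ⟨y, hy⟩ trivial⟩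

/-- Remove the minimal elements, and extend a long chain of the rest below by one of them. -/
lemma exists_isChain_card_le_mul {d : ℕ} (s : Finset α)
    (hd : ∀ a ⊆ s, IsAntichain r (a : Set α) → a.card ≤ d) :
    ∃ c ⊆ s, IsChain r (c : Set α) ∧ s.card ≤ c.card * d := by
  classical
  induction s using Finset.strongInduction with
  | H s ih =>
  obtain rfl | hs := s.eq_empty_or_nonempty
  · exact ⟨∅, by simp⟩
  let m := s.filter fun z => ∀ y ∈ s, ¬ r y z
  have hms : m ⊆ s := Finset.filter_subset _ _
  have hmd : m.card ≤ d := hd m hms fun a ha b hb _ =>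
    (Finset.mem_filter.1 hb).2 a (hms ha)
  have hm : m.Nonempty := by
    obtain ⟨z, hz, hzmin⟩ := exists_mem_forall_not_rel r hs
    exact ⟨z, Finset.mem_filter.2 ⟨hz, hzmin⟩⟩
  obtain ⟨c, hc, hchain, hcard⟩ := ih (s \ m) (Finset.sdiff_ssubset hms hm) fun a ha =>
    hd a (ha.trans Finset.sdiff_subset)
  obtain ⟨z, hz, hzc⟩ : ∃ z ∈ m, ∀ y ∈ c, r z y := by
    obtain rfl | hcne := c.eq_empty_or_nonempty
    · obtain ⟨z, hz⟩ := hm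
      exact ⟨z, hz, by simp⟩
    obtain ⟨u, hu, humin⟩ := exists_mem_forall_not_rel r hcne
    obtain ⟨hus, hum⟩ := Finset.mem_sdiff.1 (hc hu)
    obtain ⟨y, hy, hyu⟩ : ∃ y ∈ s, r y u := by
      by_contra! hempty
      exact hum (Finset.mem_filter.2 ⟨hus, hempty⟩)
    obtain ⟨z, hz, hzmin⟩ := exists_mem_forall_not_rel r (t := s.filter (r · u))
      ⟨y, Finset.mem_filter.2 ⟨hy, hyu⟩⟩
    obtain ⟨hzs, hzu⟩ := Finset.mem_filter.1 hz
    refine ⟨z, Finset.mem_filter.2 ⟨hzs, fun y hy hyz =>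
      hzmin y (Finset.mem_filter.2 ⟨hy, _root_.trans hyz hzu⟩) hyz⟩, fun y hy => ?_⟩
    obtain rfl | hne := eq_or_ne u y
    · exact hzu
    · exact _root_.trans hzu ((hchain hu hy hne).resolve_right (humin y hy))
  have hzc' : z ∉ c := fun h => irrefl z (hzc z h)
  refine ⟨insert z c, Finset.insert_subset (hms hz) (hc.trans Finset.sdiff_subset), ?_, ?_⟩
  · rw [Finset.coe_insert]
    exact hchain.insert fun y hy _ => .inl (hzc y hy)
  · rw [Finset.card_insert_of_notMem hzc', add_mul, one_mul]
    rw [Finset.card_sdiff_of_subset hms] at hcard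
    lia

/-- Mirsky's theorem, in the form used to prove the Erdős–Szekeres theorem. -/
lemma exists_isChain_isAntichain_card_le_mul (s : Finset α) :
    ∃ c ⊆ s, ∃ a ⊆ s, IsChain r (c : Set α) ∧ IsAntichain r (a : Set α) ∧
      s.card ≤ c.card * a.card := by
  classical
  obtain ⟨a, ha, hamax⟩ := Finset.exists_max_image
    (s.powerset.filter fun a : Finset α => IsAntichain r (a : Set α)) Finset.card ⟨∅, by simp⟩
  simp only [Finset.mem_filter, Finset.mem_powerset] at ha hamax
  obtain ⟨c, hc, hchain, hcard⟩ := exists_isChain_card_le_mul r s fun a' ha' hanti =>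
    hamax a' ⟨ha', hanti⟩
  exact ⟨c, hc, a, ha.1, hchain, ha.2, hcard⟩

end Order

lemma exists_card_filter_lt_eq {α β : Type*} [LinearOrder β] {s : Finset α} {f : α → β}
    (hf : InjOn f s) {k : ℕ} (hk : k < s.card) :
    ∃ a ∈ s, (s.filter fun b => f b < f a).card = k := by
  have hlt : ∀ a ∈ s, (s.filter fun b => f b < f a).card < s.card := fun a ha =>
    Finset.card_lt_card (Finset.filter_ssubset.2 ⟨a, ha, lt_irrefl _⟩)
  have hmono : ∀ a ∈ s, ∀ b ∈ s, f a < f b →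
      (s.filter fun c => f c < f a).card < (s.filter fun c => f c < f b).card := by
    intro a ha b _ hab
    refine Finset.card_lt_card (Finset.ssubset_iff_of_subset ?_ |>.2 ?_)
    · exact Finset.monotone_filter_right _ fun c _ hc => hc.trans hab
    · exact ⟨a, Finset.mem_filter.2 ⟨ha, hab⟩, by simp⟩
  have hsurj := Finset.surjOn_of_injOn_of_card_le (s := s) (t := Finset.range s.card)
    (fun a => (s.filter fun b => f b < f a).card) (fun a ha => by simpa using hlt a ha) (by
      intro a ha b hb hab
      rcases lt_trichotomy (f a) (f b) with h | h | h
      exacts [absurd hab (hmono a ha b hb h).ne, hf ha hb h, absurd hab (hmono b hb a ha h).ne'])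
    (by simp)
  obtain ⟨a, ha, hak⟩ := hsurj (Finset.mem_coe.2 (Finset.mem_range.2 hk))
  exact ⟨a, ha, hak⟩

section Partition

variable {α : Type*} {A B M S : Finset α} {L R : α → Pt} {κ κ' : α → ℝ} {x : ℝ}

lemma ColumnSystem.const (h : DisjointOrientedFamily M L R) (hL : ∀ i ∈ M, (L i).1 < x)
    (hR : ∀ i ∈ M, x < (R i).1) (hheight : ∀ i ∈ M, ∀ j ∈ M, (L i).1 < (L j).1 →
      lineThrough (L i) (R i) x < lineThrough (L j) (R j) x) :
    ColumnSystem M L R fun _ => x where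
  toDisjointOrientedFamily := h
  left_lt := hL
  lt_right := hR
  right_lt_left _ _ _ _ hx := absurd hx (lt_irrefl x)
  height_lt i hi j hj _ := hheight i hi j hj

open Classical in
lemma ColumnSystem.union (hA : ColumnSystem A L R κ) (hB : ColumnSystem B L R κ')
    (h : DisjointOrientedFamily (A ∪ B) L R) (hAx : ∀ i ∈ A, (R i).1 < x)
    (hBx : ∀ i ∈ B, x < (L i).1) :
    ColumnSystem (A ∪ B) L R fun i => if i ∈ A then κ i else κ' i := by
  have hcases : ∀ i ∈ A ∪ B,
      (i ∈ A ∧ (if i ∈ A then κ i else κ' i) = κ i ∧ κ i < x) ∨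
        (i ∈ B ∧ (if i ∈ A then κ i else κ' i) = κ' i ∧ x < κ' i) := fun i hi => by
    by_cases hiA : i ∈ A
    · exact .inl ⟨hiA, if_pos hiA, (hA.lt_right i hiA).trans (hAx i hiA)⟩
    · have hiB := (Finset.mem_union.1 hi).resolve_left hiA
      exact .inr ⟨hiB, if_neg hiA, (hBx i hiB).trans (hB.left_lt i hiB)⟩
  refine { toDisjointOrientedFamily := h, left_lt := fun i hi => ?_, lt_right := fun i hi => ?_,
           right_lt_left := fun i hi j hj => ?_, height_lt := fun i hi j hj => ?_ }
  · rcases hcases i hi with ⟨hi, hκ, -⟩ | ⟨hi, hκ, -⟩ <;> rw [hκ]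
    exacts [hA.left_lt i hi, hB.left_lt i hi]
  · rcases hcases i hi with ⟨hi, hκ, -⟩ | ⟨hi, hκ, -⟩ <;> rw [hκ]
    exacts [hA.lt_right i hi, hB.lt_right i hi]
  all_goals
    rcases hcases i hi with ⟨hi, hκi, hix⟩ | ⟨hi, hκi, hix⟩ <;>
      rcases hcases j hj with ⟨hj, hκj, hjx⟩ | ⟨hj, hκj, hjx⟩ <;> rw [hκi, hκj]
  · exact hA.right_lt_left i hi j hj
  · exact fun _ => (hAx i hi).trans (hBx j hj)
  · exact fun hκ => absurd hκ (hjx.trans hix).not_gt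
  · exact hB.right_lt_left i hi j hj
  · exact hA.height_lt i hi j hj
  · exact fun hκ => absurd hκ (hix.trans hjx).ne
  · exact fun hκ => absurd hκ (hjx.trans hix).ne'
  · exact hB.height_lt i hi j hj

namespace DisjointOrientedFamily

/-- The Erdős–Szekeres theorem for segments crossing a vertical line. -/
lemma exists_columnSystem_of_crossing (h : DisjointOrientedFamily M L R)
    (hL : ∀ i ∈ M, (L i).1 < x) (hR : ∀ i ∈ M, x < (R i).1) :
    ∃ A ⊆ M, ∃ B ⊆ M, ColumnSystem A L R (fun _ => x) ∧
      ColumnSystem B (reflection ∘ L) (reflection ∘ R) (fun _ => x) ∧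
      M.card ≤ A.card * B.card := by
  let r : α → α → Prop := fun i j =>
    (L i).1 < (L j).1 ∧ lineThrough (L i) (R i) x < lineThrough (L j) (R j) x
  have : IsStrictOrder α r :=
    { irrefl := fun _ hi => hi.1.false
      trans := fun _ _ _ hij hjk => ⟨hij.1.trans hjk.1, hij.2.trans hjk.2⟩ }
  obtain ⟨A, hA, B, hB, hchain, hanti, hcard⟩ := exists_isChain_isAntichain_card_le_mul r M
  have hne : ∀ {i j}, (L i).1 < (L j).1 → i ≠ j := by rintro i j hij rfl; exact hij.false
  refine ⟨A, hA, B, hB, .const (h.mono hA) (fun i hi => hL i (hA hi)) (fun i hi => hR i (hA hi))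
    fun i hi j hj hij => ?_, .const (h.mono hB).comp_reflection (fun i hi => hL i (hB hi))
    (fun i hi => hR i (hB hi)) fun i hi j hj hij => ?_, hcard⟩
  · exact ((hchain hi hj (hne hij)).resolve_right fun hji => hji.1.not_gt hij).2
  · have hheight := h.lineThrough_ne (hB hi) (hB hj) (hne hij) (hL i (hB hi)).le (hR i (hB hi)).le
      (hL j (hB hj)).le (hR j (hB hj)).le
    simp only [Function.comp_apply, lineThrough_reflection, neg_lt_neg_iff]
    exact hheight.lt_or_gt.resolve_left fun hlt => hanti hi hj (hne hij) ⟨hij, hlt⟩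

lemma exists_separating_line (h : DisjointOrientedFamily S L R) (hS : S.Nonempty) :
    ∃ x, ∃ A ⊆ S, ∃ M ⊆ S, ∃ B ⊆ S, (∀ i ∈ A, (R i).1 < x) ∧ (∀ i ∈ M, (L i).1 < x) ∧
      (∀ i ∈ M, x < (R i).1) ∧ (∀ i ∈ B, x < (L i).1) ∧ A.card = S.card / 2 ∧ 0 < M.card ∧
      A.card + M.card + B.card = S.card := by
  classical
  obtain ⟨a, ha, hcardA⟩ := exists_card_filter_lt_eq h.right_fst_injOn
    (Nat.div_lt_self hS.card_pos one_lt_two)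
  obtain ⟨x, hlt, hxa⟩ := Order.exists_between_finsets
    ((S.image (fun i => (L i).1) ∪ S.image fun i => (R i).1).filter (· < (R a).1)) {(R a).1}
    (by simp)
  replace hxa : x < (R a).1 := by simpa using hxa
  have hL : ∀ i ∈ S, (L i).1 < (R a).1 → (L i).1 < x := fun i hi hia => hlt _ <|
    Finset.mem_filter.2 ⟨Finset.mem_union_left _ (Finset.mem_image_of_mem _ hi), hia⟩
  have hR : ∀ i ∈ S, (R i).1 < (R a).1 → (R i).1 < x := fun i hi hia => hlt _ <|
    Finset.mem_filter.2 ⟨Finset.mem_union_right _ (Finset.mem_image_of_mem _ hi), hia⟩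
  have hfilter : ∀ {p : α → Prop} [DecidablePred p],
      ∀ i ∈ (S.filter fun i => ¬ (R i).1 < (R a).1).filter p, i ∈ S ∧ (R a).1 ≤ (R i).1 ∧ p i := by
    simp [and_assoc]
  refine ⟨x, S.filter fun i => (R i).1 < (R a).1, Finset.filter_subset _ _,
    (S.filter fun i => ¬ (R i).1 < (R a).1).filter fun i => (L i).1 < x,
    fun i hi => (hfilter i hi).1,
    (S.filter fun i => ¬ (R i).1 < (R a).1).filter fun i => ¬ (L i).1 < x,
    fun i hi => (hfilter i hi).1, fun i hi => ?_, fun i hi => (hfilter i hi).2.2,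
    fun i hi => hxa.trans_le (hfilter i hi).2.1, fun i hi => ?_, hcardA, ?_, ?_⟩
  · exact hR i (Finset.mem_filter.1 hi).1 (Finset.mem_filter.1 hi).2
  · obtain ⟨hi, -, hLi⟩ := hfilter i hi
    exact hxa.trans_le (not_lt.1 fun hia => hLi (hL i hi hia))
  · exact Finset.card_pos.2 ⟨a, by simp [ha, hL a ha (h.fst_lt a ha)]⟩
  · rw [add_assoc, Finset.card_filter_add_card_filter_not, Finset.card_filter_add_card_filter_not]

/-- Unless many segments cross the dividing line, recursion on both sides gives twice the sum. -/
theorem exists_columnSystem_columnSystem_reflection (h : DisjointOrientedFamily S L R) :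
    ∃ A ⊆ S, ∃ B ⊆ S, (∃ κ, ColumnSystem A L R κ) ∧
      (∃ κ, ColumnSystem B (reflection ∘ L) (reflection ∘ R) κ) ∧
      S.card ≤ (A.card + B.card) ^ 2 := by
  classical
  induction hn : S.card using Nat.strong_induction_on generalizing S with
  | _ n ih =>
  obtain rfl | hS := S.eq_empty_or_nonempty
  · exact ⟨∅, subset_rfl, ∅, subset_rfl, ⟨0, .const h (by simp) (by simp) (by simp)⟩,
      ⟨0, .const h.comp_reflection (by simp) (by simp) (by simp)⟩, by simp [← hn]⟩
  obtain ⟨x, S₁, h₁, M, hM, S₂, h₂, hx₁, hML, hMR, hx₂, hcard₁, hcardM, hcard⟩ :=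
    h.exists_separating_line hS
  rcases le_or_gt n (4 * M.card) with hlarge | hsmall
  · obtain ⟨A, hA, B, hB, hcolA, hcolB, hAB⟩ :=
      (h.mono hM).exists_columnSystem_of_crossing hML hMR
    refine ⟨A, hA.trans hM, B, hB.trans hM, ⟨_, hcolA⟩, ⟨_, hcolB⟩, ?_⟩
    have hAMGM := four_mul_le_sq_add (A.card : ℤ) B.card
    zify at hlarge hAB ⊢
    linarith
  · obtain ⟨A₁, hA₁, B₁, hB₁, ⟨κ₁, hcolA₁⟩, ⟨μ₁, hcolB₁⟩, hcardS₁⟩ :=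
      ih S₁.card (by lia) (h.mono h₁) rfl
    obtain ⟨A₂, hA₂, B₂, hB₂, ⟨κ₂, hcolA₂⟩, ⟨μ₂, hcolB₂⟩, hcardS₂⟩ :=
      ih S₂.card (by lia) (h.mono h₂) rfl
    have hdisj : Disjoint S₁ S₂ := Finset.disjoint_left.2 fun i hi₁ hi₂ =>
      lt_asymm (h.fst_lt i (h₁ hi₁)) ((hx₁ i hi₁).trans (hx₂ i hi₂))
    have hA := Finset.card_union_of_disjoint (hdisj.mono hA₁ hA₂)
    have hB := Finset.card_union_of_disjoint (hdisj.mono hB₁ hB₂)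
    have hAS := Finset.union_subset (hA₁.trans h₁) (hA₂.trans h₂)
    have hBS := Finset.union_subset (hB₁.trans h₁) (hB₂.trans h₂)
    refine ⟨A₁ ∪ A₂, hAS, B₁ ∪ B₂, hBS,
      ⟨_, hcolA₁.union hcolA₂ (h.mono hAS) (fun i hi => hx₁ i (hA₁ hi)) fun i hi =>
        hx₂ i (hA₂ hi)⟩,
      ⟨_, hcolB₁.union hcolB₂ (h.mono hBS).comp_reflection (fun i hi => hx₁ i (hB₁ hi)) fun i hi =>
        hx₂ i (hB₂ hi)⟩, ?_⟩
    calc n ≤ 4 * min S₁.card S₂.card := by lia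
      _ ≤ (2 * min (A₁.card + B₁.card) (A₂.card + B₂.card)) ^ 2 := by
        rcases min_cases (A₁.card + B₁.card) (A₂.card + B₂.card) with ⟨hmin, -⟩ | ⟨hmin, -⟩ <;>
          rw [hmin] <;> lia
      _ ≤ ((A₁ ∪ A₂).card + (B₁ ∪ B₂).card) ^ 2 := Nat.pow_le_pow_left (by lia) 2

lemma exists_columnSystem_of_two_le_card (h : DisjointOrientedFamily S L R) (hS : 2 ≤ S.card) :
    ∃ T ⊆ S, 2 ≤ T.card ∧ ((∃ κ, ColumnSystem T L R κ) ∨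
      ∃ κ, ColumnSystem T (reflection ∘ L) (reflection ∘ R) κ) := by
  classical
  obtain ⟨i, hi, j, hj, hRij⟩ : ∃ i ∈ S, ∃ j ∈ S, (R i).1 < (R j).1 := by
    obtain ⟨i, hi, j, hj, hij⟩ := Finset.one_lt_card.1 hS
    rcases lt_or_gt_of_ne (h.right_fst_injOn.ne hi hj hij) with hR | hR
    exacts [⟨i, hi, j, hj, hR⟩, ⟨j, hj, i, hi, hR⟩]
  have hij : i ≠ j := by rintro rfl; exact hRij.false
  have hpair : {i, j} ⊆ S := Finset.insert_subset hi (Finset.singleton_subset_iff.2 hj)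
  have hcard : ({i, j} : Finset α).card = 2 := Finset.card_pair hij
  have hconst : ∀ k ∈ S, ∃ x, ColumnSystem {k} L R fun _ => x := fun k hk => by
    obtain ⟨x, hLx, hxR⟩ := exists_between (h.fst_lt k hk)
    exact ⟨x, .const (h.mono (by simpa)) (by simpa) (by simpa) (by simp)⟩
  rcases lt_or_ge (R i).1 (L j).1 with hlt | hle
  · obtain ⟨x, hRx, hxL⟩ := exists_between hlt
    obtain ⟨κ, hcoli⟩ := hconst i hi
    obtain ⟨μ, hcolj⟩ := hconst j hj
    exact ⟨{i} ∪ {j}, hpair, hcard.ge,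
      .inl ⟨_, hcoli.union hcolj (h.mono hpair) (by simpa) (by simpa)⟩⟩
  · have hlt : (L j).1 < (R i).1 := hle.lt_of_ne fun heq => h.left_ne_right hj hi <|
      h.inGeneralPosition.fst_injOn (left_mem_endpoints hj) (right_mem_endpoints hi) heq
    obtain ⟨x, hLx, hxR⟩ := exists_between (max_lt (h.fst_lt i hi) hlt)
    rw [max_lt_iff] at hLx
    obtain ⟨A, hA, B, hB, hcolA, hcolB, hAB⟩ := (h.mono hpair).exists_columnSystem_of_crossing
      (x := x) (by simpa using hLx) (by simpa using ⟨hxR, hxR.trans hRij⟩)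
    rw [hcard] at hAB
    rcases le_or_gt 2 A.card with hA₂ | hA₂
    · exact ⟨A, hA.trans hpair, hA₂, .inl ⟨_, hcolA⟩⟩
    · exact ⟨B, hB.trans hpair, by nlinarith, .inr ⟨_, hcolB⟩⟩

lemma exists_columnSystem (h : DisjointOrientedFamily S L R) (hS : 2 ≤ S.card) :
    ∃ T ⊆ S, 2 ≤ T.card ∧ S.card ≤ (2 * T.card) ^ 2 ∧ ((∃ κ, ColumnSystem T L R κ) ∨
      ∃ κ, ColumnSystem T (reflection ∘ L) (reflection ∘ R) κ) := by
  obtain ⟨A, hA, B, hB, hcolA, hcolB, hcard⟩ := h.exists_columnSystem_columnSystem_reflection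
  by_cases hA₂ : 2 ≤ A.card ∧ B.card ≤ A.card
  · exact ⟨A, hA, hA₂.1, hcard.trans (Nat.pow_le_pow_left (by lia) 2), .inl hcolA⟩
  by_cases hB₂ : 2 ≤ B.card ∧ A.card ≤ B.card
  · exact ⟨B, hB, hB₂.1, hcard.trans (Nat.pow_le_pow_left (by lia) 2), .inr hcolB⟩
  obtain ⟨T, hT, hT₂, hcol⟩ := h.exists_columnSystem_of_two_le_card hS
  exact ⟨T, hT, hT₂, hcard.trans (Nat.pow_le_pow_left (by lia) 2), hcol⟩

theorem exists_hasCircumscribingPolygon (h : DisjointOrientedFamily S L R) (hS : 2 ≤ S.card) :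
    ∃ K ⊆ S, S.card ≤ (12 * K.card) ^ 2 ∧ HasCircumscribingPolygon K L R := by
  obtain ⟨T, hT, hT₂, hcard, hcol⟩ := h.exists_columnSystem hS
  obtain ⟨K, hK, hcardK, hpoly⟩ :
      ∃ K ⊆ T, T.card ≤ 6 * K.card ∧ HasCircumscribingPolygon K L R := by
    obtain ⟨κ, C⟩ | ⟨κ, C⟩ := hcol <;>
      obtain ⟨K, hK, -, hcardK, hpoly⟩ := C.exists_hasCircumscribingPolygon hT₂
    exacts [⟨K, hK, hcardK, hpoly⟩, ⟨K, hK, hcardK, hpoly.of_comp_reflection⟩]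
  exact ⟨K, hK.trans hT, hcard.trans (Nat.pow_le_pow_left (by lia) 2), hpoly⟩

end DisjointOrientedFamily

end Partition

/-! ### Making the abscissae distinct by a shear -/

section Shear

variable {E : Set Pt} {S K : Finset (Pt × Pt)} {φ : Pt ≃L[ℝ] Pt}

/-- The shear of the plane along the first coordinate axis with factor `ε`. -/
def shear (ε : ℝ) : Pt ≃L[ℝ] Pt :=
  LinearEquiv.toContinuousLinearEquiv
    { toFun := fun p => (p.1 + ε * p.2, p.2)
      invFun := fun p => (p.1 - ε * p.2, p.2)
      map_add' := fun p q => by ext <;> simp only [Prod.fst_add, Prod.snd_add]; ring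
      map_smul' := fun t p => by
        ext <;> simp only [Prod.smul_fst, Prod.smul_snd, smul_eq_mul, RingHom.id_apply]; ring
      left_inv := fun p => by simp
      right_inv := fun p => by simp }

lemma exists_injOn_fst_shear (hE : E.Finite) : ∃ ε, InjOn (fun p => (shear ε p).1) E := by
  obtain ⟨ε, hε⟩ := ((hE.prod hE).image fun pq : Pt × Pt =>
    (pq.2.1 - pq.1.1) / (pq.1.2 - pq.2.2)).exists_notMem
  refine ⟨ε, fun p hp q hq hpq => ?_⟩
  change p.1 + ε * p.2 = q.1 + ε * q.2 at hpq
  by_cases h : p.2 = q.2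
  · rw [h] at hpq
    exact Prod.ext (add_right_cancel hpq) h
  · refine absurd ⟨(p, q), ⟨hp, hq⟩, ?_⟩ hε
    rw [div_eq_iff (sub_ne_zero.2 h)]
    linarith

lemma collinear_image {k V W P Q : Type*} [DivisionRing k] [AddCommGroup V] [Module k V]
    [AddTorsor V P] [AddCommGroup W] [Module k W] [AddTorsor W Q] (f : P →ᵃ[k] Q) {s : Set P}
    (hs : Collinear k s) : Collinear k (f '' s) := by
  obtain ⟨p₀, v, hv⟩ := (collinear_iff_exists_forall_eq_smul_vadd s).1 hs
  refine (collinear_iff_exists_forall_eq_smul_vadd _).2 ⟨f p₀, f.linear v, ?_⟩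
  rintro _ ⟨p, hp, rfl⟩
  obtain ⟨t, rfl⟩ := hv p hp
  exact ⟨t, by rw [f.map_vadd, map_smul]⟩

lemma collinear_of_snd_eq_lineThrough {p q r : Pt} (hpq : p.1 ≠ q.1)
    (h : r.2 = lineThrough p q r.1) : Collinear ℝ {p, q, r} := by
  refine (collinear_iff_of_mem (p₀ := p) (by simp)).2 ⟨(1, lineSlope p q), ?_⟩
  rintro z hz
  have hz : z.2 = lineThrough p q z.1 := by
    rcases hz with rfl | rfl | rfl
    exacts [(lineThrough_left _ _).symm, (lineThrough_right hpq).symm, h]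
  refine ⟨z.1 - p.1, Prod.ext (by simp) ?_⟩
  rw [hz, lineThrough_apply]
  simp [mul_comm, add_comm]

lemma inGeneralPosition_image (hφ : InjOn (fun p => (φ p).1) E)
    (hE : ∀ p ∈ E, ∀ q ∈ E, ∀ r ∈ E, p ≠ q → p ≠ r → q ≠ r → ¬ Collinear ℝ {p, q, r}) :
    InGeneralPosition (φ '' E) where
  fst_injOn := by
    rintro _ ⟨p, hp, rfl⟩ _ ⟨q, hq, rfl⟩ hpq
    rw [hφ hp hq hpq]
  snd_ne_lineThrough := by
    rintro _ ⟨p, hp, rfl⟩ _ ⟨q, hq, rfl⟩ _ ⟨r, hr, rfl⟩ hpq hpr hqr h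
    have hpq := ne_of_apply_ne φ hpq
    have hcol := collinear_image φ.symm.toLinearMap.toAffineMap <|
      collinear_of_snd_eq_lineThrough (hφ.ne hp hq hpq) h
    refine hE p hp q hq r hr hpq (ne_of_apply_ne φ hpr) (ne_of_apply_ne φ hqr) ?_
    simpa [image_insert_eq] using hcol

/-- The segment `s` with its endpoints ordered by the first coordinates of their images
under `φ`. -/
def orientBy (φ : Pt ≃L[ℝ] Pt) (s : Pt × Pt) : Pt × Pt :=
  if (φ s.1).1 < (φ s.2).1 then s else s.swap

lemma orientBy_eq_or_eq_swap (φ : Pt ≃L[ℝ] Pt) (s : Pt × Pt) :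
    orientBy φ s = s ∨ orientBy φ s = s.swap :=
  ite_eq_or_eq _ _ _

lemma Seg_orientBy (φ : Pt ≃L[ℝ] Pt) (s : Pt × Pt) :
    Seg (orientBy φ s).1 (orientBy φ s).2 = Seg s.1 s.2 := by
  rcases orientBy_eq_or_eq_swap φ s with h | h <;> rw [h]
  exact segment_symm ℝ s.2 s.1

lemma endpoints_orientBy (φ : Pt ≃L[ℝ] Pt) (K : Finset (Pt × Pt)) :
    endpoints K (fun s => (orientBy φ s).1) (fun s => (orientBy φ s).2) = SegEndpoints K := by
  ext p
  simp only [endpoints, SegEndpoints, mem_ofPred_eq, mem_iUnion, exists_prop, Finset.mem_coe,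
    mem_insert_iff, mem_singleton_iff]
  refine exists_congr fun s => and_congr_right fun _ => ?_
  rcases orientBy_eq_or_eq_swap φ s with h | h <;> rw [h]
  exact or_comm

lemma DisjointFamily.disjointOrientedFamily (hS : DisjointFamily S) (hgen : GeneralPosition S)
    (hφ : InjOn (fun p => (φ p).1) (SegEndpoints S)) :
    DisjointOrientedFamily S (φ ∘ fun s => (orientBy φ s).1) (φ ∘ fun s => (orientBy φ s).2) where
  fst_lt s hs := by
    have hfst : (φ s.1).1 ≠ (φ s.2).1 :=
      hφ.ne (mem_biUnion hs (by simp)) (mem_biUnion hs (by simp)) (hS.1 s hs)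
    simp only [Function.comp_apply, orientBy]
    split_ifs with h
    exacts [h, (not_lt.1 h).lt_of_ne' hfst]
  inGeneralPosition := by
    rw [← endpoints_image, endpoints_orientBy]
    exact inGeneralPosition_image hφ hgen
  disjoint s hs t ht hst := by
    simp only [Function.comp_apply, ← Seg_image, Seg_orientBy]
    exact (disjoint_image_iff φ.injective).2 (hS.2 hs ht hst)

lemma HasCircumscribingPolygon.exists_isCircumscribing
    (h : HasCircumscribingPolygon K (φ ∘ fun s => (orientBy φ s).1)
      (φ ∘ fun s => (orientBy φ s).2)) : ∃ P, IsCircumscribing K P := by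
  obtain ⟨P, hvtx, hregion⟩ := h.map φ.symm
  simp only [← Function.comp_assoc, φ.symm_comp_self, Function.id_comp, endpoints_orientBy,
    Seg_orientBy] at hvtx hregion
  exact ⟨P, hvtx, hregion⟩

end Shear

/-- There exists an absolute constant `c > 0` such that for every `n ≥ 2`,
every family of `n` pairwise disjoint segments in the plane in general position contains a
subfamily of at least `c·√n` segments that admits a circumscribing polygon. -/
theorem circumscribing_sqrt_lower_bound :
    ∃ c : ℝ, 0 < c ∧
      ∀ n : ℕ, 2 ≤ n → ∀ S : Finset (Pt × Pt), S.card = n →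
        DisjointFamily S → GeneralPosition S →
        ∃ S' ⊆ S, c * Real.sqrt n ≤ (S'.card : ℝ) ∧
          ∃ P : SimplePolygon, IsCircumscribing S' P := by
  refine ⟨1 / 12, by norm_num, fun n hn S hcard hdisj hgen => ?_⟩
  subst hcard
  have hfinite : (SegEndpoints S).Finite := S.finite_toSet.biUnion fun s _ => toFinite _
  obtain ⟨ε, hε⟩ := exists_injOn_fst_shear hfinite
  obtain ⟨K, hK, hcardK, hpoly⟩ :=
    (hdisj.disjointOrientedFamily hgen hε).exists_hasCircumscribingPolygon hn
  have hsqrt : Real.sqrt S.card ≤ 12 * K.card :=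
    (Real.sqrt_le_left (by positivity)).2 (by exact_mod_cast hcardK)
  exact ⟨K, hK, by linarith, hpoly.exists_isCircumscribing⟩
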